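/- arXiv:1905.10772 — 6 statements merged into one kernel-verified Lean document; each statement's English description precedes it below -/
import Mathlib

section
/- Suppose q ≥ 223. Then for every nonzero b ∈ K there exist nonzero u, v ∈ K that are linearly independent over F (i.e. v/u ∉ F) such that u^{q^2} v − u v^{q^2} ≠ 0 and b·(u^{q^2} v − u v^{q^2}) = u v^q − u^q v. -/
open Polynomial in
lemma aux_roots_card {L : Type*} [Field L] [IsAlgClosed L] [DecidableEq L] (f : L[X])
    (h : ∀ x, f.eval x = 0 → (derivative f).eval x ≠ 0) :
    f.roots.toFinset.card = f.natDegree := by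
  by_cases hf : f = 0
  · subst hf; simp
  rw [Multiset.toFinset_card_of_nodup, IsAlgClosed.card_roots_eq_natDegree]
  rw [Multiset.nodup_iff_count_le_one]
  intro a
  rw [count_roots]
  by_contra hc
  push Not at hc
  have := (one_lt_rootMultiplicity_iff_isRoot hf).1 hc
  exact h a this.1 this.2

open Polynomial in
lemma aux_pencil {L : Type*} [Field L] [IsAlgClosed L] (q : ℕ) (hq : 2 ≤ q)
    (φ : L →+* L) (hφ : ∀ x, φ x = x ^ q) (hq0 : (q : L) = 0) (t : L) (ht : t ≠ 0)
    (htφ : φ t = t) :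
    ∃ x : L, x ≠ 0 ∧ φ (φ x) * x = 1 + φ x ∧
      (1 + x) * (1 + φ x) * (1 + x + φ x) = t * x * φ x := by
  classical
  by_contra hcon
  push Not at hcon
  set f : L[X] := (X + C 1) * (X ^ q + C 1) * (X ^ q + (X + C 1)) - C t * X ^ (q + 1) with hf
  have hev : ∀ x, f.eval x = (1 + x) * (1 + φ x) * (1 + x + φ x) - t * x * φ x := by
    intro x
    simp only [hf, eval_sub, eval_mul, eval_add, eval_X, eval_C, eval_pow, hφ]
    ring
  have hder : ∀ x, (derivative f).eval x = (1 + φ x) * (2 + 2 * x + φ x) - t * φ x := by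
    intro x
    simp [hf, hφ, hq0, derivative_X_pow]
    ring
  have hroot : ∀ x, f.eval x = 0 → x ≠ 0 ∧ φ (φ x) = x ∧ x * x ≠ 1 + φ x ∧ 1 + φ x ≠ 0 := by
    intro x hx
    rw [hev, sub_eq_zero] at hx
    have hx0 : x ≠ 0 := by
      rintro rfl
      simp at hx
    have hy0 : φ x ≠ 0 := by simpa using hx0
    have hy1 : 1 + φ x ≠ 0 := by
      intro h
      rw [h] at hx
      simp [ht, hx0] at hx
    have hgood : φ (φ x) * x ≠ 1 + φ x := fun h => hcon x hx0 h hx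
    have h2 := congrArg φ hx
    simp only [map_mul, map_add, map_one, htφ] at h2
    have h3 : (φ (φ x) - x) * (φ (φ x) * x - (1 + φ x)) * (1 + φ x) = 0 := by
      linear_combination x * h2 - φ (φ x) * hx
    have h4 : φ (φ x) = x := by
      rcases mul_eq_zero.1 h3 with h | h
      · rcases mul_eq_zero.1 h with h | h
        · exact sub_eq_zero.1 h
        · exact absurd (sub_eq_zero.1 h) hgood
      · exact absurd h hy1
    refine ⟨hx0, h4, ?_, hy1⟩
    rw [h4] at hgood
    exact hgood
  have hcard := aux_roots_card f (by
    intro x hx hd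
    obtain ⟨h0, h1, h2, h3⟩ := hroot x hx
    rw [hev] at hx
    rw [hder] at hd
    have : (1 + φ x) * (x * x - (1 + φ x)) = 0 := by
      linear_combination x * hd - hx
    rcases mul_eq_zero.1 this with h | h
    · exact h3 h
    · exact h2 (sub_eq_zero.1 h))
  have hdeg : f.natDegree = 2 * q + 1 := by
    have h1 : (X + C (1 : L)).natDegree = 1 := natDegree_X_add_C 1
    have h2 : (X ^ q + C (1 : L)).natDegree = q := natDegree_X_pow_add_C
    have m1 : (X + C (1 : L)).Monic := monic_X_add_C 1
    have m2 : (X ^ q + C (1 : L)).Monic := monic_X_pow_add_C 1 (by omega)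
    have m3 : (X ^ q + (X + C (1 : L))).Monic := by
      apply monic_X_pow_add
      rw [degree_X_add_C]; exact_mod_cast (by omega : 1 < q)
    have h3 : (X ^ q + (X + C (1 : L))).natDegree = q := by
      rw [natDegree_add_eq_left_of_natDegree_lt] <;> simp only [natDegree_X_pow, h1]
      omega
    have h4 : ((X + C (1 : L)) * (X ^ q + C 1) * (X ^ q + (X + C 1))).natDegree = 2 * q + 1 := by
      rw [(m1.mul m2).natDegree_mul m3, m1.natDegree_mul m2, h1, h2, h3]; ring
    rw [hf, natDegree_sub_eq_left_of_natDegree_lt, h4]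
    rw [h4]
    refine lt_of_le_of_lt (natDegree_C_mul_X_pow_le _ _) (by omega)
  -- count
  have hf0 : f ≠ 0 := by
    intro h; rw [h] at hdeg; simp at hdeg
  set S := f.roots.toFinset with hS
  have hSmem : ∀ x, x ∈ S ↔ f.eval x = 0 := by
    intro x; simp [hS, hf0]
  have him : (S.image (fun x => x + φ x)).card ≤ q := by
    have hP : (X ^ q - X : L[X]).natDegree = q := FiniteField.X_pow_card_sub_X_natDegree_eq L (by omega)
    have hP0 : (X ^ q - X : L[X]) ≠ 0 := FiniteField.X_pow_card_sub_X_ne_zero L (by omega)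
    calc (S.image (fun x => x + φ x)).card ≤ (X ^ q - X : L[X]).roots.toFinset.card := by
          apply Finset.card_le_card
          intro s hs
          obtain ⟨x, hx, rfl⟩ := Finset.mem_image.1 hs
          have h1 := (hroot x ((hSmem x).1 hx)).2.1
          simp only [Multiset.mem_toFinset, mem_roots hP0, IsRoot.def, eval_sub, eval_pow, eval_X]
          rw [← hφ, map_add, h1]; ring
      _ ≤ _ := Multiset.toFinset_card_le _
      _ ≤ _ := card_roots' _
      _ = q := hP
  have hfib : ∀ s ∈ S.image (fun x => x + φ x), (S.filter (fun x => x + φ x = s)).card ≤ 2 := by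
    intro s hs
    have key : ∀ x ∈ S, x + φ x = s → (t - 1 - s) * (x * x - s * x) + (1 + s) ^ 2 = 0 := by
      rintro x hx rfl
      have := (hSmem x).1 hx
      rw [hev] at this
      linear_combination this
    have hts : t - 1 - s ≠ 0 := by
      intro h
      obtain ⟨x, hx, hxs⟩ := Finset.mem_image.1 hs
      have := key x hx hxs
      rw [h] at this
      simp at this
      apply ht; linear_combination h + this
    set g : L[X] := C (t - 1 - s) * X ^ 2 + C (-(t - 1 - s) * s) * X + C ((1 + s) ^ 2) with hg
    have hgd : g.natDegree = 2 := natDegree_quadratic hts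
    have hg0 : g ≠ 0 := by intro h; rw [h] at hgd; simp at hgd
    calc _ ≤ g.roots.toFinset.card := by
          apply Finset.card_le_card
          intro x hx
          rw [Finset.mem_filter] at hx
          have := key x hx.1 hx.2
          rw [Multiset.mem_toFinset, mem_roots hg0, IsRoot.def, hg]
          simp only [eval_add, eval_mul, eval_pow, eval_X, eval_C]
          linear_combination this
      _ ≤ _ := Multiset.toFinset_card_le _
      _ ≤ _ := card_roots' _
      _ = 2 := hgd
  have := Finset.card_le_mul_card_image S 2 hfib
  omega

/-- The five-periodicity of the linear recurrence. -/
lemma aux_periodic {L : Type*} [Field L] (A0 A1 A2 A3 A4 x0 x1 x2 x3 x4 a0 a1 a2 a3 a4 a5 t : L)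
    (h0 : x0 ≠ 0) (h1 : x1 ≠ 0)
    (e2 : x2 * x0 = 1 + x1) (e3 : x3 * x1 = 1 + x2) (e4 : x4 * x1 = 1 + x0)
    (ht : (1 + x0) * (1 + x1) * (1 + x0 + x1) = t * x0 * x1)
    (hA : A0 * A1 * A2 * A3 * A4 * t = 1)
    (r2 : a2 = A0 * a1 - A0 * A4 * (1 + x4) * a0)
    (r3 : a3 = A1 * a2 - A1 * A0 * (1 + x0) * a1)
    (r4 : a4 = A2 * a3 - A2 * A1 * (1 + x1) * a2)
    (r5 : a5 = A3 * a4 - A3 * A2 * (1 + x2) * a3) : a5 = a0 := by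
  have f2 : x2 = (1 + x1) / x0 := by field_simp; linear_combination e2
  have f3 : x3 = (1 + x0 + x1) / (x0 * x1) := by
    rw [f2] at e3; field_simp at e3 ⊢; linear_combination e3
  have f4 : x4 = (1 + x0) / x1 := by field_simp; linear_combination e4
  have ft : t = (1 + x0) * (1 + x1) * (1 + x0 + x1) / (x0 * x1) := by
    field_simp; linear_combination -ht
  have : a5 = A0 * A1 * A2 * A3 * A4 * t * a0 := by
    rw [r5, r4, r3, r2, f2, f4, ft]
    field_simp
    ring
  rw [this, hA, one_mul]

open Polynomial in
theorem stmt_0 (q : ℕ) (hq : ∃ p n : ℕ, Nat.Prime p ∧ 0 < n ∧ q = p ^ n)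
    (K : Type*) [Field K] (F : Subfield K)
    (hFcard : Nat.card F = q) (hKcard : Nat.card K = q ^ 5)
    (hq223 : 223 ≤ q) (b : K) (hb : b ≠ 0) :
    ∃ u v : K, u ≠ 0 ∧ v ≠ 0 ∧ v / u ∉ F ∧
      u ^ q ^ 2 * v - u * v ^ q ^ 2 ≠ 0 ∧
      b * (u ^ q ^ 2 * v - u * v ^ q ^ 2) = u * v ^ q - u ^ q * v := by
  classical
  obtain ⟨p, n, hp, hn, hqp⟩ := hq
  haveI : Fact p.Prime := ⟨hp⟩
  haveI : Finite K := Nat.finite_of_card_ne_zero (by rw [hKcard]; positivity)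
  haveI : Fintype K := Fintype.ofFinite K
  haveI : Fintype F := Fintype.ofFinite F
  have hKc : Fintype.card K = q ^ 5 := by rw [← hKcard, Nat.card_eq_fintype_card]
  have hFc : Fintype.card F = q := by rw [← hFcard, Nat.card_eq_fintype_card]
  haveI : CharP K p := by
    apply charP_of_card_eq_prime_pow (f := n * 5)
    rw [hKc, hqp, pow_mul]
  let L := AlgebraicClosure K
  haveI : CharP L p := charP_of_injective_algebraMap (algebraMap K L).injective p
  let ι := algebraMap K L
  let φ : L →+* L := iterateFrobenius L p n
  have hφ : ∀ x, φ x = x ^ q := by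
    intro x; rw [hqp]; exact iterateFrobenius_def p n x
  have hq0 : (q : L) = 0 := by
    rw [hqp]; push_cast; rw [CharP.cast_eq_zero, zero_pow hn.ne']
  have hφ2 : ∀ x, φ (φ x) = x ^ q ^ 2 := by
    intro x; rw [hφ, hφ, ← pow_mul]; ring_nf
  have hφ5 : ∀ x, φ (φ (φ (φ (φ x)))) = x ^ q ^ 5 := by
    intro x; simp only [hφ, ← pow_mul]; ring_nf
  have hKfix : ∀ x : L, x ^ q ^ 5 = x → ∃ y : K, ι y = x := by
    intro x hx
    have hP0 : (X ^ (q ^ 5) - X : L[X]) ≠ 0 :=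
      FiniteField.X_pow_card_sub_X_ne_zero L (Nat.one_lt_pow (by norm_num) (by omega))
    have hPd : (X ^ (q ^ 5) - X : L[X]).natDegree = q ^ 5 :=
      FiniteField.X_pow_card_sub_X_natDegree_eq L (Nat.one_lt_pow (by norm_num) (by omega))
    have hsub : (Finset.univ.image ι : Finset L) ⊆ (X ^ (q ^ 5) - X : L[X]).roots.toFinset := by
      intro z hz
      obtain ⟨y, -, rfl⟩ := Finset.mem_image.1 hz
      simp only [Multiset.mem_toFinset, mem_roots hP0, IsRoot.def, eval_sub, eval_pow, eval_X]
      rw [← map_pow, ← hKc, FiniteField.pow_card, sub_self]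
    have heq := Finset.eq_of_subset_of_card_le hsub (by
      rw [Finset.card_image_of_injective _ ι.injective, Finset.card_univ, hKc]
      refine (Multiset.toFinset_card_le _).trans ((card_roots' _).trans hPd.le))
    have hxm : x ∈ (X ^ (q ^ 5) - X : L[X]).roots.toFinset := by
      simp only [Multiset.mem_toFinset, mem_roots hP0, IsRoot.def, eval_sub, eval_pow, eval_X]
      rw [hx, sub_self]
    rw [← heq] at hxm
    obtain ⟨y, -, hy⟩ := Finset.mem_image.1 hxm
    exact ⟨y, hy⟩
  set B : L := ι b with hB
  have hB0 : B ≠ 0 := by simpa [hB] using hb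
  set A : L := -B⁻¹ with hA
  have hA0 : A ≠ 0 := by simpa [hA] using hB0
  have hAB : B * A = -1 := by rw [hA, mul_neg, mul_inv_cancel₀ hB0]
  have hA5 : φ (φ (φ (φ (φ A)))) = A := by
    have hb5 : φ (φ (φ (φ (φ B)))) = B := by
      rw [hφ5, hB, ← map_pow, ← hKc, FiniteField.pow_card]
    rw [hA]; simp only [map_neg, map_inv₀, hb5]
  set A1 := φ A with hA1
  set A2 := φ A1 with hA2
  set A3 := φ A2 with hA3
  set A4 := φ A3 with hA4
  have hne : ∀ z, z ≠ 0 → φ z ≠ 0 := fun z hz => by simpa using hz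
  have hA10 : A1 ≠ 0 := hne _ hA0
  have hA20 : A2 ≠ 0 := hne _ hA10
  have hA30 : A3 ≠ 0 := hne _ hA20
  have hA40 : A4 ≠ 0 := hne _ hA30
  set t := (A * A1 * A2 * A3 * A4)⁻¹ with ht
  have ht0 : t ≠ 0 := by rw [ht]; simp [hA0, hA10, hA20, hA30, hA40]
  have hAt : A * A1 * A2 * A3 * A4 * t = 1 := by
    rw [ht]
    exact mul_inv_cancel₀ (mul_ne_zero (mul_ne_zero (mul_ne_zero (mul_ne_zero hA0 hA10) hA20) hA30) hA40)
  have htφ : φ t = t := by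
    rw [ht]; simp only [map_inv₀, map_mul, ← hA1, ← hA2, ← hA3, ← hA4, hA5]
    congr 1; ring
  obtain ⟨x0, hx0, hx2, hxt⟩ := aux_pencil q (by omega) φ hφ hq0 t ht0 htφ
  set x1 := φ x0 with hx1
  set x2 := φ x1 with hx2d
  set x3 := φ x2 with hx3d
  set x4 := φ x3 with hx4d
  have hx10 : x1 ≠ 0 := hne _ hx0
  have hx20 : x2 ≠ 0 := hne _ hx10
  have hx30 : x3 ≠ 0 := hne _ hx20
  have e3 : x3 * x1 = 1 + x2 := by
    have := congrArg φ hx2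
    simpa only [map_mul, map_add, map_one] using this
  have e4' : x4 * x2 = 1 + x3 := by
    have := congrArg φ e3
    simpa only [map_mul, map_add, map_one] using this
  have e5 : φ x4 * x3 = 1 + x4 := by
    have := congrArg φ e4'
    simpa only [map_mul, map_add, map_one] using this
  have e4 : x4 * x1 = 1 + x0 := by
    apply mul_left_cancel₀ hx20
    linear_combination x1 * e4' + e3 - hx2
  have hx5 : φ x4 = x0 := by
    apply mul_left_cancel₀ hx30
    apply mul_left_cancel₀ hx10
    linear_combination x1 * e5 + e4 - x0 * e3 - hx2
  set β := A * A4 * (1 + x4) with hβ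
  have hx40 : 1 + x4 ≠ 0 := by
    rw [← e5, hx5]; exact mul_ne_zero hx0 hx30
  have hβ0 : β ≠ 0 := mul_ne_zero (mul_ne_zero hA0 hA40) hx40
  -- solutions of the linearized equation lie in K
  have hsol : ∀ a : L, φ (φ a) = A * φ a - β * a → ∃ y : K, ι y = a := by
    intro a ha
    apply hKfix
    rw [← hφ5]
    have r3 := congrArg φ ha
    simp only [hβ, map_sub, map_mul, map_add, map_one, ← hA1, hA5, hx5] at r3
    have r4 := congrArg φ r3
    simp only [map_sub, map_mul, map_add, map_one, ← hA1, ← hA2, ← hx1] at r4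
    have r5 := congrArg φ r4
    simp only [map_sub, map_mul, map_add, map_one, ← hA1, ← hA2, ← hA3, ← hx1, ← hx2d] at r5
    rw [hβ] at ha
    exact aux_periodic A A1 A2 A3 A4 x0 x1 x2 x3 x4 a (φ a) _ _ _ _ t hx0 hx10 hx2 e3 e4 hxt hAt
      ha r3 r4 r5
  set g : L[X] := X ^ (q ^ 2) + (C (-A) * X ^ q + C β * X) with hg
  have hgev : ∀ a, g.eval a = φ (φ a) - A * φ a + β * a := by
    intro a
    simp only [hg, eval_add, eval_mul, eval_C, eval_pow, eval_X, hφ2]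
    rw [hφ]; ring
  have hqq : q < q ^ 2 := by nlinarith
  have hgd : g.natDegree = q ^ 2 := by
    rw [hg, natDegree_add_eq_left_of_natDegree_lt, natDegree_X_pow]
    rw [natDegree_X_pow]
    refine lt_of_le_of_lt (natDegree_add_le _ _) (max_lt ?_ ?_)
    · exact lt_of_le_of_lt (natDegree_C_mul_X_pow_le _ _) hqq
    · exact lt_of_le_of_lt ((natDegree_C_mul_le _ _).trans natDegree_X_le) (by omega)
  have hg0 : g ≠ 0 := by
    intro h; rw [h] at hgd; simp at hgd; omega
  have hgc := aux_roots_card g (by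
    intro x _
    simp [hg, hq0, hβ0, derivative_X_pow])
  rw [hgd] at hgc
  have hmem : ∀ a, a ∈ g.roots.toFinset ↔ φ (φ a) = A * φ a - β * a := by
    intro a
    rw [Multiset.mem_toFinset, mem_roots hg0, IsRoot.def, hgev]
    constructor
    · intro h; linear_combination h
    · intro h; linear_combination h
  obtain ⟨U, hU, hU0⟩ : ∃ U ∈ g.roots.toFinset, U ∉ ({0} : Finset L) := by
    apply Finset.exists_mem_notMem_of_card_lt_card
    rw [hgc, Finset.card_singleton]; omega
  rw [Finset.mem_singleton] at hU0
  set h : L[X] := C U * X ^ q + C (-(φ U)) * X with hh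
  have hhd : h.natDegree = q := by
    rw [hh, natDegree_add_eq_left_of_natDegree_lt, natDegree_C_mul_X_pow _ _ hU0]
    rw [natDegree_C_mul_X_pow _ _ hU0]
    exact lt_of_le_of_lt ((natDegree_C_mul_le _ _).trans natDegree_X_le) (by omega)
  have hh0 : h ≠ 0 := by
    intro h'; rw [h'] at hhd; simp at hhd; omega
  obtain ⟨V, hV, hV0⟩ : ∃ V ∈ g.roots.toFinset, V ∉ h.roots.toFinset := by
    apply Finset.exists_mem_notMem_of_card_lt_card
    rw [hgc]
    exact lt_of_le_of_lt ((Multiset.toFinset_card_le _).trans ((card_roots' _).trans hhd.le)) hqq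
  have hUV : U * φ V - φ U * V ≠ 0 := by
    intro h'
    apply hV0
    rw [Multiset.mem_toFinset, mem_roots hh0, IsRoot.def, hh]
    simp only [eval_add, eval_mul, eval_C, eval_pow, eval_X]
    rw [← hφ]; linear_combination h'
  rw [hmem] at hU hV
  obtain ⟨u, hu⟩ := hsol U hU
  obtain ⟨v, hv⟩ := hsol V hV
  have hi : Function.Injective ι := ι.injective
  have hu0 : u ≠ 0 := by
    rintro rfl; apply hU0; rw [← hu, map_zero]
  have hK1 : u * v ^ q - u ^ q * v ≠ 0 := by
    intro h'
    apply hUV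
    rw [hφ, hφ, ← hu, ← hv, ← map_pow, ← map_pow, ← map_mul, ← map_mul, ← map_sub, h', map_zero]
  have hK2 : b * (u ^ q ^ 2 * v - u * v ^ q ^ 2) = u * v ^ q - u ^ q * v := by
    apply hi
    simp only [map_mul, map_sub, map_pow, hu, hv, ← hB]
    rw [← hφ2, ← hφ2, ← hφ, ← hφ, hU, hV]
    linear_combination (φ U * V - U * φ V) * hAB
  refine ⟨u, v, hu0, ?_, ?_, ?_, hK2⟩
  · rintro rfl
    apply hK1
    rw [zero_pow (by omega)]; ring
  · intro hF
    apply hK1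
    have h1 := FiniteField.pow_card (⟨v / u, hF⟩ : F)
    rw [hFc] at h1
    have h2 : (v / u) ^ q = v / u := by simpa using congrArg Subtype.val h1
    rw [div_pow, div_eq_div_iff (pow_ne_zero _ hu0) hu0] at h2
    linear_combination h2
  · intro h'
    rw [h', mul_zero] at hK2
    exact hK1 hK2.symm
end

section
/- Suppose q ≥ 223 and let m = (q^5 − 1)/(q − 1) = 1 + q + q^2 + q^3 + q^4. Then for every a ∈ F with a ≠ 0 there exists x ∈ K with x ∉ F such that (x^{q^2} − x)^m = a·(x^q − x)^m. -/
open Polynomial in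
/-- A polynomial over an algebraically closed field without multiple roots has exactly
`natDegree` distinct roots. -/
theorem card_roots_of_simple {L : Type*} [Field L] [IsAlgClosed L] [DecidableEq L] (P : L[X])
    (hP : P ≠ 0) (h : ∀ x, P.eval x = 0 → P.derivative.eval x ≠ 0) :
    P.roots.toFinset.card = P.natDegree := by
  have hnd : P.roots.Nodup := by
    rw [Multiset.nodup_iff_count_le_one]
    intro x
    rw [count_roots]
    by_contra hc
    push Not at hc
    have := (one_lt_rootMultiplicity_iff_isRoot hP).1 hc
    exact h x this.1 this.2
  rw [Multiset.toFinset_card_of_nodup hnd]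
  exact (IsAlgClosed.splits P).natDegree_eq_card_roots.symm

open Polynomial in
theorem card_fix_le {L : Type*} [Field L] [DecidableEq L] (q : ℕ) (hq : 1 < q) :
    ∃ S : Finset L, S.card ≤ q ∧ ∀ x : L, x ^ q = x → x ∈ S := by
  refine ⟨(X ^ q - X : L[X]).roots.toFinset, ?_, ?_⟩
  · refine (Multiset.toFinset_card_le _).trans ((card_roots' _).trans ?_)
    rw [FiniteField.X_pow_card_sub_X_natDegree_eq L hq]
  · intro x hx
    simp [FiniteField.X_pow_card_sub_X_ne_zero L hq, hx]

open Polynomial in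
theorem exists_alpha {L : Type*} [Field L] [IsAlgClosed L] (q : ℕ) (hq : 1 < q)
    (hq0 : (q : L) = 0) (φ : L →+* L) (hφ : ∀ x, φ x = x ^ q) (a : L) (ha : a ≠ 0)
    (haφ : φ a = a) :
    ∃ x : L, x ≠ 0 ∧ x ≠ 1 ∧ x * φ x * (1 - x) * (1 - φ x) = a * (1 - x * φ x) ∧
      x * φ x * φ (φ x) * (1 - φ x) = a := by
  classical
  let P : L[X] := X * X ^ q * (1 - X) * (1 - X ^ q) - C a * (1 - X * X ^ q)
  have hev : ∀ x, P.eval x = x * φ x * (1 - x) * (1 - φ x) - a * (1 - x * φ x) := by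
    intro x; simp [P, hφ]
  have hdev : ∀ x, P.derivative.eval x = φ x * (1 - φ x) * (1 - 2 * x) + a * φ x := by
    intro x
    simp [P, hφ, hq0, derivative_X_pow]
    ring
  have hdeg : P.natDegree = 2 * q + 2 := by
    have : P = X ^ (2 * q + 2) + (X ^ (q + 1) * (1 - X - X ^ q) - C a * (1 - X ^ (q + 1))) := by
      simp only [P]; ring
    rw [this]
    have h2 : (X ^ (q + 1) * (1 - X - X ^ q) - C a * (1 - X ^ (q + 1)) : L[X]).natDegree
        ≤ 2 * q + 1 := by
      have e1 : (X ^ (q + 1) * (1 - X - X ^ q) - C a * (1 - X ^ (q + 1)) : L[X]) =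
        X ^ (q + 1) - X ^ (q + 2) - X ^ (2 * q + 1) - C a + C a * X ^ (q + 1) := by ring
      rw [e1]
      compute_degree
      omega
    rw [natDegree_add_eq_left_of_natDegree_lt]
    · simp
    · simp; omega
  have hP : P ≠ 0 := by
    intro h; rw [h] at hdeg; simp at hdeg
  -- basic facts on roots
  have hx0 : ∀ x, P.eval x = 0 → x ≠ 0 := by
    rintro x hx rfl
    rw [hev] at hx
    simp [ha] at hx
  have hshift : ∀ x, P.eval x = 0 →
      φ x * φ (φ x) * (1 - φ x) * (1 - φ (φ x)) = a * (1 - φ x * φ (φ x)) := by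
    intro x hx
    rw [hev, sub_eq_zero] at hx
    have := congrArg φ hx
    simpa [haφ] using this
  have hφ0 : ∀ x, φ x = 0 → x = 0 := fun x h => by simpa using h
  have hφ1 : ∀ x, φ x = 1 → x = 1 := fun x h => φ.injective (by simpa using h)
  by_cases hcase : ∃ x, P.eval x = 0 ∧ (P.derivative.eval x = 0 ∨ φ (φ x) ≠ x)
  · obtain ⟨x, hx, hor⟩ := hcase
    have h0 := hx0 x hx
    have hy0 : φ x ≠ 0 := fun h => h0 (hφ0 x h)
    have h1 : x ≠ 1 := by
      rintro rfl
      rcases hor with h | h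
      · rw [hdev] at h; simp [ha] at h
      · simp at h
    have hy1 : 1 - φ x ≠ 0 := fun h => h1 (hφ1 x (sub_eq_zero.1 h).symm)
    have hs := hshift x hx
    have hx' := hx
    rw [hev, sub_eq_zero] at hx'
    refine ⟨x, h0, h1, hx', ?_⟩
    generalize φ (φ x) = z at *
    have key : ∀ d, d = φ x → (z - x) * (d * (1 - d) * (z + x) - (d * (1 - d) + a * d)) = 0 := by
      rintro d rfl
      linear_combination hx' - hs
    have key := key _ rfl
    by_cases hzx : z = x
    · subst hzx
      rcases hor with h | h
      · rw [hdev] at h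
        linear_combination (-z) * h + hx'
      · exact absurd rfl h
    · have := (mul_eq_zero.1 key).resolve_left (sub_ne_zero.2 hzx)
      linear_combination x * this + hx'
  · exfalso
    push Not at hcase
    have hc := card_roots_of_simple P hP (fun x hx => (hcase x hx).1)
    rw [hdeg] at hc
    obtain ⟨S, hS, hmem⟩ := card_fix_le (L := L) q hq
    have hle := Finset.card_le_mul_card_image_of_maps_to (s := P.roots.toFinset) (t := S)
      (f := fun x => x * φ x) (n := 2) ?_ ?_
    · omega
    · intro x hx
      have hx : P.eval x = 0 := by simpa [hP] using hx
      apply hmem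
      rw [← hφ, map_mul, (hcase x hx).2, mul_comm]
    · intro n _
      let s := 1 + n - a * (1 - n) / n
      let Q : L[X] := X ^ 2 - C s * X + C n
      have hQd : Q.natDegree = 2 := by
        simp only [Q]; compute_degree!
      have hQ : Q ≠ 0 := by
        intro h; rw [h] at hQd; simp at hQd
      refine le_trans (Finset.card_le_card (t := Q.roots.toFinset) ?_)
        ((Multiset.toFinset_card_le _).trans ((card_roots' _).trans hQd.le))
      intro x hx
      rw [Finset.mem_filter] at hx
      obtain ⟨hx, hn⟩ := hx
      have hx : P.eval x = 0 := by simpa [hP] using hx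
      have h0 := hx0 x hx
      have hy0 : φ x ≠ 0 := fun h => h0 (hφ0 x h)
      rw [hev, sub_eq_zero] at hx
      have hs : s = x + φ x := by
        simp only [s, ← hn]
        field_simp
        linear_combination hx
      rw [Multiset.mem_toFinset, mem_roots hQ]
      simp [Q, hs, ← hn]
      ring

open Polynomial in
theorem exists_vv {L : Type*} [Field L] [IsAlgClosed L] (q : ℕ) (hq : 1 < q)
    (hq0 : (q : L) = 0) (φ : L →+* L) (hφ : ∀ x, φ x = x ^ q) (α : L) :
    ∃ v v' : L, v ≠ 0 ∧ φ (φ v) = α * φ v - v ∧ φ (φ v') = α * φ v' - v' ∧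
      φ (v' / v) ≠ v' / v := by
  classical
  let P : L[X] := X ^ (q ^ 2) - C α * X ^ q + X
  have hev : ∀ x, P.eval x = φ (φ x) - α * φ x + x := by
    intro x; simp only [hφ, ← pow_mul, ← pow_two]; simp [P]
  have hdev : ∀ x, P.derivative.eval x = 1 := by
    intro x; simp [P, hq0, derivative_X_pow]
  have hqq : q < q ^ 2 := by nlinarith
  have hdeg : P.natDegree = q ^ 2 := by
    have : P = X ^ (q ^ 2) + (X - C α * X ^ q) := by simp only [P]; ring
    rw [this]
    have h2 : (X - C α * X ^ q : L[X]).natDegree ≤ q := by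
      compute_degree
      omega
    rw [natDegree_add_eq_left_of_natDegree_lt]
    · simp
    · simp; omega
  have hP : P ≠ 0 := by
    intro h; rw [h] at hdeg; simp at hdeg; omega
  have hc := card_roots_of_simple P hP (fun x _ => by simp [hdev])
  rw [hdeg] at hc
  have hroot : ∀ x ∈ P.roots.toFinset, φ (φ x) = α * φ x - x := by
    intro x hx
    have hx : P.eval x = 0 := by simpa [hP] using hx
    rw [hev] at hx
    linear_combination hx
  obtain ⟨v, hv, hv0⟩ : ∃ v ∈ P.roots.toFinset, v ∉ ({0} : Finset L) :=
    Finset.exists_mem_notMem_of_card_lt_card (by simp only [Finset.card_singleton]; omega)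
  obtain ⟨S, hS, hmem⟩ := card_fix_le (L := L) q hq
  obtain ⟨v', hv', hv'S⟩ : ∃ v' ∈ P.roots.toFinset, v' ∉ S.image (fun c => c * v) :=
    Finset.exists_mem_notMem_of_card_lt_card
      (lt_of_le_of_lt (Finset.card_image_le.trans hS) (by omega))
  have hv0 : v ≠ 0 := by simpa using hv0
  refine ⟨v, v', hv0, hroot v hv, hroot v' hv', fun h => hv'S ?_⟩
  rw [Finset.mem_image]
  refine ⟨v' / v, hmem _ (by rw [← hφ, h]), by field_simp⟩

theorem exists_w {L : Type*} [Field L] [IsAlgClosed L] (q : ℕ) (hq : 1 < q)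
    (hq0 : (q : L) = 0) (φ : L →+* L) (hφ : ∀ x, φ x = x ^ q) (a : L) (ha : a ≠ 0)
    (haφ : φ a = a) :
    ∃ w : L, φ w ≠ w ∧ φ (φ (φ (φ (φ w)))) = w ∧
      (φ (φ w) - w) ^ (1 + q + q ^ 2 + q ^ 3 + q ^ 4) =
        a * (φ w - w) ^ (1 + q + q ^ 2 + q ^ 3 + q ^ 4) := by
  obtain ⟨x, h0, h1, e1, e2⟩ := exists_alpha q hq hq0 φ hφ a ha haφ
  obtain ⟨v, v', hv, ev, ev', hne⟩ := exists_vv q hq hq0 φ hφ x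
  have hne0 : ∀ z, z ≠ 0 → φ z ≠ 0 := fun z hz h => hz (by simpa using h)
  have hx1 := hne0 _ h0
  have hx2 := hne0 _ hx1
  have hy1 : 1 - φ x ≠ 0 := fun h => h1 (φ.injective (by rw [map_one]; exact (sub_eq_zero.1 h).symm))
  -- 1 - x0 = x2 (1 - x0 x1)
  have r1 : 1 - x = φ (φ x) * (1 - x * φ x) := by
    have : x * φ x * (1 - φ x) ≠ 0 := mul_ne_zero (mul_ne_zero h0 hx1) hy1
    apply mul_left_cancel₀ this
    linear_combination e1 - (1 - x * φ x) * e2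
  have r2 : φ (φ (φ x)) = 1 - x * φ x := by
    have e3 := congrArg φ e2
    simp only [map_mul, map_sub, map_one, haφ] at e3
    have : φ x * φ (φ x) * (x * (1 - φ x)) ≠ 0 :=
      mul_ne_zero (mul_ne_zero hx1 hx2) (mul_ne_zero h0 hy1)
    apply mul_left_cancel₀ this
    linear_combination (1 - x * φ x) * (e3 - e2) - φ x * φ (φ x) * φ (φ (φ x)) * r1
  have r3 := congrArg φ r2
  have r4 := congrArg φ r3
  simp only [map_mul, map_sub, map_one] at r3 r4
  have r5 : φ (φ (φ (φ (φ x)))) = x := by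
    rw [r4, r2]; linear_combination r1
  have r6 := congrArg φ r4
  simp only [map_mul, map_sub, map_one] at r6
  rw [r5] at r6
  have hN : x * φ x * φ (φ x) * φ (φ (φ x)) * φ (φ (φ (φ x))) = a := by
    linear_combination e2 + x * φ x * φ (φ x) * r6
  have per : ∀ u, φ (φ u) = x * φ u - u → φ (φ (φ (φ (φ u)))) = u := by
    intro u hu
    have u3 := congrArg φ hu
    simp only [map_mul, map_sub] at u3
    have u4 := congrArg φ u3
    simp only [map_mul, map_sub] at u4
    have u5 := congrArg φ u4
    simp only [map_mul, map_sub] at u5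
    have r : φ (φ x) * φ (φ (φ x)) = 1 - x := by rw [r2, r1]
    linear_combination u5 + φ (φ (φ x)) * u4 + φ (φ (φ u)) * r - x * u3 - φ (φ u) * r2 - hu
  have pv := per v ev
  have pv' := per v' ev'
  have hv1 := hne0 _ hv
  have hv2 := hne0 _ hv1
  have hv3 := hne0 _ hv2
  have hv4 := hne0 _ hv3
  refine ⟨v' / v, hne, by simp only [map_div₀, pv, pv'], ?_⟩
  have hpow : ∀ z : L, z ^ (1 + q + q ^ 2 + q ^ 3 + q ^ 4) =
      z * φ z * φ (φ z) * φ (φ (φ z)) * φ (φ (φ (φ z))) := by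
    intro z
    simp only [hφ, ← pow_mul, pow_add, pow_one]
    congr 2 <;> ring
  have hw : φ (φ (v' / v)) - v' / v = x * φ v / φ (φ v) * (φ (v' / v) - v' / v) := by
    simp only [map_div₀]
    field_simp
    rw [ev, ev']
    ring
  rw [hw, mul_pow]
  congr 1
  rw [hpow, ← hN]
  simp only [map_div₀, map_mul, pv]
  field_simp

theorem stmt_1 (q : ℕ) (hq : ∃ p n : ℕ, Nat.Prime p ∧ 0 < n ∧ q = p ^ n)
    (K : Type*) [Field K] (F : Subfield K)
    (hFcard : Nat.card F = q) (hKcard : Nat.card K = q ^ 5)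
    (hq223 : 223 ≤ q) (a : K) (haF : a ∈ F) (ha : a ≠ 0) :
    ∃ x : K, x ∉ F ∧
      (x ^ q ^ 2 - x) ^ (1 + q + q ^ 2 + q ^ 3 + q ^ 4) =
        a * (x ^ q - x) ^ (1 + q + q ^ 2 + q ^ 3 + q ^ 4) := by
  classical
  have hfK : Finite K := Nat.finite_of_card_ne_zero (by rw [hKcard]; positivity)
  have := Fintype.ofFinite K
  have := Fintype.ofFinite F
  have hF' : Fintype.card F = q := by rw [← Nat.card_eq_fintype_card, hFcard]
  have hK' : Fintype.card K = q ^ 5 := by rw [← Nat.card_eq_fintype_card, hKcard]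
  have hFpow : ∀ y ∈ F, y ^ q = y := by
    intro y hy
    have := FiniteField.pow_card (⟨y, hy⟩ : F)
    rw [hF'] at this
    simpa using congrArg Subtype.val this
  obtain ⟨p, hp⟩ := CharP.exists K
  have : CharP F p := (RingHom.charP_iff F.subtype F.subtype.injective p).2 hp
  obtain ⟨n, hpp, hn⟩ := FiniteField.card F p
  have : Fact p.Prime := ⟨hpp⟩
  rw [hF'] at hn
  let L := AlgebraicClosure K
  let i : K →+* L := algebraMap K L
  have : CharP L p := (RingHom.charP_iff i i.injective p).1 hp
  let φ : L →+* L := iterateFrobenius L p n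
  have hφ : ∀ x, φ x = x ^ q := by
    intro x; rw [hn]; exact iterateFrobenius_def p n x
  have hq0 : (q : L) = 0 := by
    rw [hn]; simp
  obtain ⟨w, hw1, hw5, hw⟩ := exists_w q (by omega) hq0 φ hφ (i a) (by simpa using ha)
    (by rw [hφ, ← map_pow, hFpow a haF])
  have hwK : w ^ (q ^ 5) = w := by
    simp only [hφ, ← pow_mul] at hw5
    have e : q ^ 5 = q * q * q * q * q := by ring
    rw [e]
    simpa only [mul_assoc] using hw5
  obtain ⟨x, rfl⟩ : ∃ x, i x = w := by
    obtain ⟨S, hS, hmem⟩ := card_fix_le (L := L) (q ^ 5) (Nat.one_lt_pow (by norm_num) (by omega))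
    have hsub : Finset.univ.image i ⊆ S := by
      intro y hy
      obtain ⟨z, -, rfl⟩ := Finset.mem_image.1 hy
      apply hmem
      rw [← map_pow, ← hK', FiniteField.pow_card]
    have heq := Finset.eq_of_subset_of_card_le hsub (by
      rw [Finset.card_image_of_injective _ i.injective, Finset.card_univ, hK']; exact hS)
    have := hmem w hwK
    rw [← heq] at this
    obtain ⟨z, -, hz⟩ := Finset.mem_image.1 this
    exact ⟨z, hz⟩
  refine ⟨x, fun hx => hw1 (by rw [hφ, ← map_pow, hFpow x hx]), i.injective ?_⟩
  simp only [hφ, ← pow_mul, ← pow_two] at hw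
  simpa using hw
end

section
/- Suppose q ≥ 223, let b ∈ K with b ≠ 0, and set f(x) = x^q + b x^{q^2}. Then the linear set L_f = {⟨(x, f(x))⟩_K : x ∈ K, x ≠ 0} of PG(1, q^5) is not maximum scattered; that is, there exist nonzero u, v ∈ K with v/u ∉ F such that the vectors (u, f(u)) and (v, f(v)) of K^2 are linearly dependent over K, i.e. u·(v^q + b v^{q^2}) = v·(u^q + b u^{q^2}). -/
open Polynomial in
/-- The polynomial `(1+X)(1+X^q)(1+X+X^q) - c X^(q+1)`. -/
noncomputable def lynessPoly {L : Type*} [Field L] (q : ℕ) (c : L) : L[X] :=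
  (X + 1) * (X ^ q + 1) * (X ^ q + (X + 1)) - C c * X ^ (q + 1)

open Polynomial in
theorem lynessPoly_natDegree {L : Type*} [Field L] (q : ℕ) (hq : 2 ≤ q) (c : L) :
    (lynessPoly q c).natDegree = 2 * q + 1 := by
  have h1 : (X + 1 : L[X]).Monic := monic_X_add_C 1
  have d1 : (X + 1 : L[X]).natDegree = 1 := natDegree_X_add_C 1
  have h2 : (X ^ q + 1 : L[X]).Monic := monic_X_pow_add_C 1 (by omega)
  have d2 : (X ^ q + 1 : L[X]).natDegree = q := natDegree_X_pow_add_C (r := 1)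
  have hlt : (X + 1 : L[X]).degree < (q : ℕ) := by
    rw [degree_eq_natDegree h1.ne_zero, d1]; exact_mod_cast (by omega : 1 < q)
  have h3 : (X ^ q + (X + 1) : L[X]).Monic := monic_X_pow_add hlt
  have d3 : (X ^ q + (X + 1) : L[X]).natDegree = q := by
    apply natDegree_eq_of_degree_eq_some
    rw [degree_add_eq_left_of_degree_lt, degree_X_pow]
    rwa [degree_X_pow]
  have d : ((X + 1) * (X ^ q + 1) * (X ^ q + (X + 1)) : L[X]).natDegree = 2 * q + 1 := by
    rw [(h1.mul h2).natDegree_mul h3, h1.natDegree_mul h2, d1, d2, d3]; omega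
  unfold lynessPoly
  rw [natDegree_sub_eq_left_of_natDegree_lt, d]
  rw [d]
  exact lt_of_le_of_lt (natDegree_C_mul_X_pow_le _ _) (by omega)

open Polynomial in
/-- Over an algebraically closed field there is a solution of the twisted Lyness recurrence
with prescribed invariant `c`. -/
theorem exists_lyness {L : Type*} [Field L] [IsAlgClosed L] (q : ℕ) (hq : 2 ≤ q)
    (hq0 : (q : L) = 0) (φ : L →+* L) (hφ : ∀ a, φ a = a ^ q) (c : L) (hc : c ≠ 0)
    (hφc : φ c = c) :
    ∃ x : L, x ≠ 0 ∧ x * φ (φ x) = 1 + φ x ∧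
      (1 + x) * (1 + φ x) * (1 + x + φ x) = c * x * φ x := by
  classical
  have hev : ∀ x : L, (lynessPoly q c).eval x =
      (1 + x) * (1 + φ x) * (1 + x + φ x) - c * x * φ x := by
    intro x
    simp only [lynessPoly, eval_sub, eval_mul, eval_add, eval_X, eval_one, eval_pow, eval_C, hφ]
    ring
  have hder : ∀ x : L, (lynessPoly q c).derivative.eval x =
      (1 + φ x) * (2 + 2 * x + φ x) - c * φ x := by
    intro x
    simp only [lynessPoly, derivative_sub, derivative_mul, derivative_add, derivative_X,
      derivative_one, derivative_X_pow, derivative_C, hφ]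
    simp [hq0]
    ring
  have hne : lynessPoly q c ≠ 0 := by
    intro h
    have := lynessPoly_natDegree q hq c
    rw [h] at this
    simp at this
  by_contra hcon
  push Not at hcon
  -- basic facts on roots
  have hx0 : ∀ x : L, (lynessPoly q c).eval x = 0 → x ≠ 0 := by
    rintro x hx rfl
    rw [hev] at hx
    simp at hx
  have hy1 : ∀ x : L, (lynessPoly q c).eval x = 0 → 1 + φ x ≠ 0 := by
    intro x hx h
    have h0 := hx0 x hx
    have h0' : φ x ≠ 0 := (map_ne_zero φ).2 h0
    rw [hev, h] at hx
    have : c * x * φ x = 0 := by linear_combination -hx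
    simp [hc, h0, h0'] at this
  -- dichotomy
  have hdich : ∀ x : L, (lynessPoly q c).eval x = 0 → φ (φ x) = x := by
    intro x hx
    have h0 := hx0 x hx
    have h1 := hy1 x hx
    have e0 := hev x
    rw [hx] at e0
    have e1 := congrArg φ e0
    simp only [map_zero, map_sub, map_mul, map_add, map_one, hφc] at e1
    have : (1 + φ x) * ((φ (φ x) - x) * (x * φ (φ x) - (1 + φ x))) = 0 := by
      linear_combination φ (φ x) * e0 - x * e1
    rcases mul_eq_zero.1 this with h | h
    · exact absurd h h1
    rcases mul_eq_zero.1 h with h | h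
    · exact sub_eq_zero.1 h
    · exact absurd (by linear_combination -e0) (hcon x h0 (sub_eq_zero.1 h))
  -- separability
  have hsep : (lynessPoly q c).Separable := by
    rw [separable_def]
    by_contra hcop
    have : ∃ x, (lynessPoly q c).eval x = 0 ∧ (lynessPoly q c).derivative.eval x = 0 := by
      by_contra hno
      push Not at hno
      apply hcop
      rw [isCoprime_iff_aeval_ne_zero_of_isAlgClosed L L]
      intro a
      by_cases ha : (lynessPoly q c).eval a = 0
      · right; simpa using hno a ha
      · left; simpa using ha
    obtain ⟨x, hx, hdx⟩ := this
    have e0 := hev x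
    rw [hx] at e0
    rw [hder] at hdx
    have h1 := hy1 x hx
    have e2 : (1 + φ x) * (x * x - (1 + φ x)) = 0 := by
      linear_combination e0 + x * hdx
    have e3 : x * x = 1 + φ x := by
      rcases mul_eq_zero.1 e2 with h | h
      · exact absurd h h1
      · exact sub_eq_zero.1 h
    refine hcon x (hx0 x hx) ?_ (by linear_combination -e0)
    rw [hdich x hx, e3]
  -- count
  have hcard : (lynessPoly q c).roots.toFinset.card = 2 * q + 1 := by
    rw [Multiset.toFinset_card_of_nodup (nodup_roots hsep),
      ← (IsAlgClosed.splits (lynessPoly q c)).natDegree_eq_card_roots,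
      lynessPoly_natDegree q hq c]
  have hR : (X ^ q - X : L[X]).roots.toFinset.card ≤ q := by
    refine (Multiset.toFinset_card_le _).trans ((card_roots' _).trans ?_)
    rw [FiniteField.X_pow_card_sub_X_natDegree_eq L (by omega)]
  have hmaps : ∀ x ∈ (lynessPoly q c).roots.toFinset,
      x + φ x ∈ (X ^ q - X : L[X]).roots.toFinset := by
    intro x hx
    rw [Multiset.mem_toFinset, mem_roots hne] at hx
    rw [Multiset.mem_toFinset, mem_roots (FiniteField.X_pow_card_sub_X_ne_zero L (by omega))]
    simp only [IsRoot.def, eval_sub, eval_pow, eval_X]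
    rw [← hφ, map_add, hdich x hx]
    ring
  obtain ⟨s, -, hs⟩ := Finset.exists_lt_card_fiber_of_mul_lt_card_of_maps_to (n := 2) hmaps
    (by rw [hcard]; omega)
  rw [Finset.two_lt_card] at hs
  obtain ⟨x, hx, y, hy, z, hz, hxy, hxz, hyz⟩ := hs
  rw [Finset.mem_filter, Multiset.mem_toFinset, mem_roots hne, IsRoot.def, hev] at hx hy hz
  obtain ⟨hx, hxs⟩ := hx
  obtain ⟨hy, hys⟩ := hy
  obtain ⟨hz, hzs⟩ := hz
  have key : ∀ w : L, (1 + w) * (1 + φ w) * (1 + w + φ w) - c * w * φ w = 0 → w + φ w = s →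
      (w * (s - w)) * (c - 1 - s) = (1 + s) ^ 2 := by
    intro w hw hws
    subst hws
    linear_combination -hw
  have kx := key x hx hxs
  have ky := key y hy hys
  have kz := key z hz hzs
  have hcs : c - 1 - s ≠ 0 := by
    intro h
    rw [h, mul_zero] at kx
    have h1 : 1 + s = 0 := pow_eq_zero_iff (two_ne_zero) |>.1 kx.symm
    exact hc (by linear_combination h + h1)
  have exy : x * (s - x) = y * (s - y) := mul_right_cancel₀ hcs (kx.trans ky.symm)
  have exz : x * (s - x) = z * (s - z) := mul_right_cancel₀ hcs (kx.trans kz.symm)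
  have a1 : s - x - y = 0 :=
    (mul_eq_zero.1 (by linear_combination exy : (x - y) * (s - x - y) = 0)).resolve_left
      (sub_ne_zero.2 hxy)
  have a2 : s - x - z = 0 :=
    (mul_eq_zero.1 (by linear_combination exz : (x - z) * (s - x - z) = 0)).resolve_left
      (sub_ne_zero.2 hxz)
  exact hyz (by linear_combination a2 - a1)

/-- Existence of `l` such that every solution of `b w^(q^2) + w^q = l w` is fixed by `φ^5`. -/
theorem exists_slope {L : Type*} [Field L] [IsAlgClosed L] (q : ℕ) (hq : 2 ≤ q)
    (hq0 : (q : L) = 0) (φ : L →+* L) (hφ : ∀ a, φ a = a ^ q) (b : L) (hb : b ≠ 0)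
    (hb5 : φ (φ (φ (φ (φ b)))) = b) :
    ∃ l : L, l ≠ 0 ∧ ∀ w : L, b * φ (φ w) + φ w = l * w →
      φ (φ (φ (φ (φ w)))) = w := by
  obtain ⟨c, hcdef⟩ : ∃ c, c = -(b * φ b * φ (φ b) * φ (φ (φ b)) * φ (φ (φ (φ b)))) := ⟨_, rfl⟩
  have hc : c ≠ 0 := by
    rw [hcdef]
    simp [hb]
  have hφc : φ c = c := by
    rw [hcdef]
    simp only [map_neg, map_mul, hb5]
    ring
  obtain ⟨x, hx, hrec, hinv⟩ := exists_lyness q hq hq0 φ hφ c hc hφc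
  obtain ⟨l, hl⟩ := IsAlgClosed.exists_pow_nat_eq (-(1 + x) / b) (by omega : 0 < q)
  rw [← hφ] at hl
  have hl' : b * φ l = -(1 + x) := by rw [hl]; field_simp
  have hinj := φ.injective
  have r1 := congrArg φ hrec
  have m1 := congrArg φ hl'
  have m2 := congrArg φ m1
  have m3 := congrArg φ m2
  simp only [map_mul, map_add, map_one, map_neg] at r1 m1 m2 m3
  have n1 : φ x ≠ 0 := (map_ne_zero φ).2 hx
  have k1 : φ b ≠ 0 := (map_ne_zero φ).2 hb
  have k2 : φ (φ b) ≠ 0 := (map_ne_zero φ).2 k1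
  have k3 : φ (φ (φ b)) ≠ 0 := (map_ne_zero φ).2 k2
  have hval : (1 + x) * (1 + φ (φ x) + φ (φ (φ x))) = c := by
    apply mul_left_cancel₀ (mul_ne_zero hx n1)
    linear_combination hinv + x * (1 + x) * r1 + (1 + x) * (1 + φ x) * hrec
  have hcond1 : b * φ l * (φ (φ b) * φ (φ (φ l)) + 1) + (φ b * φ (φ l) +
      φ (φ b) * φ (φ (φ l)) + 1) = 0 := by
    rw [hl', m1, m2]
    linear_combination hrec
  have hcond2 : l * (φ b * φ (φ l) + φ (φ b) * φ (φ (φ l)) + 1) =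
      -(b * φ b * φ (φ b) * φ (φ (φ b))) := by
    apply hinj
    simp only [map_mul, map_add, map_one, map_neg]
    apply mul_left_cancel₀ hb
    rw [m2, m3]
    linear_combination (-(1 + φ (φ x) + φ (φ (φ x)))) * hl' + hval + hcdef
  refine ⟨l, ?_, ?_⟩
  · rintro rfl
    rw [map_zero, mul_zero] at hl'
    have h1 : 1 + x = 0 := by linear_combination hl'
    rw [h1] at hinv
    have : c * x * φ x = 0 := by linear_combination -hinv
    simp [hc, hx] at this
  · intro w e0
    have e1 := congrArg φ e0
    have e2 := congrArg φ e1
    have e3 := congrArg φ e2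
    simp only [map_mul, map_add] at e1 e2 e3
    apply mul_left_cancel₀ (mul_ne_zero (mul_ne_zero (mul_ne_zero hb k1) k2) k3)
    linear_combination b * φ b * φ (φ b) * e3 - b * φ b * e2 +
      b * (φ (φ b) * φ (φ (φ l)) + 1) * e1 -
      (φ b * φ (φ l) + φ (φ b) * φ (φ (φ l)) + 1) * e0 + φ w * hcond1 - w * hcond2

open Polynomial in
theorem card_solutions {L : Type*} [Field L] [IsAlgClosed L] [DecidableEq L] (q : ℕ) (hq : 2 ≤ q)
    (hq0 : (q : L) = 0) (b l : L) (hb : b ≠ 0) (hl : l ≠ 0) :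
    ∃ S : Finset L, S.card = q ^ 2 ∧ ∀ w ∈ S, b * w ^ q ^ 2 + w ^ q = l * w := by
  have hqq : q < q ^ 2 := by nlinarith
  obtain ⟨P, hP⟩ : ∃ P : L[X], P = C b * X ^ q ^ 2 + (X ^ q - C l * X) := ⟨_, rfl⟩
  have hd0 : (X ^ q - C l * X : L[X]).natDegree < q ^ 2 := by
    refine lt_of_le_of_lt (natDegree_sub_le _ _) (max_lt ?_ ?_)
    · rwa [natDegree_X_pow]
    · exact lt_of_le_of_lt ((natDegree_C_mul_le _ _).trans natDegree_X_le) (by omega)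
  have hd : P.natDegree = q ^ 2 := by
    rw [hP, natDegree_add_eq_left_of_natDegree_lt, natDegree_C_mul_X_pow _ _ hb]
    rwa [natDegree_C_mul_X_pow _ _ hb]
  have hne : P ≠ 0 := by
    intro h
    rw [h, natDegree_zero] at hd
    omega
  have hder : derivative P = C (-l) := by
    rw [hP]
    simp [derivative_X_pow, hq0]
  have hsep : P.Separable := by
    rw [separable_def, hder]
    refine ⟨0, C ((-l)⁻¹), ?_⟩
    rw [zero_mul, zero_add, ← C_mul, inv_mul_cancel₀ (neg_ne_zero.2 hl), C_1]
  refine ⟨P.roots.toFinset, ?_, ?_⟩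
  · rw [Multiset.toFinset_card_of_nodup (nodup_roots hsep),
      ← (IsAlgClosed.splits P).natDegree_eq_card_roots, hd]
  · intro w hw
    rw [Multiset.mem_toFinset, mem_roots hne, IsRoot.def, hP] at hw
    simp at hw
    linear_combination hw

open Polynomial in
theorem mem_range_of_pow {K L : Type*} [Field K] [Field L] [Algebra K L] (N : ℕ) (hN : 1 < N)
    (hK : Nat.card K = N) (w : L) (hw : w ^ N = w) : ∃ a : K, algebraMap K L a = w := by
  classical
  haveI : Finite K := Nat.finite_of_card_ne_zero (by omega)
  haveI := Fintype.ofFinite K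
  have hK' : Fintype.card K = N := by rw [← hK, Nat.card_eq_fintype_card]
  by_contra hcon
  push Not at hcon
  have hsub : insert w (Finset.univ.image (algebraMap K L)) ⊆
      (X ^ N - X : L[X]).roots.toFinset := by
    intro z hz
    rw [Multiset.mem_toFinset, mem_roots (FiniteField.X_pow_card_sub_X_ne_zero L hN)]
    simp only [IsRoot.def, eval_sub, eval_pow, eval_X, sub_eq_zero]
    rcases Finset.mem_insert.1 hz with rfl | hz
    · exact hw
    · obtain ⟨a, -, rfl⟩ := Finset.mem_image.1 hz
      rw [← map_pow, ← hK', FiniteField.pow_card]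
  have h1 := Finset.card_le_card hsub
  rw [Finset.card_insert_of_notMem (by simpa using hcon),
    Finset.card_image_of_injective _ (algebraMap K L).injective, Finset.card_univ, hK'] at h1
  have h2 : (X ^ N - X : L[X]).roots.toFinset.card ≤ N := by
    refine (Multiset.toFinset_card_le _).trans ((card_roots' _).trans ?_)
    rw [FiniteField.X_pow_card_sub_X_natDegree_eq L hN]
  omega

theorem stmt_3 (q : ℕ) (hq : ∃ p n : ℕ, Nat.Prime p ∧ 0 < n ∧ q = p ^ n)
    (K : Type*) [Field K] (F : Subfield K)
    (hFcard : Nat.card F = q) (hKcard : Nat.card K = q ^ 5)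
    (hq223 : 223 ≤ q) (b : K) (hb : b ≠ 0) :
    ∃ u v : K, u ≠ 0 ∧ v ≠ 0 ∧ v / u ∉ F ∧
      u * (v ^ q + b * v ^ q ^ 2) = v * (u ^ q + b * u ^ q ^ 2) := by
  classical
  have hq2 : 2 ≤ q := by omega
  have hq5 : 1 < q ^ 5 := Nat.one_lt_pow (by omega) (by omega)
  haveI : Finite K := Nat.finite_of_card_ne_zero (by omega)
  haveI : Fintype K := Fintype.ofFinite K
  haveI : Fintype F := Fintype.ofFinite F
  have hF' : Fintype.card F = q := by rw [← hFcard, Nat.card_eq_fintype_card]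
  have hK' : Fintype.card K = q ^ 5 := by rw [← hKcard, Nat.card_eq_fintype_card]
  let L := AlgebraicClosure K
  have hqF : (q : F) = 0 := by rw [← hF']; exact Nat.cast_card_eq_zero F
  have hqK : (q : K) = 0 := by
    have := congrArg F.subtype hqF
    simpa using this
  have hq0 : (q : L) = 0 := by
    have := congrArg (algebraMap K L) hqK
    simpa using this
  obtain ⟨φ, hφ⟩ : ∃ φ : L →+* L, ∀ a, φ a = a ^ q := by
    letI : Algebra F L := ((algebraMap K L).comp F.subtype).toAlgebra
    refine ⟨(FiniteField.frobeniusAlgHom F L).toRingHom, fun a => ?_⟩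
    change a ^ Fintype.card F = _
    rw [hF']
  have h2 : ∀ a : L, φ (φ a) = a ^ q ^ 2 := by
    intro a; rw [hφ, hφ, ← pow_mul]; congr 1; ring
  have h5 : ∀ a : L, φ (φ (φ (φ (φ a)))) = a ^ q ^ 5 := by
    intro a; simp only [hφ, ← pow_mul]; congr 1; ring
  have hb' : algebraMap K L b ≠ 0 := (map_ne_zero _).2 hb
  have hb5 : φ (φ (φ (φ (φ (algebraMap K L b))))) = algebraMap K L b := by
    rw [h5, ← map_pow, ← hK', FiniteField.pow_card]
  obtain ⟨l, hl, hsol⟩ := exists_slope q hq2 hq0 φ hφ _ hb' hb5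
  obtain ⟨S, hS, hSsol⟩ := card_solutions q hq2 hq0 _ l hb' hl
  have hSK : ∀ w ∈ S, ∃ a : K, algebraMap K L a = w := by
    intro w hw
    apply mem_range_of_pow (q ^ 5) hq5 hKcard
    rw [← h5]
    apply hsol
    rw [h2, hφ]
    exact hSsol w hw
  have hqq : q < q ^ 2 := by nlinarith
  obtain ⟨u', hu'S, hu'0⟩ : ∃ w ∈ S, w ∉ ({0} : Finset L) :=
    Finset.exists_mem_notMem_of_card_lt_card (by rw [hS, Finset.card_singleton]; omega)
  obtain ⟨u, rfl⟩ := hSK u' hu'S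
  have hu : u ≠ 0 := by
    rintro rfl
    simp at hu'0
  obtain ⟨v', hv'S, hv'⟩ : ∃ w ∈ S, w ∉ (Finset.univ : Finset F).image
      (fun a : F => algebraMap K L ((a : K) * u)) := by
    apply Finset.exists_mem_notMem_of_card_lt_card
    refine lt_of_le_of_lt Finset.card_image_le ?_
    rw [hS, Finset.card_univ, hF']
    exact hqq
  obtain ⟨v, rfl⟩ := hSK v' hv'S
  have hvF : v / u ∉ F := by
    intro h
    apply hv'
    rw [Finset.mem_image]
    exact ⟨⟨v / u, h⟩, Finset.mem_univ _, by simp [div_mul_cancel₀ _ hu]⟩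
  refine ⟨u, v, hu, ?_, hvF, ?_⟩
  · rintro rfl
    apply hvF
    rw [zero_div]
    exact F.zero_mem
  · apply (algebraMap K L).injective
    simp only [map_mul, map_add, map_pow]
    linear_combination algebraMap K L u * hSsol _ hv'S - algebraMap K L v * hSsol _ hu'S
end

section
/- Let α, β ∈ K with β ≠ 0 and α^q/β^{q+1} ∉ F (equivalently, (α^q/β^{q+1})^q ≠ α^q/β^{q+1}). Then L_{α,β} is not maximum scattered. -/
/-- The `F`-linear map `T_{α,β} : K → K²`, `x ↦ (x − α x^{q²}, x^q − β x^{q²})`. -/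
def Tmap (q : ℕ) {K : Type*} [Field K] (α β : K) (x : K) : K × K :=
  (x - α * x ^ q ^ 2, x ^ q - β * x ^ q ^ 2)

/-- The linear set `L_{α,β}` is maximum scattered: `T_{α,β}` is injective and
`K`-linear dependence of `T_{α,β}(x)` and `T_{α,β}(y)` for nonzero `x, y` forces
`y/x ∈ F`. -/
def IsMaxScattered (q : ℕ) {K : Type*} [Field K] (F : Subfield K) (α β : K) : Prop :=
  Function.Injective (Tmap q α β) ∧
    ∀ x y : K, x ≠ 0 → y ≠ 0 →
      ¬ LinearIndependent K ![Tmap q α β x, Tmap q α β y] → y / x ∈ F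


namespace Scat

open Polynomial

/-- algebraic consequences forcing e0 = e1 -/
lemma irr_aux {K : Type*} [Field K] (c e0 e1 e2 e3 e4 : K)
    (h0 : e0 ≠ 0) (h1 : e1 ≠ 0) (h2 : e2 ≠ 0) (h3 : e3 ≠ 0) (h4 : e4 ≠ 0)
    (n1 : e2 * e0 ≠ e1 * e4) (n2 : e2 * e0 ≠ e1 * e3) (n3 : e0 ≠ e4)
    (n4 : e3 * e0 ≠ e1 * e4) (n5 : e0 ≠ e1) (n6 : e3 * e0 ≠ e2 * e4)
    (g1 g0 : K)
    (hy : (C g1 * X + C g0) * (C g1 * X + C g0 + (C e0 * X ^ 2 + C c * X + C (e2 + e3)))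
      + (1 + X) * (C e4 * X + C e3) * (C e1 * X + C e2) = 0) : False := by
  have E := fun t : K => congrArg (eval t) hy
  have c3 := congrArg (fun f => coeff f 3) hy
  have c0 := E 0
  simp at c0
  have hexp : (C g1 * X + C g0) * (C g1 * X + C g0 + (C e0 * X ^ 2 + C c * X + C (e2 + e3)))
      + (1 + X) * (C e4 * X + C e3) * (C e1 * X + C e2) =
      C (g1 * e0 + e1 * e4) * X ^ 3 + C (g1 * (g1 + c) + g0 * e0 + e4 * e2 + e4 * e1 + e3 * e1) * X ^ 2
      + C (g1 * (g0 + e2 + e3) + g0 * (g1 + c) + e4 * e2 + e3 * e2 + e3 * e1) * X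
      + C (g0 * (g0 + e2 + e3) + e3 * e2) := by
    simp only [map_add, map_mul]; ring
  rw [hexp] at c3
  simp only [coeff_add, coeff_C_mul, coeff_X_pow, coeff_X, coeff_C, coeff_zero] at c3
  norm_num at c3
  have hg1 : g1 ≠ 0 := by
    rintro rfl
    simp at c3
    tauto
  obtain ⟨t, hz⟩ : ∃ t, g1 * t + g0 = 0 := ⟨-g0 / g1, by field_simp; ring⟩
  have r := E t
  simp at r
  rw [hz] at r
  simp at r
  have hg0 : (g0 + e2) * (g0 + e3) = 0 := by linear_combination c0
  have key : ∀ a : K, a ≠ 0 → g0 = -a → (a = e2 ∨ a = e3) → False := by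
    intro a ha hga haa
    rcases r with (r | r) | r <;> rcases haa with rfl | rfl
    · exact n1 (by linear_combination -c3 + e0 * g1 * r - e0 * hz + e0 * hga)
    · exact n4 (by linear_combination -c3 + e0 * g1 * r - e0 * hz + e0 * hga)
    · exact n2 (mul_left_cancel₀ h4 (by linear_combination e0 * g1 * r - e3 * c3 - e0 * e4 * (hz - hga)))
    · exact n5 (mul_left_cancel₀ h4 (mul_left_cancel₀ h3 (by linear_combination e0 * g1 * r - a * c3 - e0 * e4 * (hz - hga))))
    · exact n3 (mul_left_cancel₀ h1 (mul_left_cancel₀ h2 (by linear_combination e0 * g1 * r - a * c3 - e0 * e1 * (hz - hga))))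
    · exact n6 (mul_left_cancel₀ h1 (by linear_combination e0 * g1 * r - e2 * c3 - e0 * e1 * (hz - hga)))
  rcases mul_eq_zero.mp hg0 with h | h
  · exact key e2 h2 (by linear_combination h) (Or.inl rfl)
  · exact key e3 h3 (by linear_combination h) (Or.inr rfl)

lemma powPR {R : Type*} [CommRing R] [IsDomain R] (b n : R[X]) (hb : b.natDegree ≤ 2)
    (hn : n.natDegree ≤ 3) (m : ℕ) :
    ∃ P Q : R[X], P.natDegree ≤ 2 * m + 1 ∧ Q.natDegree ≤ 2 * m ∧
      P ^ 2 - b * P * Q + n * Q ^ 2 = n ^ (m + 1) ∧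
      ∃ D : R[X][X], (X : R[X][X]) ^ (m + 1) = C P + C Q * X + D * (X ^ 2 + C b * X + C n) := by
  induction m with
  | zero => exact ⟨0, 1, by simp, by simp, by ring, 0, by simp⟩
  | succ m ih =>
    obtain ⟨P, Q, hP, hQ, hN, D, hD⟩ := ih
    refine ⟨-n * Q, P - b * Q, ?_, ?_, ?_, D * X + C Q, ?_⟩
    · refine natDegree_mul_le.trans ?_
      rw [natDegree_neg]; omega
    · refine (natDegree_sub_le _ _).trans (max_le (by omega) (natDegree_mul_le.trans (by omega)))
    · rw [pow_succ n (m + 1), ← hN]; ring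
    · rw [pow_succ, hD]
      simp only [C_mul, C_sub, C_neg]; ring

lemma tracePR {K : Type*} [Field K] (p k : ℕ) [Fact p.Prime] [CharP K p] (b n P Q : K[X]) 
    (D : K[X][X]) 
    (hD : (X : K[X][X]) ^ (p ^ k) = C P + C Q * X + D * (X ^ 2 + C b * X + C n)) :
    2 * P - b * Q = (-b) ^ (p ^ k) := by
  let L := AlgebraicClosure (RatFunc K)
  have hinj : Function.Injective (algebraMap K[X] L) := by
    rw [IsScalarTower.algebraMap_eq K[X] (RatFunc K) L]
    exact (algebraMap (RatFunc K) L).injective.comp (IsFractionRing.injective K[X] (RatFunc K))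
  haveI : CharP L p := charP_of_injective_algebraMap (algebraMap (RatFunc K) L).injective p
  let ι := algebraMap K[X] L
  obtain ⟨y, hy⟩ := IsAlgClosed.exists_root (X ^ 2 + C (ι b) * X + C (ι n) : L[X]) (by
    have : (X ^ 2 + C (ι b) * X + C (ι n) : L[X]).degree = 2 := by compute_degree!
    rw [this]; norm_num)
  have ev : ∀ z : L, z ^ 2 + ι b * z + ι n = 0 → z ^ (p ^ k) = ι P + ι Q * z := by
    intro z hz
    have := congrArg (eval₂ ι z) hD
    simpa [eval₂_add, eval₂_mul, eval₂_pow, hz] using this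
  simp [IsRoot] at hy
  have h1 := ev y hy
  have h2 := ev (-ι b - y) (by linear_combination hy)
  apply hinj
  change ι _ = ι _
  rw [map_sub, map_mul, map_mul, map_pow, map_neg]
  have : (-ι b) ^ p ^ k = y ^ p ^ k + (-ι b - y) ^ p ^ k := by
    rw [← add_pow_char_pow]; ring
  rw [this, h1, h2, map_ofNat]; ring

/-- The Frobenius orbit data. -/
structure Good {K : Type*} [Field K] (q : ℕ) (c e0 e1 e2 e3 e4 : K) : Prop where
  f0 : e0 ^ q = e1
  f1 : e1 ^ q = e2
  f2 : e2 ^ q = e3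
  f3 : e3 ^ q = e4
  f4 : e4 ^ q = e0
  fc : c ^ q = c
  ne : e0 ≠ e1

section good
variable {K : Type*} [Field K] {q : ℕ} {c e0 e1 e2 e3 e4 : K}

lemma Good.rot (g : Good q c e0 e1 e2 e3 e4) : Good q c e1 e2 e3 e4 e0 :=
  ⟨g.f1, g.f2, g.f3, g.f4, g.f0, g.fc, fun h => g.ne (by
    have h2 : e2 = e3 := by rw [← g.f1, ← g.f2, h]
    have h3 : e3 = e4 := by rw [← g.f2, ← g.f3, h2]
    have h4 : e4 = e0 := by rw [← g.f3, ← g.f4, h3]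
    rw [h, h2, h3, h4])⟩

lemma Good.nz (g : Good q c e0 e1 e2 e3 e4) (hq : q ≠ 0) : e0 ≠ 0 := by
  rintro rfl
  exact g.ne (by rw [← g.f0, zero_pow hq])

lemma Good.sh (g : Good q c e0 e1 e2 e3 e4) {a b a' b' : K} (h : a * b = a' * b') :
    a ^ q * b ^ q = a' ^ q * b' ^ q := by
  rw [← mul_pow, h, mul_pow]

lemma Good.n1 (g : Good q c e0 e1 e2 e3 e4) (hq : q ≠ 0) : e2 * e0 ≠ e1 * e4 := by
  intro h
  have h' := g.sh h
  rw [g.f0, g.f1, g.f2, g.f4] at h'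
  have h1 := g.rot.nz hq
  exact g.rot.rot.rot.ne (mul_left_cancel₀ h1 (by linear_combination h' + h))

lemma Good.n2 (g : Good q c e0 e1 e2 e3 e4) (hq : q ≠ 0) : e2 * e0 ≠ e1 * e3 := by
  intro h
  have h' := g.sh h
  rw [g.f0, g.f1, g.f2, g.f3] at h'
  have h2 := g.rot.rot.nz hq
  exact g.rot.rot.rot.rot.ne (mul_left_cancel₀ h2 (by linear_combination -h' - h))

lemma Good.n4 (g : Good q c e0 e1 e2 e3 e4) (hq : q ≠ 0) : e3 * e0 ≠ e1 * e4 := by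
  intro h
  have h' := g.sh h
  rw [g.f0, g.f1, g.f3, g.f4] at h'
  have h2 := g.nz hq
  exact g.rot.rot.ne (mul_left_cancel₀ h2 (by linear_combination -h' - h))

lemma Good.n6 (g : Good q c e0 e1 e2 e3 e4) (hq : q ≠ 0) : e3 * e0 ≠ e2 * e4 := by
  intro h
  have h' := g.sh h
  rw [g.f0, g.f2, g.f3, g.f4] at h'
  have h2 := g.rot.rot.rot.rot.nz hq
  exact g.rot.ne (mul_left_cancel₀ h2 (by linear_combination h' + h))

lemma irr (g : Good q c e0 e1 e2 e3 e4) (hq : q ≠ 0) (b1 n : K[X])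
    (hb1 : b1 = C e0 * X ^ 2 + C c * X + C (e2 + e3))
    (hn : n = (1 + X) * (C e4 * X + C e3) * (C e1 * X + C e2)) (y : K[X])
    (hy : y ^ 2 + b1 * y + n = 0) : False := by
  have aux : ∀ y : K[X], y ^ 2 + b1 * y + n = 0 → y.natDegree ≤ 1 → False := by
    intro y hy hd
    obtain ⟨g1, g0, rfl⟩ := exists_eq_X_add_C_of_natDegree_le_one hd
    refine irr_aux c e0 e1 e2 e3 e4 (g.nz hq) (g.rot.nz hq) (g.rot.rot.nz hq)
      (g.rot.rot.rot.nz hq) (g.rot.rot.rot.rot.nz hq) (g.n1 hq) (g.n2 hq)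
      (fun h => g.rot.rot.rot.rot.ne h.symm) (g.n4 hq) g.ne (g.n6 hq) g1 g0 ?_
    rw [← hy, hb1, hn]; ring
  by_cases h1 : y.natDegree ≤ 1
  · exact aux y hy h1
  by_cases h2 : (-b1 - y).natDegree ≤ 1
  · exact aux _ (by linear_combination hy) h2
  have h3 : (y * (-b1 - y)).natDegree ≤ 3 := by
    have : y * (-b1 - y) = n := by linear_combination -hy
    rw [this, hn]
    compute_degree
  rw [natDegree_mul (by rintro rfl; simp at h1) (by intro h; rw [h] at h2; simp at h2)] at h3
  omega

end good

section core
variable {K : Type*} [Field K] {q : ℕ} {c e0 e1 e2 e3 e4 : K}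

lemma core (p k : ℕ) [Fact p.Prime] [CharP K p] (hqp : q = p ^ k)
    (g : Good q c e0 e1 e2 e3 e4) (hq2 : 2 ≤ q) (b1 b2 E E' n A V Z : K[X])
    (hZ : Z = X ^ q)
    (hb1 : b1 = C e0 * X ^ 2 + C c * X + C (e2 + e3))
    (hb2 : b2 = C e1 * X + C e2)
    (hE : E = C e4 * X + C e3)
    (hE' : E' = C e0 * Z + C e4)
    (hn : n = (1 + X) * E * b2)
    (hA : A = b2 * Z ^ 2 + b1 * Z + (1 + X) * E)
    (hV : V = (C e2 * Z + C e3) * Z ^ q - E' * X)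
    (hAV : A ∣ V) :
    ∃ (φ φ0 : K[X]) (k : K), φ0 ^ 2 - b1 * φ0 * φ + n * φ ^ 2 = b2 * E' ∧
      2 * φ0 - b1 * φ = C k - C e0 * X - C e1 * Z := by
  have hq0 : q ≠ 0 := by omega
  have h1 := g.rot.nz hq0
  haveI : CharP K[X] p := inferInstance
  have frob : ∀ a b : K[X], (a + b) ^ q = a ^ q + b ^ q := by
    intro a b; rw [hqp]; exact add_pow_char_pow a b p k
  have hb2q : b2 ^ q = C e2 * Z + C e3 := by
    rw [hb2, frob, mul_pow, ← C_pow, ← C_pow, g.f1, g.f2, hZ]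
  have hEq : E ^ q = E' := by
    rw [hE, frob, mul_pow, ← C_pow, ← C_pow, g.f4, g.f3, hE', hZ]
  obtain ⟨b1', hb1'⟩ : ∃ b1', b1' = C e1 * Z ^ 2 + C c * Z + C (e3 + e4) := ⟨_, rfl⟩
  have hb1q : b1 ^ q = b1' := by
    rw [hb1, frob, frob, mul_pow, mul_pow, ← C_pow, ← C_pow, ← C_pow, g.f0, g.fc]
    have : (e2 + e3) ^ q = e3 + e4 := by
      apply C_injective
      rw [C_pow, C_add, frob, ← C_pow, ← C_pow, g.f2, g.f3, C_add]
    rw [this, hb1', hZ]; ring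
  have hnq : n ^ q = (1 + Z) * E' * (C e2 * Z + C e3) := by
    rw [hn, mul_pow, mul_pow, frob, one_pow, hEq, hb2q, hZ]
  obtain ⟨P, R, hP, hR, hN, D, hD⟩ := powPR b1 n (by rw [hb1]; compute_degree)
    (by rw [hn, hE, hb2]; compute_degree) (q - 1)
  rw [show q - 1 + 1 = q by omega] at hN hD
  have hT := tracePR p k b1 n P R D (by rw [← hqp]; exact hD)
  rw [← hqp] at hT
  have hT' : 2 * P - b1 * R = - b1' := by
    have := frob b1 (-b1)
    rw [add_neg_cancel, zero_pow hq0, hb1q] at this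
    rw [hT]; linear_combination -this
  rw [hnq] at hN
  have hA' : A = X ^ 2 * E' + X * b1' + (1 + Z) * (C e2 * Z + C e3) := by
    rw [hA, hE', hb1', hb2, hb1, hE]; simp only [C_add]; ring
  obtain ⟨φ, hφ⟩ : A ∣ P + R * (b2 * Z) - X * E' := by
    have h1 := congrArg (eval (b2 * Z)) hD
    simp at h1
    have h2 : P + R * (b2 * Z) - X * E' = V - A * (b2 * eval (b2 * Z) D) := by
      have h3 : (b2 * Z) ^ q = (C e2 * Z + C e3) * Z ^ q := by rw [mul_pow, hb2q]
      rw [hV, ← h3, h1, hA, hn]; ring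
    rw [h2]
    exact dvd_sub hAV (dvd_mul_right _ _)
  have hb2nz : b2 ≠ 0 := by
    intro h
    have := congrArg (fun f => coeff f 1) h
    rw [hb2] at this
    simp [coeff_C] at this
    exact h1 this
  have hb2A : b2.natDegree = 1 := by rw [hb2]; compute_degree!
  have hAdeg : A.natDegree = 2 * q + 1 := by
    have hA1 : A = C e1 * X ^ (2 * q + 1) + (C e2 * X ^ (2 * q) + b1 * X ^ q + (1 + X) * E) := by
      rw [hA, hb2, hZ]; ring
    rw [hA1, natDegree_add_eq_left_of_natDegree_lt]
    · exact natDegree_C_mul_X_pow _ _ h1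
    · rw [natDegree_C_mul_X_pow _ _ h1]
      have u1 : (C e2 * X ^ (2 * q) : K[X]).natDegree ≤ 2 * q := natDegree_C_mul_X_pow_le _ _
      have u2 : b1.natDegree ≤ 2 := by rw [hb1]; compute_degree
      have u3 : (b1 * X ^ q).natDegree ≤ 2 * q := natDegree_mul_le.trans (by rw [natDegree_X_pow]; omega)
      have u4 : ((1 + X) * E).natDegree ≤ 2 * q := by
        refine le_trans (b := 2) ?_ (by omega)
        rw [hE]; compute_degree
      have := natDegree_add_le_of_degree_le (natDegree_add_le_of_degree_le u1 u3) u4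
      omega
  have hAnz : A ≠ 0 := by rintro h; rw [h] at hAdeg; simp at hAdeg
  obtain ⟨φ0, hφ0⟩ : ∃ φ0, φ0 = φ * (b1 + b2 * Z) - b2 * R := ⟨_, rfl⟩
  have hS0 : -n * φ - b2 * Z * φ0 = b2 * (X * E' - P) := by
    rw [hφ0, hn]
    linear_combination b2 * hφ + b2 * φ * hA
  have hS1 : φ0 - φ * b1 - b2 * Z * φ = - b2 * R := by rw [hφ0]; ring
  have hbA : (b2 * Z) ^ 2 + b1 * (b2 * Z) + n = b2 * A := by rw [hA, hn]; ring
  have hNN : φ0 ^ 2 - b1 * φ0 * φ + n * φ ^ 2 = b2 * E' := by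
    apply mul_right_cancel₀ (mul_ne_zero hb2nz hAnz)
    have e1 : (φ0 ^ 2 - b1 * φ0 * φ + n * φ ^ 2) * (b2 * A) =
      (-n * φ - b2 * Z * φ0) ^ 2 - b1 * (-n * φ - b2 * Z * φ0) * (φ0 - φ * b1 - b2 * Z * φ)
       + n * (φ0 - φ * b1 - b2 * Z * φ) ^ 2 := by rw [← hbA]; ring
    rw [e1, hS0, hS1, hA']
    linear_combination b2 ^ 2 * hN - b2 ^ 2 * X * E' * hT'
  obtain ⟨τ, hτ⟩ : ∃ τ, τ = 2 * φ0 - b1 * φ := ⟨_, rfl⟩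
  obtain ⟨N1, hN1⟩ : ∃ N1, N1 = b2 * E' + C e1 * Z * τ + (C e1 * Z) ^ 2 := ⟨_, rfl⟩
  obtain ⟨W, hW⟩ : ∃ W, W = X * E' - C e1 * Z ^ 2 := ⟨_, rfl⟩
  have hbr : b2 * (W + b1') - C e1 * b1 * Z = Z * (C (e0 * e2) * X + C (c * e2 - e1 * (e2 + e3)))
      + b2 * (C e4 * X + C (e3 + e4)) := by
    rw [hW, hb1', hb2, hb1, hE']; simp only [C_add, C_mul, C_sub]; ring
  have hid : N1 * (b2 * A) = b2 ^ 2 * ((1 + Z) * E' * (C e2 * Z + C e3)) +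
      b2 * W * (Z * (C (e0 * e2) * X + C (c * e2 - e1 * (e2 + e3)))
      + b2 * (C e4 * X + C (e3 + e4))) + (C e1) ^ 2 * n * Z ^ 2 +
      C e1 * b2 * Z * (b1 * P - 2 * n * R) := by
    rw [← hbr]
    have e2 : N1 = (φ0 + C e1 * Z) ^ 2 - b1 * (φ0 + C e1 * Z) * φ + n * φ ^ 2 := by
      rw [hN1, ← hNN, hτ]; ring
    have e1 : N1 * (b2 * A) =
      (-n * φ - b2 * Z * φ0 - b2 * Z * (C e1 * Z)) ^ 2
       - b1 * (-n * φ - b2 * Z * φ0 - b2 * Z * (C e1 * Z)) * (φ0 - φ * b1 - b2 * Z * φ + C e1 * Z)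
       + n * (φ0 - φ * b1 - b2 * Z * φ + C e1 * Z) ^ 2 := by rw [← hbA, e2]; ring
    rw [e1, hS0, hS1, ← hN, hW]
    linear_combination -b2 ^ 2 * (X * E' - C _ * Z ^ 2) * hT'
  have hZd : Z.natDegree ≤ q := by rw [hZ]; simp
  have hE'd : E'.natDegree ≤ q := by
    rw [hE', hZ]; compute_degree
  have mulle : ∀ {f g : K[X]} {a b : ℕ}, f.natDegree ≤ a → g.natDegree ≤ b →
      (f * g).natDegree ≤ a + b := fun h1 h2 => natDegree_mul_le.trans (by omega)
  have hb1d : b1.natDegree ≤ 2 := by rw [hb1]; compute_degree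
  have hWd : W.natDegree ≤ 2 * q := by
    rw [hW]
    refine natDegree_sub_le_of_le (m := 2 * q) (n := 2 * q) ((mulle natDegree_X_le hE'd).trans (by omega)) ?_ |>.trans (by simp)
    rw [hZ, ← pow_mul, mul_comm q 2]; exact natDegree_C_mul_X_pow_le _ _
  have hnd : n.natDegree ≤ 3 := by rw [hn, hE, hb2]; compute_degree
  have hN1d : N1.natDegree ≤ q := by
    by_cases h0 : N1 = 0
    · simp [h0]
    have hd := congrArg natDegree hid
    rw [natDegree_mul h0 (mul_ne_zero hb2nz hAnz), natDegree_mul hb2nz hAnz, hAdeg, hb2A] at hd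
    have : N1.natDegree + (1 + (2 * q + 1)) ≤ 3 * q + 2 := by
      rw [hd]
      refine natDegree_add_le_of_degree_le (natDegree_add_le_of_degree_le
        (natDegree_add_le_of_degree_le ?_ ?_) ?_) ?_
      · have u1 : (1 + Z).natDegree ≤ q := natDegree_add_le_of_degree_le (by simp) hZd
        have u2 : (C e2 * Z + C e3).natDegree ≤ q :=
          natDegree_add_le_of_degree_le ((natDegree_C_mul_le _ _).trans hZd) (by simp)
        have u3 : (b2 ^ 2).natDegree ≤ 2 := by rw [hb2]; compute_degree
        exact (mulle u3 (mulle (mulle u1 hE'd) u2)).trans (by omega)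
      · have u1 : (C (e0 * e2) * X + C (c * e2 - e1 * (e2 + e3))).natDegree ≤ 1 := natDegree_linear_le
        have u2 : (C e4 * X + C (e3 + e4)).natDegree ≤ 1 := natDegree_linear_le
        have u3 := natDegree_add_le_of_degree_le (n := q + 1) (mulle hZd u1)
          ((mulle hb2A.le u2).trans (by omega))
        exact (mulle (mulle hb2A.le hWd) u3).trans (by omega)
      · have u1 : (C e1 ^ 2 * n).natDegree ≤ 3 := by
          rw [← C_pow]; exact (natDegree_C_mul_le _ _).trans hnd
        have u2 : (Z ^ 2).natDegree ≤ 2 * q := natDegree_pow_le_of_le 2 hZd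
        exact (mulle u1 u2).trans (by omega)
      · have u1 : (b1 * P).natDegree ≤ 2 * q + 1 := (mulle hb1d hP).trans (by omega)
        have u2 : (2 * n * R).natDegree ≤ 2 * q + 1 := by
          have : (2 * n).natDegree ≤ 3 := by
            rw [show (2 : K[X]) = C 2 from rfl]
            exact (natDegree_C_mul_le _ _).trans hnd
          exact (mulle this hR).trans (by omega)
        have u3 := natDegree_sub_le_of_le u1 u2
        have u4 : (C e1 * b2).natDegree ≤ 1 := (natDegree_C_mul_le _ _).trans hb2A.le
        exact (mulle (mulle u4 hZd) u3).trans (by simp; omega)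
    omega
  have hN1' : C e1 * (Z * (τ + C e1 * Z + C e0 * X)) = N1 - (C (e2 * e0) * Z + C e4 * b2) := by
    rw [hN1, hE', hb2]; simp only [C_mul]; ring
  have hc : (τ + C e1 * Z + C e0 * X).natDegree ≤ 0 := by
    by_cases h0 : τ + C e1 * Z + C e0 * X = 0
    · simp [h0]
    have hd := congrArg natDegree hN1'
    rw [natDegree_C_mul h1, natDegree_mul (by rw [hZ]; exact pow_ne_zero _ X_ne_zero) h0] at hd
    have : (N1 - (C (e2 * e0) * Z + C e4 * b2)).natDegree ≤ q :=
      (natDegree_sub_le_of_le hN1d (natDegree_add_le_of_degree_le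
        ((natDegree_C_mul_le _ _).trans hZd) ((natDegree_C_mul_le _ _).trans (by omega)))).trans (by simp)
    have hZ2 : Z.natDegree = q := by rw [hZ]; simp
    omega
  refine ⟨φ, φ0, coeff (τ + C e1 * Z + C e0 * X) 0, hNN, ?_⟩
  rw [← eq_C_of_natDegree_le_zero hc, ← hτ]; ring

end core

section odd
variable {K : Type*} [Field K] {q : ℕ} {c e0 e1 e2 e3 e4 : K}

lemma q3 (w k : K) (e0 e1 e2 e3 e4 c : K) (h3 : (3 : K) = 0) (hw : w ≠ 0) (h4 : e4 ≠ 0)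
    (h2 : (2 : K) ≠ 0)
    (h : (C k - C e0 * X - C e1 * X ^ 3) ^ 2 - 4 * ((C e1 * X + C e2) * (C e0 * X ^ 3 + C e4))
      = ((C e0 * X ^ 2 + C c * X + C (e2 + e3)) ^ 2
        - 4 * ((1 + X) * (C e4 * X + C e3) * (C e1 * X + C e2))) * (C w * (C e4 * X + C e3)) ^ 2) :
    e0 ^ 2 * e3 + c * e0 * e4 + e1 * e4 ^ 2 = 0 := by
  have hL : (C k - C e0 * X - C e1 * X ^ 3) ^ 2 - 4 * ((C e1 * X + C e2) * (C e0 * X ^ 3 + C e4))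
    = C (e1 ^ 2) * X ^ 6 + C (2 * e0 * e1 - 4 * e1 * e0) * X ^ 4 +
     C (-2 * k * e1 - 4 * e2 * e0) * X ^ 3 + C (e0 ^ 2) * X ^ 2 + C (-2 * k * e0 - 4 * e1 * e4) * X
     + C (k ^ 2 - 4 * e2 * e4) := by
    simp only [C_add, C_mul, C_sub, C_neg, C_pow, map_ofNat]; ring
  obtain ⟨s, hs⟩ : ∃ s, s = e2 + e3 := ⟨_, rfl⟩
  obtain ⟨d3, hd3⟩ : ∃ d, d = 2 * e0 * c - 4 * (e1 * e4) := ⟨_, rfl⟩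
  obtain ⟨d2, hd2⟩ : ∃ d, d = c ^ 2 + 2 * e0 * s - 4 * (e4 * e2 + e4 * e1 + e3 * e1) := ⟨_, rfl⟩
  obtain ⟨d1, hd1⟩ : ∃ d, d = 2 * c * s - 4 * (e4 * e2 + e3 * e2 + e3 * e1) := ⟨_, rfl⟩
  obtain ⟨d0, hd0⟩ : ∃ d, d = s ^ 2 - 4 * (e3 * e2) := ⟨_, rfl⟩
  have hD : (C e0 * X ^ 2 + C c * X + C (e2 + e3)) ^ 2
        - 4 * ((1 + X) * (C e4 * X + C e3) * (C e1 * X + C e2)) =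
      C (e0 ^ 2) * X ^ 4 + C d3 * X ^ 3 + C d2 * X ^ 2 + C d1 * X + C d0 := by
    rw [← hs, hd3, hd2, hd1, hd0]
    simp only [C_add, C_mul, C_sub, C_pow, map_ofNat]; ring
  have hR : (C (e0 ^ 2) * X ^ 4 + C d3 * X ^ 3 + C d2 * X ^ 2 + C d1 * X + C d0) *
      (C w * (C e4 * X + C e3)) ^ 2 = C (w ^ 2 * e0 ^ 2 * e4 ^ 2) * X ^ 6
       + C (w ^ 2 * (e0 ^ 2 * (2 * e3 * e4) + d3 * e4 ^ 2)) * X ^ 5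
       + C (w ^ 2 * (e0 ^ 2 * e3 ^ 2 + d3 * (2 * e3 * e4) + d2 * e4 ^ 2)) * X ^ 4
       + C (w ^ 2 * (d3 * e3 ^ 2 + d2 * (2 * e3 * e4) + d1 * e4 ^ 2)) * X ^ 3
       + C (w ^ 2 * (d2 * e3 ^ 2 + d1 * (2 * e3 * e4) + d0 * e4 ^ 2)) * X ^ 2
       + C (w ^ 2 * (d1 * e3 ^ 2 + d0 * (2 * e3 * e4))) * X + C (w ^ 2 * (d0 * e3 ^ 2)) := by
    simp only [C_add, C_mul, C_pow, map_ofNat]; ring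
  rw [hL, hD, hR] at h
  have h5 := congrArg (fun f => coeff f 5) h
  simp only [coeff_add, coeff_C_mul, coeff_X_pow, coeff_X, coeff_C] at h5
  norm_num at h5
  have h6 := h5.resolve_left hw
  rw [hd3] at h6
  refine mul_left_cancel₀ h4 (mul_left_cancel₀ h2 ?_)
  linear_combination h6 + 2 * e1 * e4 ^ 3 * h3

lemma odd_case (p k : ℕ) [Fact p.Prime] [CharP K p] (hqp : q = p ^ k) (hk : k ≠ 0) (hp2 : p ≠ 2)
    (g : Good q c e0 e1 e2 e3 e4) (b1 b2 E E' n Z φ φ0 : K[X]) (κ : K)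
    (hZ : Z = X ^ q)
    (hb1 : b1 = C e0 * X ^ 2 + C c * X + C (e2 + e3))
    (hb2 : b2 = C e1 * X + C e2)
    (hE : E = C e4 * X + C e3)
    (hE' : E' = C e0 * Z + C e4)
    (hn : n = (1 + X) * E * b2)
    (hN : φ0 ^ 2 - b1 * φ0 * φ + n * φ ^ 2 = b2 * E')
    (hT : 2 * φ0 - b1 * φ = C κ - C e0 * X - C e1 * Z) : False := by
  have hp : p.Prime := Fact.out
  have hp3 : 3 ≤ p := by have := hp.two_le; omega
  have hq3 : 3 ≤ q := by
    rw [hqp]; exact hp3.trans (Nat.le_self_pow hk p)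
  have hq0 : q ≠ 0 := by omega
  have h0 := g.nz hq0
  have h1 := g.rot.nz hq0
  have h4 := g.rot.rot.rot.rot.nz hq0
  have h2 : (2 : K) ≠ 0 := by
    intro h
    have : ((2 : ℕ) : K) = 0 := by exact_mod_cast h
    rw [CharP.cast_eq_zero_iff K p] at this
    have := Nat.le_of_dvd (by norm_num) this
    omega
  have hqK : (q : K) = 0 := by
    rw [hqp]; push_cast; rw [CharP.cast_eq_zero, zero_pow hk]
  have frob : ∀ a b : K[X], (a + b) ^ q = a ^ q + b ^ q := by
    intro a b; rw [hqp]; exact add_pow_char_pow a b p k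
  have hEq : E ^ q = E' := by
    rw [hE, frob, mul_pow, ← C_pow, ← C_pow, g.f4, g.f3, hE', hZ]
  obtain ⟨τ, hτ⟩ : ∃ τ, τ = C κ - C e0 * X - C e1 * Z := ⟨_, rfl⟩
  rw [← hτ] at hT
  have hQ : τ ^ 2 - 4 * (b2 * E') = (b1 ^ 2 - 4 * n) * φ ^ 2 := by
    rw [← hN, ← hT]; ring
  -- derivative
  have hZ' : derivative Z = 0 := by
    rw [hZ, derivative_X_pow, hqK]; simp
  have hτ' : derivative τ = - C e0 := by
    rw [hτ]; simp [hZ']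
  have hb2' : derivative b2 = C e1 := by rw [hb2]; simp
  have hE'' : derivative E' = 0 := by rw [hE']; simp [hZ']
  have h4' : derivative (4 : K[X]) = 0 := derivative_ofNat 4
  have hQ' : -2 * C e0 * τ - 4 * C e1 * E' =
      φ * (derivative (b1 ^ 2 - 4 * n) * φ + 2 * (b1 ^ 2 - 4 * n) * derivative φ) := by
    have h7 : τ * τ - 4 * (b2 * E') = (b1 ^ 2 - 4 * n) * (φ * φ) := by linear_combination hQ
    have := congrArg derivative h7
    rw [derivative_sub, derivative_mul, derivative_mul, derivative_mul, derivative_mul,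
      derivative_mul (f := φ), hτ', hb2', hE'', h4'] at this
    linear_combination this
  have hφQ' : φ ∣ -2 * C e0 * τ - 4 * C e1 * E' := ⟨_, hQ'⟩
  have hφQ : φ ∣ τ ^ 2 - 4 * (b2 * E') := ⟨(b1 ^ 2 - 4 * n) * φ, by rw [hQ]; ring⟩
  -- degrees
  have hZd : Z.natDegree = q := by rw [hZ]; simp
  have hQd : (τ ^ 2 - 4 * (b2 * E')).natDegree = 2 * q := by
    have : τ ^ 2 - 4 * (b2 * E') = C (e1 ^ 2) * X ^ (2 * q) + (C (-2 * κ * e1 - 4 * (e2 * e0)) * X ^ q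
       + C (- 2 * e1 * e0) * X ^ (q + 1) + (C (e0 ^ 2) * X ^ 2 + C (-2 * κ * e0 - 4 * e1 * e4) * X
        + C (κ ^ 2 - 4 * e2 * e4))) := by
      rw [hτ, hb2, hE', hZ]; simp only [C_add, C_mul, C_sub, C_neg, C_pow, map_ofNat]; ring
    rw [this, natDegree_add_eq_left_of_natDegree_lt]
    · exact natDegree_C_mul_X_pow _ _ (pow_ne_zero _ h1)
    · rw [natDegree_C_mul_X_pow _ _ (pow_ne_zero _ h1)]
      refine lt_of_le_of_lt (b := q + 1) ?_ (by omega)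
      refine natDegree_add_le_of_degree_le (natDegree_add_le_of_degree_le
        ((natDegree_C_mul_X_pow_le _ _).trans (by omega)) (natDegree_C_mul_X_pow_le _ _)) ?_
      refine le_trans (b := 2) ?_ (by omega)
      compute_degree
  have hDd : (b1 ^ 2 - 4 * n).natDegree = 4 := by
    have h5 : (b1 ^ 2).natDegree = 4 := by
      rw [natDegree_pow, hb1]
      have : (C e0 * X ^ 2 + C c * X + C (e2 + e3)).natDegree = 2 := by compute_degree!
      omega
    have h6 : (4 * n).natDegree ≤ 3 := by
      rw [show (4 : K[X]) = C 4 from rfl, hn, hE, hb2]; compute_degree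
    rw [natDegree_sub_eq_left_of_natDegree_lt (by omega), h5]
  have hφnz : φ ≠ 0 := by
    rintro rfl
    simp at hQ
    rw [hQ] at hQd
    simp at hQd; omega
  have hDnz : b1 ^ 2 - 4 * n ≠ 0 := by
    intro h; rw [h] at hDd; simp at hDd
  have hφd : φ.natDegree = q - 2 := by
    have := congrArg natDegree hQ
    rw [hQd, natDegree_mul hDnz (pow_ne_zero _ hφnz), natDegree_pow, hDd] at this
    omega
  obtain ⟨u, hu⟩ : ∃ u, u = e0 * e1 * κ + e0 ^ 2 * e2 + e1 ^ 2 * e4 := ⟨_, rfl⟩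
  have hrel : 2 * (C e1 ^ 2 * E' - C e0 ^ 2 * b2) =
      -2 * C u - C e1 * (-2 * C e0 * τ - 4 * C e1 * E') := by
    rw [hu, hτ, hE', hb2]; simp only [C_add, C_mul, C_pow]; ring
  by_cases hu0 : u = 0
  · -- square case
    have hsq : (C e0 * C e1) ^ 2 * (τ ^ 2 - 4 * (b2 * E')) = (C e1 ^ 2 * E' - C e0 ^ 2 * b2) ^ 2 := by
      have hκ : C e0 * C e1 * τ = - (C e1 ^ 2 * E' + C e0 ^ 2 * b2) := by
        have : C e0 * C e1 * C κ + C e0 ^ 2 * C e2 + C e1 ^ 2 * C e4 = (0 : K[X]) := by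
          have := congrArg C (hu.symm.trans hu0)
          simpa using this
        rw [hτ, hE', hb2]
        linear_combination this
      linear_combination (C e0 * C e1 * τ - (C e1 ^ 2 * E' + C e0 ^ 2 * b2)) * hκ
    rw [hQ] at hsq
    obtain ⟨s, hs⟩ : (C e0 * C e1 * φ) ∣ (C e1 ^ 2 * E' - C e0 ^ 2 * b2) := by
      rw [← IsIntegrallyClosed.pow_dvd_pow_iff (n := 2) (by norm_num)]
      exact ⟨b1 ^ 2 - 4 * n, by rw [← hsq]; ring⟩
    rw [hs] at hsq
    have hnz : (C e0 * C e1 * φ) ^ 2 ≠ 0 := by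
      refine pow_ne_zero _ (mul_ne_zero (mul_ne_zero ?_ ?_) hφnz) <;> simpa
    have hΔ : b1 ^ 2 - 4 * n = s ^ 2 := by
      apply mul_left_cancel₀ hnz
      linear_combination hsq
    have h2C : (2 : K[X]) * C (1 / 2) = 1 := by
      rw [show (2 : K[X]) = C 2 from rfl, ← C_mul]; field_simp; simp
    refine irr g hq0 b1 n hb1 (by rw [hn, hE, hb2]) (C (1 / 2) * (s - b1)) ?_
    obtain ⟨v, hv⟩ : ∃ v : K[X], v = C (1 / 2) := ⟨_, rfl⟩
    rw [← hv] at h2C ⊢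
    linear_combination -v ^ 2 * hΔ - (v * b1 * (s - b1) + n * (2 * v + 1)) * h2C
  · have hφE : φ ∣ E ^ q := by
      rw [hEq]
      have a1 : φ ∣ 4 * C e0 ^ 2 * (τ ^ 2 - 4 * (b2 * E')) - (-2 * C e0 * τ - 4 * C e1 * E') *
          (-2 * C e0 * τ + 4 * C e1 * E') + 8 * E' * C e1 * (-2 * C e0 * τ - 4 * C e1 * E') :=
        dvd_add (dvd_sub (hφQ.mul_left _) (hφQ'.mul_right _)) (hφQ'.mul_left _)
      have a2 : 4 * C e0 ^ 2 * (τ ^ 2 - 4 * (b2 * E')) - (-2 * C e0 * τ - 4 * C e1 * E') *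
          (-2 * C e0 * τ + 4 * C e1 * E') + 8 * E' * C e1 * (-2 * C e0 * τ - 4 * C e1 * E')
          = C (-16 * u) * E' := by
        have : C (-16 * u) = -16 * C u := by simp only [C_mul, C_neg, map_ofNat]
        rw [this]
        linear_combination 8 * E' * hrel
      rw [a2] at a1
      have hunit : IsUnit (C (-16 * u)) := by
        rw [isUnit_C]
        refine (mul_ne_zero ?_ hu0).isUnit
        have : (-16 : K) = - 2 ^ 4 := by norm_num
        rw [this]
        exact neg_ne_zero.mpr (pow_ne_zero _ h2)
      exact (hunit.dvd_mul_left).mp a1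
    have hEd : E.degree = 1 := by rw [hE]; exact degree_linear h4
    have hEp : Prime E := prime_of_degree_eq_one hEd
    obtain ⟨i, hi, hass⟩ := (dvd_prime_pow hEp q).1 hφE
    have hid : i = q - 2 := by
      have := natDegree_eq_of_degree_eq (degree_eq_degree_of_associated hass)
      have hEn : E.natDegree = 1 := by rw [hE]; exact natDegree_linear h4
      rw [hφd, natDegree_pow, hEn] at this
      omega
    rw [hid] at hass
    by_cases hq5 : q = 3
    · subst hq5
      obtain ⟨w, hw⟩ := hass.symm
      simp only [Nat.add_one_sub_one, Nat.reduceSub, pow_one] at hw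
      obtain ⟨r, hr, hrw⟩ := isUnit_iff.mp w.isUnit
      rw [← hrw] at hw
      have h3 : (3 : K) = 0 := by exact_mod_cast hqK
      have key := q3 r κ e0 e1 e2 e3 e4 c h3 hr.ne_zero h4 h2 (by
        have := hQ
        rw [hτ, hb2, hE', hZ, hb1, hn, ← hw, hE, hb2] at this
        rw [this]; ring)
      have key2 : e1 ^ 2 * e4 + c * e1 * e0 + e2 * e0 ^ 2 = 0 := by
        have t := congrArg (fun z => (C z : K[X]) ^ 3) key
        simp only [C_add, frob, C_0] at t
        simp only [← C_pow, ← C_add, mul_pow] at t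
        rw [← pow_mul, mul_comm 2 3, pow_mul, g.f0, g.f3, g.fc, g.f4, g.f1, ← pow_mul, mul_comm 2 3,
          pow_mul, g.f4] at t
        refine C_injective (t.trans ?_)
        rw [zero_pow (by norm_num), C_0]
      refine g.rot.n2 (by norm_num) (mul_left_cancel₀ (pow_ne_zero 2 h0) ?_)
      linear_combination e1 * key - e4 * key2
    · have hq4 : 4 ≤ q := by omega
      have hE2 : E * E ∣ -2 * C e0 * τ - 4 * C e1 * E' := by
        refine dvd_trans ?_ (hass.symm.dvd.trans hφQ')
        rw [← sq]; exact pow_dvd_pow _ (by omega)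
      obtain ⟨s, hs⟩ := hE2
      have hd := congrArg derivative hs
      have hl : derivative (-2 * C e0 * τ - 4 * C e1 * E') = C (2 * e0 ^ 2) := by
        rw [show (-2 * C e0 * τ - 4 * C e1 * E' : K[X]) = C (-2 * e0) * τ - C (4 * e1) * E' by
          simp only [C_mul, C_neg, map_ofNat]]
        rw [derivative_sub, derivative_C_mul, derivative_C_mul, hτ', hE'', ← C_neg, ← C_mul]
        rw [mul_zero, sub_zero]; congr 1; ring
      rw [hl, derivative_mul, derivative_mul] at hd
      have : E ∣ C (2 * e0 ^ 2) := ⟨derivative E * s + derivative E * s + E * derivative s, by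
        rw [hd]; ring⟩
      have hun : IsUnit (C (2 * e0 ^ 2)) := isUnit_C.mpr (mul_ne_zero h2 (pow_ne_zero 2 h0)).isUnit
      exact hEp.not_isUnit (isUnit_of_dvd_unit this hun)

end odd

section even
variable {K : Type*} [Field K] {q : ℕ} {c e0 e1 e2 e3 e4 : K}

lemma even_case (hq4 : 4 ≤ q) (hqK : (q : K) = 0) (h2K : (2 : K) = 0)
    (g : Good q c e0 e1 e2 e3 e4) (b1 b2 E E' n Z φ φ0 : K[X]) (κ : K)
    (hZ : Z = X ^ q)
    (hb1 : b1 = C e0 * X ^ 2 + C c * X + C (e2 + e3))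
    (hb2 : b2 = C e1 * X + C e2)
    (hE : E = C e4 * X + C e3)
    (hE' : E' = C e0 * Z + C e4)
    (hn : n = (1 + X) * E * b2)
    (hN : φ0 ^ 2 - b1 * φ0 * φ + n * φ ^ 2 = b2 * E')
    (hT : 2 * φ0 - b1 * φ = C κ - C e0 * X - C e1 * Z) : False := by
  have hq0 : q ≠ 0 := by omega
  have h0 := g.nz hq0
  have h1 := g.rot.nz hq0
  have h2 : (2 : K[X]) = 0 := by rw [show (2 : K[X]) = C 2 from rfl, h2K, C_0]
  have hZ' : derivative Z = 0 := by
    rw [hZ, derivative_X_pow, hqK]; simp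
  obtain ⟨τ, hτ⟩ : ∃ τ, τ = C κ + C e0 * X + C e1 * Z := ⟨_, rfl⟩
  have hτ' : derivative τ = C e0 := by
    rw [hτ]; simp [hZ']
  have hb2' : derivative b2 = C e1 := by rw [hb2]; simp
  have hE'' : derivative E' = 0 := by rw [hE']; simp [hZ']
  have hbφ : b1 * φ = τ := by
    rw [hτ]; linear_combination -hT + (φ0 - C κ) * h2
  have hN' : φ0 * φ0 + τ * φ0 + n * (φ * φ) = b2 * E' := by
    linear_combination hN + φ0 * hbφ + φ0 * τ * h2
  obtain ⟨m, hm⟩ : ∃ m, m = e0 * κ + e1 * e4 := ⟨_, rfl⟩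
  obtain ⟨l, hl⟩ : ∃ l, l = C e0 ^ 2 * X + C m := ⟨_, rfl⟩
  have hE1 : C e1 * E' = C e0 * τ + l := by
    rw [hE', hτ, hl, hm]; simp only [C_add, C_mul]
    linear_combination -(C e0 * C κ + C e0 ^ 2 * X) * h2
  have hD := congrArg derivative hN'
  simp only [derivative_add, derivative_mul, hτ', hb2', hE''] at hD
  obtain ⟨G, hG⟩ : ∃ G, G = b1 * (C e0 - derivative φ0) - derivative n * φ := ⟨_, rfl⟩
  have hg : C e0 * φ0 = l + φ * G := by
    rw [hG]
    linear_combination hD + hE1 - (C e0 - derivative φ0) * hbφ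
      - (φ0 * derivative φ0 + n * φ * derivative φ) * h2
  have hN2 : C e1 * ((l + φ * G) ^ 2 + C e0 * τ * (l + φ * G) + C e0 ^ 2 * n * φ ^ 2) =
      C e0 ^ 2 * b2 * (C e0 * τ + l) := by
    rw [← hg, ← hE1]
    linear_combination C e0 ^ 2 * C e1 * hN'
  rw [← hbφ] at hN2
  obtain ⟨μ, hμ⟩ : ∃ μ, μ = e1 * m + e0 ^ 2 * e2 := ⟨_, rfl⟩
  have hμ' : C μ = C e1 * l - C e0 ^ 2 * b2 + 2 * C e0 ^ 2 * C e2 := by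
    rw [hμ, hl, hb2]; simp only [C_add, C_mul, C_pow]; ring
  have hdvd : φ ∣ C μ * l := by
    refine ⟨C e0 ^ 3 * b2 * b1 - C e1 * (2 * l * G + φ * G ^ 2) - C e0 * C e1 * b1 * (l + φ * G)
      - C e0 ^ 2 * C e1 * n * φ, ?_⟩
    linear_combination hN2 + l * hμ' + (l * C e0 ^ 2 * C e2 + l * C e0 ^ 2 * b2 - C e0 ^ 2 * b2 * l ) * h2
  have hτd : τ.natDegree = q := by
    rw [hτ, hZ, natDegree_add_eq_right_of_natDegree_lt]
    · exact natDegree_C_mul_X_pow _ _ h1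
    · rw [natDegree_C_mul_X_pow _ _ h1]
      refine lt_of_le_of_lt (b := 1) ?_ (by omega)
      compute_degree
  have hτnz : τ ≠ 0 := by intro h; rw [h] at hτd; simp at hτd; omega
  have hb1d : b1.natDegree = 2 := by rw [hb1]; compute_degree!
  have hφnz : φ ≠ 0 := by rintro rfl; simp at hbφ; exact hτnz hbφ.symm
  have hφd : 2 ≤ φ.natDegree := by
    have := congrArg natDegree hbφ
    rw [natDegree_mul (by rintro h; rw [h] at hb1d; simp at hb1d) hφnz] at this
    omega
  have hlnz : l ≠ 0 := by
    intro h
    have := congrArg (fun f => coeff f 1) h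
    simp only [hl, ← C_pow, coeff_add, coeff_C_mul, coeff_X, coeff_C, coeff_zero] at this
    norm_num at this
    exact h0 this
  have hμ0 : μ = 0 := by
    by_contra hne
    have hnz : C μ * l ≠ 0 := mul_ne_zero (by simpa using hne) hlnz
    have := natDegree_le_of_dvd hdvd hnz
    have h3 : (C μ * l).natDegree ≤ 1 := by
      refine (natDegree_C_mul_le _ _).trans ?_
      rw [hl, ← C_pow]; exact natDegree_linear_le
    omega
  rw [hμ0, C_0] at hμ'
  have hfin : C e1 * φ ^ 2 * (G ^ 2 + C e0 * b1 * G + C e0 ^ 2 * n) = 0 := by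
    linear_combination hN2 + (l + C e0 * b1 * φ) * hμ' +
      (C e0 ^ 2 * C e2 * (l + C e0 * b1 * φ) - C e1 * l * φ * G) * h2
  have hfin2 : G ^ 2 + C e0 * b1 * G + C e0 ^ 2 * n = 0 := by
    rcases mul_eq_zero.mp hfin with h | h
    · exfalso
      rcases mul_eq_zero.mp h with h | h
      · exact h1 (by simpa using h)
      · exact pow_ne_zero 2 hφnz h
    · exact h
  refine irr g hq0 b1 n hb1 (by rw [hn, hE, hb2]) (C (1 / e0) * G) ?_
  have hi : C (1 / e0) * C e0 = (1 : K[X]) := by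
    rw [← C_mul]; field_simp; simp
  obtain ⟨v, hv⟩ : ∃ v : K[X], v = C (1 / e0) := ⟨_, rfl⟩
  rw [← hv] at hi ⊢
  linear_combination v ^ 2 * hfin2 - (b1 * v * G + n * (v * C e0 + 1)) * hi

lemma two_case (h2K : (2 : K) = 0)
    (g : Good 2 c e0 e1 e2 e3 e4) (b1 b2 E E' A V Z : K[X])
    (hZ : Z = X ^ 2)
    (hb1 : b1 = C e0 * X ^ 2 + C c * X + C (e2 + e3))
    (hb2 : b2 = C e1 * X + C e2)
    (hE : E = C e4 * X + C e3)
    (hE' : E' = C e0 * Z + C e4)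
    (hA : A = b2 * Z ^ 2 + b1 * Z + (1 + X) * E)
    (hV : V = (C e2 * Z + C e3) * Z ^ 2 - E' * X)
    (hAV : A ∣ V) : False := by
  have h1 := g.rot.nz (by norm_num)
  have h2 := g.rot.rot.nz (by norm_num)
  have h3 := g.rot.rot.rot.nz (by norm_num)
  obtain ⟨w, hw⟩ := hAV
  have hA' : A = C e1 * X ^ 5 + C (e2 + e0) * X ^ 4 + C c * X ^ 3 + C (e2 + e3 + e4) * X ^ 2
      + C (e3 + e4) * X + C e3 := by
    rw [hA, hb2, hb1, hE, hZ]; simp only [C_add]; ring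
  have hX : X ∣ w := by
    have := congrArg (eval 0) hw
    rw [hV, hA', hE', hZ] at this
    simp at this
    rw [X_dvd_iff, coeff_zero_eq_eval_zero]
    exact this.resolve_left h3
  obtain ⟨w, rfl⟩ := hX
  have hw2 : C e2 * X ^ 5 + C e3 * X ^ 3 - C e0 * X ^ 2 - C e4 = A * w := by
    apply mul_left_cancel₀ (X_ne_zero (R := K))
    rw [hV, hE', hZ] at hw
    linear_combination hw
  have hAd : A.natDegree = 5 := by rw [hA']; compute_degree!
  have hLd : (C e2 * X ^ 5 + C e3 * X ^ 3 - C e0 * X ^ 2 - C e4).natDegree = 5 := by compute_degree!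
  have hwnz : w ≠ 0 := by
    rintro rfl
    rw [mul_zero] at hw2
    rw [hw2] at hLd; simp at hLd
  have hwd : w.natDegree = 0 := by
    have := congrArg natDegree hw2
    rw [hLd, natDegree_mul (by rintro h; rw [h] at hAd; simp at hAd) hwnz, hAd] at this
    omega
  rw [eq_C_of_natDegree_eq_zero hwd] at hw2
  have h4 := congrArg (fun f => coeff f 4) hw2
  have h5 := congrArg (fun f => coeff f 5) hw2
  simp only [hA', coeff_mul_C, coeff_sub, coeff_add, coeff_C_mul, coeff_X_pow, coeff_X, coeff_C] at h4 h5
  norm_num at h4 h5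
  have h6 : e2 + e0 = 0 := by
    rcases h4 with h | h
    · exact h
    · rw [h] at h5; simp at h5; exact absurd h5 h2
  have h7 : e2 = e0 := by linear_combination h6 - e0 * h2K
  have h8 : e3 = e1 := by rw [← g.f2, h7, g.f0]
  have h9 : e4 = e2 := by rw [← g.f3, h8, g.f1]
  exact g.rot.rot.rot.rot.ne (h9.trans h7)

end even

section notdvd
variable {K : Type*} [Field K] {q : ℕ} {c e0 e1 e2 e3 e4 : K}

lemma not_dvd (p k : ℕ) [Fact p.Prime] [CharP K p] (hqp : q = p ^ k) (hk : k ≠ 0)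
    (g : Good q c e0 e1 e2 e3 e4) (b1 b2 E E' A V Z : K[X])
    (hZ : Z = X ^ q)
    (hb1 : b1 = C e0 * X ^ 2 + C c * X + C (e2 + e3))
    (hb2 : b2 = C e1 * X + C e2)
    (hE : E = C e4 * X + C e3)
    (hE' : E' = C e0 * Z + C e4)
    (hA : A = b2 * Z ^ 2 + b1 * Z + (1 + X) * E)
    (hV : V = (C e2 * Z + C e3) * Z ^ q - E' * X)
    (hAV : A ∣ V) : False := by
  have hp : p.Prime := Fact.out
  have hq2 : 2 ≤ q := by
    rw [hqp]; exact hp.two_le.trans (Nat.le_self_pow hk p)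
  obtain ⟨φ, φ0, κ, hN, hT⟩ := core p k hqp g hq2 b1 b2 E E' _ A V Z hZ hb1 hb2 hE hE' rfl hA hV hAV
  by_cases hp2 : p = 2
  · subst hp2
    have h2K : (2 : K) = 0 := by exact_mod_cast CharP.cast_eq_zero K 2
    by_cases hq : q = 2
    · subst hq
      exact two_case h2K g b1 b2 E E' A V Z hZ hb1 hb2 hE hE' hA hV hAV
    · have hq4 : 4 ≤ q := by
        have : k ≠ 1 := by rintro rfl; exact hq (by simpa using hqp)
        rw [hqp]
        calc 4 = 2 ^ 2 := by norm_num
          _ ≤ 2 ^ k := Nat.pow_le_pow_right (by norm_num) (by omega)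
      have hqK : (q : K) = 0 := by
        rw [hqp]; push_cast; rw [h2K, zero_pow hk]
      exact even_case hq4 hqK h2K g b1 b2 E E' _ Z φ φ0 κ hZ hb1 hb2 hE hE' rfl hN hT
  · exact odd_case p k hqp hk hp2 g b1 b2 E E' _ Z φ φ0 κ hZ hb1 hb2 hE hE' rfl hN hT

end notdvd

section exx

lemma mem_of_pow {F L : Type*} [Field F] [Field L] [Finite F] (i : F →+* L) (a : L)
    (ha : a ^ Nat.card F = a) : ∃ x, i x = a := by
  classical
  haveI := Fintype.ofFinite F
  rw [Nat.card_eq_fintype_card] at ha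
  have hc := Fintype.one_lt_card (α := F)
  have hne := FiniteField.X_pow_card_sub_X_ne_zero L hc
  have hsub : Finset.univ.image i ⊆ (X ^ Fintype.card F - X : L[X]).roots.toFinset := by
    intro y hy
    obtain ⟨x, -, rfl⟩ := Finset.mem_image.mp hy
    rw [Multiset.mem_toFinset, mem_roots hne]
    simp only [IsRoot, eval_sub, eval_pow, eval_X]
    rw [← map_pow, FiniteField.pow_card, sub_self]
  have hle : (X ^ Fintype.card F - X : L[X]).roots.toFinset.card ≤ (Finset.univ.image i).card := by
    rw [Finset.card_image_of_injective _ i.injective, Finset.card_univ]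
    refine (Multiset.toFinset_card_le _).trans ((card_roots' _).trans ?_)
    rw [FiniteField.X_pow_card_sub_X_natDegree_eq L hc]
  have heq := Finset.eq_of_subset_of_card_le hsub hle
  have : a ∈ (X ^ Fintype.card F - X : L[X]).roots.toFinset := by
    rw [Multiset.mem_toFinset, mem_roots hne]
    simp [IsRoot, ha]
  rw [← heq] at this
  obtain ⟨x, -, hx⟩ := Finset.mem_image.mp this
  exact ⟨x, hx⟩

variable {K : Type*} [Field K] {q : ℕ} {c e0 e1 e2 e3 e4 : K}

lemma pent {L : Type*} [Field L] (x0 x1 x2 x3 x4 x5 : L) (n0 : x0 ≠ 0) (n1 : x1 ≠ 0)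
    (n2 : x2 ≠ 0) (n3 : x3 ≠ 0)
    (h0 : x0 * x2 = 1 + x1) (h1 : x1 * x3 = 1 + x2) (h2 : x2 * x4 = 1 + x3)
    (h3 : x3 * x5 = 1 + x4) : x1 * x4 = 1 + x0 ∧ x5 = x0 := by
  have a1 : x1 * x4 = 1 + x0 := by
    apply mul_left_cancel₀ n2
    linear_combination x1 * h2 + h1 - h0
  refine ⟨a1, ?_⟩
  apply mul_left_cancel₀ (mul_ne_zero n3 n1)
  linear_combination x1 * h3 + a1 - h0 - x0 * h1

lemma exists_x (p k : ℕ) [Fact p.Prime] [CharP K p] (hqp : q = p ^ k) (hk : k ≠ 0)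
    (hK : Nat.card K = q ^ 5)
    (g : Good q c e0 e1 e2 e3 e4) :
    ∃ x : K, x * x ^ q ^ 2 = 1 + x ^ q ∧
      c + e0 * x + e1 * x ^ q + e2 * x ^ q ^ 2 + e3 * x ^ q ^ 3 + e4 * x ^ q ^ 4 = 0 := by
  by_contra H
  push Not at H
  have hp : p.Prime := Fact.out
  have hq2 : 2 ≤ q := by
    rw [hqp]; exact hp.two_le.trans (Nat.le_self_pow hk p)
  have hq0 : q ≠ 0 := by omega
  haveI : Finite K := Nat.finite_of_card_ne_zero (by rw [hK]; positivity)
  obtain ⟨Z, hZ⟩ : ∃ Z : K[X], Z = X ^ q := ⟨_, rfl⟩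
  obtain ⟨b1, hb1⟩ : ∃ b1 : K[X], b1 = C e0 * X ^ 2 + C c * X + C (e2 + e3) := ⟨_, rfl⟩
  obtain ⟨b2, hb2⟩ : ∃ b2 : K[X], b2 = C e1 * X + C e2 := ⟨_, rfl⟩
  obtain ⟨E, hE⟩ : ∃ E : K[X], E = C e4 * X + C e3 := ⟨_, rfl⟩
  obtain ⟨E', hE'⟩ : ∃ E' : K[X], E' = C e0 * Z + C e4 := ⟨_, rfl⟩
  obtain ⟨A, hA⟩ : ∃ A : K[X], A = b2 * Z ^ 2 + b1 * Z + (1 + X) * E := ⟨_, rfl⟩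
  obtain ⟨V, hV⟩ : ∃ V : K[X], V = (C e2 * Z + C e3) * Z ^ q - E' * X := ⟨_, rfl⟩
  obtain ⟨R, hR⟩ : ∃ R : K[X], R = X * Z ^ q - Z - 1 := ⟨_, rfl⟩
  refine not_dvd p k hqp hk g b1 b2 E E' A V Z hZ hb1 hb2 hE hE' hA hV ?_
  have frob : ∀ a b : K[X], (a + b) ^ q = a ^ q + b ^ q := by
    intro a b; rw [hqp]; exact add_pow_char_pow a b p k
  have hb2q : b2 ^ q = C e2 * Z + C e3 := by
    rw [hb2, frob, mul_pow, ← C_pow, ← C_pow, g.f1, g.f2, hZ]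
  have hEq : E ^ q = E' := by
    rw [hE, frob, mul_pow, ← C_pow, ← C_pow, g.f4, g.f3, hE', hZ]
  have hb1q : b1 ^ q = C e1 * Z ^ 2 + C c * Z + C (e3 + e4) := by
    rw [hb1, frob, frob, mul_pow, mul_pow, ← C_pow, ← C_pow, ← C_pow, g.f0, g.fc]
    have : (e2 + e3) ^ q = e3 + e4 := by
      apply C_injective
      rw [C_pow, C_add, frob, ← C_pow, ← C_pow, g.f2, g.f3, C_add]
    rw [this, hZ]; ring
  have hAq : A ^ q = (C e2 * Z + C e3) * (Z ^ q) ^ 2 + (C e1 * Z ^ 2 + C c * Z + C (e3 + e4)) * Z ^ q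
      + (1 + Z) * E' := by
    rw [hA, frob, frob, mul_pow, mul_pow, mul_pow, frob, one_pow, hb2q, hb1q, hEq, ← hZ]
    ring
  have hRV : R * V = X * A ^ q - A * Z ^ q := by
    rw [hAq, hR, hV, hA, hE', hb1, hb2, hE]
    obtain ⟨U, hU⟩ : ∃ U, U = Z ^ q := ⟨_, rfl⟩
    rw [← hU]
    simp only [C_add]; ring
  have hdiv : A ∣ R * V := by
    rw [hRV]
    exact dvd_sub ((dvd_pow_self A hq0).mul_left _) (dvd_mul_right _ _)
  refine IsCoprime.dvd_of_dvd_mul_left ?_ hdiv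
  rw [isCoprime_iff_aeval_ne_zero_of_isAlgClosed K (AlgebraicClosure K)]
  intro a
  by_contra hcon
  push Not at hcon
  obtain ⟨hAa, hRa⟩ := hcon
  let L := AlgebraicClosure K
  let ι := algebraMap K L
  haveI : CharP L p := charP_of_injective_algebraMap ι.injective p
  have frobL : ∀ a b : L, (a + b) ^ q = a ^ q + b ^ q := by
    intro a b; rw [hqp]; exact add_pow_char_pow a b p k
  have hp2 : (a ^ q) ^ q = a ^ q ^ 2 := by rw [← pow_mul, sq]
  have r0 : a * a ^ q ^ 2 = 1 + a ^ q := by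
    rw [hR, hZ] at hRa
    simp at hRa
    rw [hp2] at hRa
    linear_combination hRa
  have sh : ∀ i j l : ℕ, a ^ q ^ i * a ^ q ^ j = 1 + a ^ q ^ l →
      a ^ q ^ (i + 1) * a ^ q ^ (j + 1) = 1 + a ^ q ^ (l + 1) := by
    intro i j l h
    have := congrArg (· ^ q) h
    simp only [mul_pow, frobL, one_pow, ← pow_mul, ← pow_succ] at this
    exact this
  have r0' : a ^ q ^ 0 * a ^ q ^ 2 = 1 + a ^ q ^ 1 := by simpa using r0
  have r1 := sh _ _ _ r0'
  have r2 := sh _ _ _ r1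
  have r3 := sh _ _ _ r2
  simp only [zero_add, Nat.reduceAdd] at r1 r2 r3
  have ha0 : a ≠ 0 := by
    rintro rfl
    rw [zero_mul, zero_pow hq0] at r0
    simp at r0
  have ha : ∀ i : ℕ, a ^ q ^ i ≠ 0 := fun i => pow_ne_zero _ ha0
  obtain ⟨a1, a2⟩ := pent _ _ _ _ _ _ (ha 0) (ha 1) (ha 2) (ha 3) r0' r1 r2 r3
  simp only [pow_zero, pow_one] at a1 a2 r1
  obtain ⟨x, hx⟩ := mem_of_pow ι a (by rw [hK]; exact a2)
  have hiota : ∀ y : K, algebraMap K (AlgebraicClosure K) y = ι y := fun _ => rfl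
  refine H x ?_ ?_
  · apply ι.injective
    simp only [map_mul, map_pow, map_add, map_one, hx]
    exact r0
  · apply ι.injective
    simp only [map_mul, map_pow, map_add, map_zero, hx]
    rw [hA, hb2, hb1, hE, hZ] at hAa
    simp only [map_add, map_mul, map_pow, aeval_X, aeval_C, map_one, hiota] at hAa
    refine (mul_eq_zero.mp (?_ : a * a ^ q * _ = 0)).resolve_left
      (mul_ne_zero ha0 (pow_ne_zero _ ha0))
    linear_combination hAa + a ^ q * ι e2 * r0 + ι e3 * a * r1 + ι e3 * r0 + ι e4 * a * a1

end exx

section fin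
variable {K : Type*} [Field K] {q : ℕ}

lemma ker_card (hq : 2 ≤ q) (hK : Nat.card K = q ^ 5) (f : K →+ K) (j : ℕ) (hj : j ≤ 5) (P : K[X])
    (hP : P ≠ 0) (hd : P.natDegree ≤ q ^ j) (h : ∀ z, P.eval (f z) = 0) :
    q ^ (5 - j) ≤ Nat.card f.ker := by
  classical
  haveI : Finite K := Nat.finite_of_card_ne_zero (by rw [hK]; positivity)
  have h1 := AddSubgroup.card_mul_index f.ker
  rw [AddSubgroup.index_ker, hK] at h1
  have h2 : Nat.card f.range ≤ q ^ j := by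
    have : (f.range : Set K) ⊆ (P.roots.toFinset : Set K) := by
      rintro _ ⟨z, rfl⟩
      simp [hP, h z]
    have h3 := Nat.card_mono (Finset.finite_toSet _) this
    refine h3.trans ?_
    rw [Nat.card_coe_set_eq, Set.ncard_coe_finset]
    exact (Multiset.toFinset_card_le _).trans ((card_roots' _).trans hd)
  have h4 : q ^ (5 - j) * q ^ j ≤ Nat.card f.ker * q ^ j := by
    rw [← pow_add, Nat.sub_add_cancel hj, ← h1]
    exact Nat.mul_le_mul_left _ h2
  exact Nat.le_of_mul_le_mul_right h4 (by positivity)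

/-- the `q`-linear trinomial as an additive map -/
def tri (frob : ∀ a b : K, (a + b) ^ q = a ^ q + b ^ q) (B a : K) : K →+ K :=
  AddMonoidHom.mk' (fun z => z ^ q ^ 2 + B * z ^ q + a * z) (by
    intro u v
    rw [sq, pow_mul, pow_mul, pow_mul, frob, frob]; ring)

lemma tri_apply (frob : ∀ a b : K, (a + b) ^ q = a ^ q + b ^ q) (B a z : K) :
    tri frob B a z = z ^ q ^ 2 + B * z ^ q + a * z := rfl

lemma det5 (a0 a1 a2 a3 a4 B0 B1 B2 B3 B4 : K) :
    Matrix.det !![a0, B0, 1, 0, 0; 0, a1, B1, 1, 0; 0, 0, a2, B2, 1; 1, 0, 0, a3, B3; B4, 1, 0, 0, a4]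
    = a0 * a1 * a2 * a3 * a4 + 1 + B0 * B1 * B2 * B3 * B4
      - (a1 * B2 * B3 * B4 + a2 * B3 * B4 * B0 + a3 * B4 * B0 * B1 + a4 * B0 * B1 * B2 + a0 * B1 * B2 * B3)
      + (a1 * a3 * B4 + a2 * a4 * B0 + a3 * a0 * B1 + a4 * a1 * B2 + a0 * a2 * B3) := by
  simp [Matrix.det_succ_row_zero, Fin.sum_univ_succ, Fin.succAbove]
  ring

lemma exists_z (hq : 2 ≤ q) (hK : Nat.card K = q ^ 5)
    (frob : ∀ a b : K, (a + b) ^ q = a ^ q + b ^ q)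
    (a0 a1 a2 a3 a4 B0 B1 B2 B3 B4 : K)
    (ha0 : a0 ^ q = a1) (ha1 : a1 ^ q = a2) (ha2 : a2 ^ q = a3) (ha3 : a3 ^ q = a4)
    (hB0 : B0 ^ q = B1) (hB1 : B1 ^ q = B2) (hB2 : B2 ^ q = B3) (hB3 : B3 ^ q = B4)
    (hdet : Matrix.det !![a0, B0, 1, 0, 0; 0, a1, B1, 1, 0; 0, 0, a2, B2, 1; 1, 0, 0, a3, B3;
      B4, 1, 0, 0, a4] = 0) :
    ∃ z : K, z ≠ 0 ∧ z ^ q ^ 2 + B0 * z ^ q + a0 * z = 0 := by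
  classical
  haveI : Finite K := Nat.finite_of_card_ne_zero (by rw [hK]; positivity)
  obtain ⟨l, hl, hlM⟩ := Matrix.exists_vecMul_eq_zero_iff.mpr hdet
  have m0 := congrFun hlM 0
  have m1 := congrFun hlM 1
  have m2 := congrFun hlM 2
  have m3 := congrFun hlM 3
  have m4 := congrFun hlM 4
  simp [Matrix.vecMul, dotProduct, Fin.sum_univ_succ] at m0 m1 m2 m3 m4
  have hpow : ∀ z : K, z ^ q ^ 5 = z := by
    intro z
    haveI := Fintype.ofFinite K
    rw [← hK, Nat.card_eq_fintype_card]; exact FiniteField.pow_card z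
  let P : K[X] := ∑ i : Fin 5, C (l i) * X ^ q ^ (i : ℕ)
  have hinj := Nat.pow_right_injective hq
  have hP : P ≠ 0 := by
    intro h
    apply hl
    funext i
    have := congrArg (fun f => coeff f (q ^ (i : ℕ))) h
    simp only [P, finset_sum_coeff, coeff_C_mul, coeff_X_pow, coeff_zero, hinj.eq_iff, Fin.val_inj] at this
    simpa using this
  have hPd : P.natDegree ≤ q ^ 4 := by
    refine natDegree_sum_le_of_forall_le _ _ ?_
    intro i _
    refine (natDegree_C_mul_X_pow_le _ _).trans (Nat.pow_le_pow_right (by omega) ?_)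
    omega
  have hev : ∀ z, P.eval (tri frob B0 a0 z) = 0 := by
    intro z
    simp only [P, Fin.sum_univ_five, eval_add, eval_mul, eval_C, eval_pow, eval_X]
    obtain ⟨z1, hz1⟩ : ∃ z1, z1 = z ^ q := ⟨_, rfl⟩
    obtain ⟨z2, hz2⟩ : ∃ z2, z2 = z1 ^ q := ⟨_, rfl⟩
    obtain ⟨z3, hz3⟩ : ∃ z3, z3 = z2 ^ q := ⟨_, rfl⟩
    obtain ⟨z4, hz4⟩ : ∃ z4, z4 = z3 ^ q := ⟨_, rfl⟩
    have hz5 : z4 ^ q = z := by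
      rw [hz4, hz3, hz2, hz1, ← pow_mul, ← pow_mul, ← pow_mul, ← pow_mul]
      convert hpow z using 2; ring
    have t0 : tri frob B0 a0 z = z2 + B0 * z1 + a0 * z := by
      rw [tri_apply, hz2, hz1, ← pow_mul, sq]
    have st : ∀ u v w : K, (u + v + w) ^ q = u ^ q + v ^ q + w ^ q := by
      intro u v w; rw [frob, frob]
    have p2 : ∀ u : K, u ^ q ^ 2 = (u ^ q) ^ q := by intro u; rw [← pow_mul]; congr 1; ring
    have p3 : ∀ u : K, u ^ q ^ 3 = ((u ^ q) ^ q) ^ q := by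
      intro u; rw [← pow_mul, ← pow_mul]; congr 1; ring
    have p4 : ∀ u : K, u ^ q ^ 4 = (((u ^ q) ^ q) ^ q) ^ q := by
      intro u; rw [← pow_mul, ← pow_mul, ← pow_mul]; congr 1; ring
    simp only [Fin.val_zero, Fin.val_one, Fin.val_two, pow_zero, pow_one,
      show ((3 : Fin 5) : ℕ) = 3 from rfl, show ((4 : Fin 5) : ℕ) = 4 from rfl, p2, p3, p4]
    have t1 : (tri frob B0 a0 z) ^ q = z3 + B1 * z2 + a1 * z1 := by
      rw [t0, st, mul_pow, mul_pow, hB0, ha0, ← hz1, ← hz2, ← hz3]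
    have t2 : (z3 + B1 * z2 + a1 * z1) ^ q = z4 + B2 * z3 + a2 * z2 := by
      rw [st, mul_pow, mul_pow, hB1, ha1, ← hz2, ← hz3, ← hz4]
    have t3 : (z4 + B2 * z3 + a2 * z2) ^ q = z + B3 * z4 + a3 * z3 := by
      rw [st, mul_pow, mul_pow, hB2, ha2, hz5, ← hz3, ← hz4]
    have t4 : (z + B3 * z4 + a3 * z3) ^ q = z1 + B4 * z + a4 * z4 := by
      rw [st, mul_pow, mul_pow, hB3, ha3, hz5, ← hz1, ← hz4]
    rw [t1, t2, t3, t4, t0]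
    linear_combination z * m0 + z1 * m1 + z2 * m2 + z3 * m3 + z4 * m4
  have hc := ker_card hq hK (tri frob B0 a0) 4 (by norm_num) P hP hPd hev
  have hnt : Nontrivial (tri frob B0 a0).ker := by
    rw [← Finite.one_lt_card_iff_nontrivial]
    norm_num only at hc; rw [pow_one] at hc; omega
  obtain ⟨⟨z, hz⟩, hne⟩ := exists_ne (0 : (tri frob B0 a0).ker)
  exact ⟨z, fun h => hne (by simp [h]), hz⟩

lemma y_alg (c ε0 ε1 ε2 ε3 ε4 x0 x1 x2 x3 x4 : K)
    (n0 : x0 ≠ 0) (n1 : x1 ≠ 0) (n2 : x2 ≠ 0) (n3 : x3 ≠ 0) (n4 : x4 ≠ 0)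
    (h0 : x4 * x1 = 1 + x0) (h1 : x0 * x2 = 1 + x1) (h2 : x1 * x3 = 1 + x2)
    (h3 : x2 * x4 = 1 + x3) (h4 : x3 * x0 = 1 + x4)
    (hs : 3 * c - 2 * (ε0 + ε1 + ε2 + ε3 + ε4) + (c - (ε0 + ε1 + ε4)) * x0
      + (c - (ε1 + ε2 + ε0)) * x1 + (c - (ε2 + ε3 + ε1)) * x2 + (c - (ε3 + ε4 + ε2)) * x3
      + (c - (ε4 + ε0 + ε3)) * x4 = 0)
    (y0 y1 y2 y3 y4 : K) (hy0 : y0 = -x0 / (1 + x0)) (hy1 : y1 = -x1 / (1 + x1))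
    (hy2 : y2 = -x2 / (1 + x2)) (hy3 : y3 = -x3 / (1 + x3)) (hy4 : y4 = -x4 / (1 + x4)) :
    y0 * y1 = 1 + y3 ∧ y1 * y2 = 1 + y4 ∧ y2 * y3 = 1 + y0 ∧ y3 * y4 = 1 + y1 ∧ y4 * y0 = 1 + y2 ∧
    c + ε0 * y0 + ε1 * y1 + ε2 * y2 + ε3 * y3 + ε4 * y4 = 0 := by
  rw [← h0] at hy0
  rw [← h1] at hy1
  rw [← h2] at hy2
  rw [← h3] at hy3
  rw [← h4] at hy4
  have gen : ∀ x0 x1 x2 x3 x4 : K, x0 ≠ 0 → x1 ≠ 0 → x2 ≠ 0 → x3 ≠ 0 → x4 ≠ 0 →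
      x2 * x4 = 1 + x3 →
      -x0 / (x4 * x1) * (-x1 / (x0 * x2)) = 1 + -x3 / (x2 * x4) := by
    intro x0 x1 x2 x3 x4 n0 n1 n2 n3 n4 h
    field_simp
    linear_combination -h
  have hS : x0 * x1 * x2 * x3 * x4 = 3 + (x0 + x1 + x2 + x3 + x4) := by
    linear_combination x1 * x3 * x4 * h1 + x4 * (1 + x1) * h2 + h0 * (1 + x2) + h3 + h1
  have hSn : x0 * x1 * x2 * x3 * x4 ≠ 0 := by
    simp [n0, n1, n2, n3, n4]
  have gy : ∀ x0 x1 x2 x3 x4 : K, x0 ≠ 0 → x1 ≠ 0 → x2 ≠ 0 → x3 ≠ 0 → x4 ≠ 0 →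
      x4 * x1 = 1 + x0 → x0 * x2 = 1 + x1 → x3 * x0 = 1 + x4 →
      (x0 * x1 * x2 * x3 * x4) * (-x0 / (x4 * x1)) = -(2 + x0 + x1 + x4) := by
    intro x0 x1 x2 x3 x4 n0 n1 n2 n3 n4 h0 h1 h2
    field_simp
    linear_combination -(h1 * x0 * x3 + (1 + x1) * h2 + h0)
  refine ⟨?_, ?_, ?_, ?_, ?_, ?_⟩
  · rw [hy0, hy1, hy3]; exact gen x0 x1 x2 x3 x4 n0 n1 n2 n3 n4 h3
  · rw [hy1, hy2, hy4]; exact gen x1 x2 x3 x4 x0 n1 n2 n3 n4 n0 h4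
  · rw [hy2, hy3, hy0]; exact gen x2 x3 x4 x0 x1 n2 n3 n4 n0 n1 h0
  · rw [hy3, hy4, hy1]; exact gen x3 x4 x0 x1 x2 n3 n4 n0 n1 n2 h1
  · rw [hy4, hy0, hy2]; exact gen x4 x0 x1 x2 x3 n4 n0 n1 n2 n3 h2
  · apply mul_left_cancel₀ hSn
    have g0 := gy x0 x1 x2 x3 x4 n0 n1 n2 n3 n4 h0 h1 h4
    have g1 := gy x1 x2 x3 x4 x0 n1 n2 n3 n4 n0 h1 h2 h0
    have g2 := gy x2 x3 x4 x0 x1 n2 n3 n4 n0 n1 h2 h3 h1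
    have g3 := gy x3 x4 x0 x1 x2 n3 n4 n0 n1 n2 h3 h4 h2
    have g4 := gy x4 x0 x1 x2 x3 n4 n0 n1 n2 n3 h4 h0 h3
    rw [← hy0] at g0
    rw [← hy1] at g1
    rw [← hy2] at g2
    rw [← hy3] at g3
    rw [← hy4] at g4
    linear_combination hs + c * hS + ε0 * g0 + ε1 * g1 + ε2 * g2 + ε3 * g3 + ε4 * g4

lemma det_zero (N d0 d1 d2 d3 d4 b0 b1 b2 b3 b4 y0 y1 y2 y3 y4 : K)
    (h01 : y0 * y1 = 1 + y3) (h12 : y1 * y2 = 1 + y4) (h23 : y2 * y3 = 1 + y0)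
    (h34 : y3 * y4 = 1 + y1) (h40 : y4 * y0 = 1 + y2)
    (hb : b0 * b1 * b2 * b3 * b4 ≠ 0)
    (hN : N = (d0 * b0 * b4) * (d1 * b1 * b0) * (d2 * b2 * b1) * (d3 * b3 * b2) * (d4 * b4 * b3))
    (h : (N + 1) / (b0 * b1 * b2 * b3 * b4) + 3 - (d0 + d1 + d2 + d3 + d4)
      + (1 - d2) * (1 - d4) * y0 + (1 - d3) * (1 - d0) * y1 + (1 - d4) * (1 - d1) * y2
      + (1 - d0) * (1 - d2) * y3 + (1 - d1) * (1 - d3) * y4 = 0) :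
    Matrix.det !![d0 * b0 * b4, b0 * y0, 1, 0, 0; 0, d1 * b1 * b0, b1 * y1, 1, 0;
      0, 0, d2 * b2 * b1, b2 * y2, 1; 1, 0, 0, d3 * b3 * b2, b3 * y3;
      b4 * y4, 1, 0, 0, d4 * b4 * b3] = 0 := by
  rw [det5]
  obtain ⟨B, hB⟩ : ∃ B, B = b0 * b1 * b2 * b3 * b4 := ⟨_, rfl⟩
  rw [← hB] at h hb
  obtain ⟨M, hM⟩ : ∃ M, M = (N + 1) / B := ⟨_, rfl⟩
  have hM' : B * M = N + 1 := by rw [hM]; field_simp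
  rw [← hM] at h
  have k0 : y2 * y3 * y4 = 1 + y2 + y4 := by linear_combination y4 * h23 + h40
  have k1 : y3 * y4 * y0 = 1 + y3 + y0 := by linear_combination y0 * h34 + h01
  have k2 : y4 * y0 * y1 = 1 + y4 + y1 := by linear_combination y1 * h40 + h12
  have k3 : y0 * y1 * y2 = 1 + y0 + y2 := by linear_combination y2 * h01 + h23
  have k4 : y1 * y2 * y3 = 1 + y1 + y3 := by linear_combination y3 * h12 + h34
  have kN : y0 * y1 * y2 * y3 * y4 = 3 + (y0 + y1 + y2 + y3 + y4) := by
    linear_combination y0 * y1 * k0 + h01 + y0 * h12 + y1 * h40 + h12 + h40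
  have hBe : ∀ t, B * t = b0 * b1 * b2 * b3 * b4 * t := by intro t; rw [hB]
  have key : (d0 * b0 * b4) * (d1 * b1 * b0) * (d2 * b2 * b1) * (d3 * b3 * b2) * (d4 * b4 * b3) + 1
     + B * (y0 * y1 * y2 * y3 * y4 - (d1 * (y2 * y3 * y4) + d2 * (y3 * y4 * y0) + d3 * (y4 * y0 * y1)
      + d4 * (y0 * y1 * y2) + d0 * (y1 * y2 * y3)) + (d1 * d3 * y4 + d2 * d4 * y0 + d3 * d0 * y1
      + d4 * d1 * y2 + d0 * d2 * y3)) = 0 := by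
    rw [← hN, kN, k0, k1, k2, k3, k4]
    linear_combination B * h - hM'
  rw [hBe] at key
  linear_combination key

end fin
end Scat

open Polynomial in
theorem stmt_6 (q : ℕ) (hq : ∃ p n : ℕ, Nat.Prime p ∧ 0 < n ∧ q = p ^ n)
    (K : Type*) [Field K] (F : Subfield K)
    (hFcard : Nat.card F = q) (hKcard : Nat.card K = q ^ 5)
    (α β : K) (hβ : β ≠ 0) (h : α ^ q / β ^ (q + 1) ∉ F) :
    ¬ IsMaxScattered q F α β := by
  obtain ⟨p, k, hp, hk, hqp⟩ := hq
  rintro ⟨-, hsc⟩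
  haveI : Fact p.Prime := ⟨hp⟩
  have hq2 : 2 ≤ q := by
    rw [hqp]; exact hp.two_le.trans (Nat.le_self_pow hk.ne' p)
  have hq0 : q ≠ 0 := by omega
  haveI : Finite K := Nat.finite_of_card_ne_zero (by rw [hKcard]; positivity)
  haveI := Fintype.ofFinite K
  haveI : CharP K p := charP_of_card_eq_prime_pow (f := k * 5) (by
    rw [← Nat.card_eq_fintype_card, hKcard, hqp, ← pow_mul])
  have frob : ∀ a b : K, (a + b) ^ q = a ^ q + b ^ q := by
    intro a b; rw [hqp]; exact add_pow_char_pow a b p k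
  have frobs : ∀ a b : K, (a - b) ^ q = a ^ q - b ^ q := by
    intro a b
    have := frob (a - b) b
    rw [sub_add_cancel] at this
    rw [this]; ring
  have frobn : ∀ a : K, (-a) ^ q = -(a ^ q) := by
    intro a
    have := frobs 0 a
    rw [zero_pow hq0] at this
    simpa using this
  have hpow : ∀ z : K, z ^ q ^ 5 = z := by
    intro z
    rw [← hKcard, Nat.card_eq_fintype_card]; exact FiniteField.pow_card z
  have orbit : ∀ z : K, ∃ z1 z2 z3 z4 : K, z ^ q = z1 ∧ z1 ^ q = z2 ∧ z2 ^ q = z3 ∧ z3 ^ q = z4 ∧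
      z4 ^ q = z ∧ z ^ q ^ 2 = z2 ∧ z ^ q ^ 3 = z3 ∧ z ^ q ^ 4 = z4 := by
    intro z
    refine ⟨_, _, _, _, rfl, rfl, rfl, rfl, ?_, ?_, ?_, ?_⟩ <;> simp only [← pow_mul]
    · convert hpow z using 2; ring
    all_goals (congr 1; ring)
  obtain ⟨b1, b2, b3, b4, hb0, hb1, hb2, hb3, hb4, -, -, -⟩ := orbit β
  have nb1 : b1 ≠ 0 := by rw [← hb0]; exact pow_ne_zero _ hβ
  have nb2 : b2 ≠ 0 := by rw [← hb1]; exact pow_ne_zero _ nb1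
  have nb3 : b3 ≠ 0 := by rw [← hb2]; exact pow_ne_zero _ nb2
  have nb4 : b4 ≠ 0 := by rw [← hb3]; exact pow_ne_zero _ nb3
  obtain ⟨d0, hd⟩ : ∃ d, d = α / (β * b4) := ⟨_, rfl⟩
  have hα : α = d0 * β * b4 := by rw [hd]; field_simp
  obtain ⟨d1, d2, d3, d4, hd0, hd1, hd2, hd3, hd4, -, -, -⟩ := orbit d0
  have hγ : α ^ q / β ^ (q + 1) = d1 := by
    rw [← hd0, hd, div_pow, mul_pow, hb4, pow_succ]
  rw [hγ] at h
  haveI : Finite F := Nat.finite_of_card_ne_zero (by rw [hFcard]; exact hq0)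
  have hdne : d0 ≠ d1 := by
    intro he
    apply h
    obtain ⟨x, hx⟩ := Scat.mem_of_pow F.subtype d1 (by rw [hFcard, ← he, hd0, he])
    rw [← hx]; exact x.2
  have gη : Scat.Good q (0 : K) (1 - d0) (1 - d1) (1 - d2) (1 - d3) (1 - d4) := by
    refine ⟨?_, ?_, ?_, ?_, ?_, zero_pow hq0, ?_⟩
    · rw [frobs, one_pow, hd0]
    · rw [frobs, one_pow, hd1]
    · rw [frobs, one_pow, hd2]
    · rw [frobs, one_pow, hd3]
    · rw [frobs, one_pow, hd4]
    · intro he; exact hdne (by linear_combination -he)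
  obtain ⟨N, hN⟩ : ∃ N, N = (d0 * β * b4) * (d1 * b1 * β) * (d2 * b2 * b1) * (d3 * b3 * b2) *
    (d4 * b4 * b3) := ⟨_, rfl⟩
  obtain ⟨c, hc⟩ : ∃ c, c = (N + 1) / (β * b1 * b2 * b3 * b4) + 3 - (d0 + d1 + d2 + d3 + d4) := ⟨_, rfl⟩
  have hNq : N ^ q = N := by
    rw [hN]; simp only [mul_pow, hd0, hd1, hd2, hd3, hd4, hb0, hb1, hb2, hb3, hb4]; ring
  have h3q : (3 : K) ^ q = 3 := by
    rw [show (3 : K) = 1 + 1 + 1 by norm_num, frob, frob, one_pow]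
  have hcq : c ^ q = c := by
    rw [hc]
    simp only [frob, frobs, div_pow, mul_pow, hNq, one_pow, h3q, hd0, hd1, hd2, hd3, hd4, hb0, hb1,
      hb2, hb3, hb4]
    congr 1
    · congr 2; ring
    · ring
  obtain ⟨ε0, hε0⟩ : ∃ ε, ε = (1 - d2) * (1 - d4) := ⟨_, rfl⟩
  obtain ⟨ε1, hε1⟩ : ∃ ε, ε = (1 - d3) * (1 - d0) := ⟨_, rfl⟩
  obtain ⟨ε2, hε2⟩ : ∃ ε, ε = (1 - d4) * (1 - d1) := ⟨_, rfl⟩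
  obtain ⟨ε3, hε3⟩ : ∃ ε, ε = (1 - d0) * (1 - d2) := ⟨_, rfl⟩
  obtain ⟨ε4, hε4⟩ : ∃ ε, ε = (1 - d1) * (1 - d3) := ⟨_, rfl⟩
  have gε : Scat.Good q c ε0 ε1 ε2 ε3 ε4 := by
    refine ⟨?_, ?_, ?_, ?_, ?_, hcq, ?_⟩
    · rw [hε0, hε1, mul_pow, gη.f2, gη.f4]
    · rw [hε1, hε2, mul_pow, gη.f3, gη.f0]
    · rw [hε2, hε3, mul_pow, gη.f4, gη.f1]
    · rw [hε3, hε4, mul_pow, gη.f0, gη.f2]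
    · rw [hε4, hε0, mul_pow, gη.f1, gη.f3]
    · rw [hε0, hε1]; exact (gη.n6 hq0).symm
  have gs : Scat.Good q (3 * c - 2 * (ε0 + ε1 + ε2 + ε3 + ε4)) (c - (ε0 + ε1 + ε4))
      (c - (ε1 + ε2 + ε0)) (c - (ε2 + ε3 + ε1)) (c - (ε3 + ε4 + ε2)) (c - (ε4 + ε0 + ε3)) := by
    have h2q : (2 : K) ^ q = 2 := by
      rw [show (2 : K) = 1 + 1 by norm_num, frob, one_pow]
    refine ⟨?_, ?_, ?_, ?_, ?_, ?_, ?_⟩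
    all_goals try simp only [frob, frobs, mul_pow, gε.f0, gε.f1, gε.f2, gε.f3, gε.f4, gε.fc, h3q, h2q]
    · ring
    · intro he
      have e42 : ε4 = ε2 := by linear_combination -he
      have e03 : ε0 = ε3 := by rw [← gε.f4, e42, gε.f2]
      have e14 : ε1 = ε4 := by rw [← gε.f0, e03, gε.f3]
      have e20 : ε2 = ε0 := by rw [← gε.f1, e14, gε.f4]
      exact gε.rot.rot.rot.rot.ne (e42.trans e20)
  obtain ⟨x, hx, hxs⟩ := Scat.exists_x p k hqp hk.ne' hKcard gs
  obtain ⟨x1, x2, x3, x4, hx0, hx1, hx2, hx3, hx4, t2, t3, t4⟩ := orbit x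
  rw [hx0, t2, t3, t4] at hxs
  rw [hx0, t2] at hx
  have nx : x ≠ 0 := by
    rintro rfl
    rw [zero_pow hq0] at hx0
    rw [← hx0] at hx
    simp at hx
  have nx1 : x1 ≠ 0 := by rw [← hx0]; exact pow_ne_zero _ nx
  have nx2 : x2 ≠ 0 := by rw [← hx1]; exact pow_ne_zero _ nx1
  have nx3 : x3 ≠ 0 := by rw [← hx2]; exact pow_ne_zero _ nx2
  have nx4 : x4 ≠ 0 := by rw [← hx3]; exact pow_ne_zero _ nx3
  have r2 : x1 * x3 = 1 + x2 := by
    rw [← hx0, ← hx2, ← mul_pow, hx, frob, one_pow, hx1]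
  have r3 : x2 * x4 = 1 + x3 := by
    rw [← hx1, ← hx3, ← mul_pow, r2, frob, one_pow, hx2]
  have r4 : x3 * x = 1 + x4 := by
    rw [← hx2, ← hx4, ← mul_pow, r3, frob, one_pow, hx3]
  have r0 : x4 * x1 = 1 + x := by
    rw [← hx3, ← hx0, ← mul_pow, r4, frob, one_pow, hx4]
  obtain ⟨y0, hy0⟩ : ∃ y, y = -x / (1 + x) := ⟨_, rfl⟩
  obtain ⟨y1, hy1⟩ : ∃ y, y = -x1 / (1 + x1) := ⟨_, rfl⟩
  obtain ⟨y2, hy2⟩ : ∃ y, y = -x2 / (1 + x2) := ⟨_, rfl⟩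
  obtain ⟨y3, hy3⟩ : ∃ y, y = -x3 / (1 + x3) := ⟨_, rfl⟩
  obtain ⟨y4, hy4⟩ : ∃ y, y = -x4 / (1 + x4) := ⟨_, rfl⟩
  have fy0 : y0 ^ q = y1 := by rw [hy0, hy1, div_pow, frobn, frob, one_pow, hx0]
  have fy1 : y1 ^ q = y2 := by rw [hy1, hy2, div_pow, frobn, frob, one_pow, hx1]
  have fy2 : y2 ^ q = y3 := by rw [hy2, hy3, div_pow, frobn, frob, one_pow, hx2]
  have fy3 : y3 ^ q = y4 := by rw [hy3, hy4, div_pow, frobn, frob, one_pow, hx3]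
  obtain ⟨k01, k12, k23, k34, k40, hcy⟩ := Scat.y_alg c ε0 ε1 ε2 ε3 ε4 x x1 x2 x3 x4 nx nx1 nx2 nx3 nx4
    r0 hx r2 r3 r4 hxs y0 y1 y2 y3 y4 hy0 hy1 hy2 hy3 hy4
  rw [hc, hε0, hε1, hε2, hε3, hε4] at hcy
  have hdet := Scat.det_zero N d0 d1 d2 d3 d4 β b1 b2 b3 b4 y0 y1 y2 y3 y4 k01 k12 k23 k34 k40
    (by simp [hβ, nb1, nb2, nb3, nb4]) hN hcy
  obtain ⟨z, nz, hz⟩ := Scat.exists_z hq2 hKcard frob _ _ _ _ _ _ _ _ _ _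
    (by simp only [mul_pow, hd0, hb0, hb4]) (by simp only [mul_pow, hd1, hb1, hb0])
    (by simp only [mul_pow, hd2, hb2, hb1]) (by simp only [mul_pow, hd3, hb3, hb2])
    (by simp only [mul_pow, fy0, hb0]) (by simp only [mul_pow, fy1, hb1])
    (by simp only [mul_pow, fy2, hb2]) (by simp only [mul_pow, fy3, hb3]) hdet
  rw [← hα] at hz
  -- kernel of f
  have hker : q ^ (5 - 3) ≤ Nat.card (Scat.tri frob y0 1).ker := by
    refine Scat.ker_card hq2 hKcard _ 3 (by norm_num)
      (X ^ q ^ 3 + (-C y3 * X ^ q ^ 2 + C y0 * X ^ q - X)) ?_ ?_ ?_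
    · have hlt : (-C y3 * X ^ q ^ 2 + C y0 * X ^ q - X : K[X]).degree < ((q ^ 3 : ℕ) : WithBot ℕ) := by
        refine lt_of_le_of_lt (b := ((q ^ 2 : ℕ) : WithBot ℕ)) ?_ ?_
        · rw [← C_neg]
          have u1 : q ≤ q ^ 2 := Nat.le_self_pow (by norm_num) q
          refine (degree_sub_le _ _).trans (max_le ((degree_add_le _ _).trans (max_le ?_ ?_)) ?_)
          · exact degree_C_mul_X_pow_le _ _
          · exact (degree_C_mul_X_pow_le _ _).trans (by exact_mod_cast u1)
          · rw [degree_X]; exact_mod_cast (by omega : 1 ≤ q ^ 2)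
        · exact_mod_cast Nat.pow_lt_pow_right (by omega) (by norm_num)
      exact (monic_X_pow_add hlt).ne_zero
    · have u1 : q ≤ q ^ 3 := Nat.le_self_pow (by norm_num) q
      have u2 : q ^ 2 ≤ q ^ 3 := Nat.pow_le_pow_right (by omega) (by norm_num)
      rw [← C_neg]
      refine natDegree_add_le_of_degree_le (by simp) ((natDegree_sub_le _ _).trans (max_le
        (natDegree_add_le_of_degree_le ?_ ?_) ?_))
      · exact (natDegree_C_mul_X_pow_le _ _).trans u2
      · exact (natDegree_C_mul_X_pow_le _ _).trans u1
      · rw [natDegree_X]; omega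
    · intro w
      obtain ⟨w1, w2, w3, w4, hw0, hw1, hw2, hw3, hw4, s2, s3, s4⟩ := orbit w
      rw [Scat.tri_apply, s2, hw0]
      simp only [eval_add, eval_sub, eval_mul, eval_neg, eval_C, eval_pow, eval_X]
      have v1 : (w2 + y0 * w1 + 1 * w) ^ q = w3 + y1 * w2 + w1 := by
        rw [frob, frob, mul_pow, one_mul, fy0, hw0, hw1, hw2]
      have v2 : (w3 + y1 * w2 + w1) ^ q = w4 + y2 * w3 + w2 := by
        rw [frob, frob, mul_pow, fy1, hw1, hw2, hw3]
      have v3 : (w4 + y2 * w3 + w2) ^ q = w + y3 * w4 + w3 := by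
        rw [frob, frob, mul_pow, fy2, hw2, hw3, hw4]
      have p2 : ∀ u : K, u ^ q ^ 2 = (u ^ q) ^ q := by intro u; rw [← pow_mul]; congr 1; ring
      have p3 : ∀ u : K, u ^ q ^ 3 = ((u ^ q) ^ q) ^ q := by
        intro u; rw [← pow_mul, ← pow_mul]; congr 1; ring
      rw [p2, p3, v1, v2, v3]
      linear_combination w2 * k01 - w3 * k23
  norm_num only at hker
  have hkerm : ∀ w, w ∈ (Scat.tri frob y0 1).ker → w ^ q ^ 2 + y0 * w ^ q + w = 0 := by
    intro w hw
    have : Scat.tri frob y0 1 w = 0 := hw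
    rw [Scat.tri_apply, one_mul] at this
    exact this
  obtain ⟨u, nu, hu, v, nv, hv, huv⟩ : ∃ u : K, u ≠ 0 ∧ u ∈ (Scat.tri frob y0 1).ker ∧ ∃ v : K, v ≠ 0 ∧
      v ∈ (Scat.tri frob y0 1).ker ∧ v / u ∉ F := by
    have hqq : q < q ^ 2 := by nlinarith
    have hnt : Nontrivial (Scat.tri frob y0 1).ker := by
      rw [← Finite.one_lt_card_iff_nontrivial]; omega
    obtain ⟨⟨u, hu⟩, hne⟩ := exists_ne (0 : (Scat.tri frob y0 1).ker)
    have nu : u ≠ 0 := fun h => hne (by simp [h])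
    refine ⟨u, nu, hu, ?_⟩
    by_contra hcon
    push Not at hcon
    have hall : ∀ v ∈ (Scat.tri frob y0 1).ker, v / u ∈ F := by
      intro v hv
      by_cases h0 : v = 0
      · rw [h0, zero_div]; exact F.zero_mem
      · exact hcon v h0 hv
    have := Nat.card_le_card_of_injective
      (fun v : (Scat.tri frob y0 1).ker => (⟨v.1 / u, hall v.1 v.2⟩ : F)) (by
        intro v w hvw
        have := congrArg Subtype.val hvw
        simp only at this
        field_simp at this
        exact Subtype.ext this)
    omega
  have rel : ∀ w : K, w ^ q ^ 2 + y0 * w ^ q + w = 0 →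
      (Tmap q α β (w / z)).1 = -(y0 * z ^ q / z) * (Tmap q α β (w / z)).2 := by
    intro w hw
    have nz1 : z ^ q ≠ 0 := pow_ne_zero _ nz
    have nz2 : z ^ q ^ 2 ≠ 0 := pow_ne_zero _ nz
    simp only [Tmap, div_pow]
    field_simp
    generalize z ^ q ^ 2 = Z2 at *
    generalize z ^ q = Z1 at *
    generalize w ^ q ^ 2 = W2 at *
    generalize w ^ q = W1 at *
    linear_combination Z2 * hw - W2 * hz
  have ru := rel u (hkerm u hu)
  have rv := rel v (hkerm v hv)
  have hfin := hsc (u / z) (v / z) (div_ne_zero nu nz) (div_ne_zero nv nz) (by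
    intro hli
    have hne := hli.ne_zero 0
    rw [LinearIndependent.pair_iff] at hli
    generalize Tmap q α β (u / z) = U at *
    generalize Tmap q α β (v / z) = W at *
    obtain ⟨-, h2⟩ := hli W.2 (-U.2) (by
      ext
      · simp only [Prod.fst_add, Prod.smul_fst, smul_eq_mul, Prod.fst_zero]
        rw [ru, rv]; ring
      · simp only [Prod.snd_add, Prod.smul_snd, smul_eq_mul, Prod.snd_zero]; ring)
    have h3 : U.2 = 0 := by simpa using h2
    apply hne
    simp only [Matrix.cons_val_zero]
    ext
    · rw [ru, h3]; simp
    · rw [h3]; simp)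
  apply huv
  have : v / z / (u / z) = v / u := by field_simp
  rwa [this] at hfin
end

section
/- Let α, β ∈ K with αβ ≠ 0 and α^q ≠ β^{q+1}. Then L_{α,β} is equivalent to the Sheekey linear set L_2^η for some η ∈ K if and only if α^{q^4} β^{q^2+q+1} − α^{q^4+q^2} β − α^{q^4+q} β^{q^2} + N(α) − β^q α^{q^3+1} + 1 = 0. -/
/-- `L_{α,β}` is equivalent to the linear set `L_s^η`: some field automorphism `τ` of `K`
together with an invertible `K`-linear map of `K²` carries the underlying `F`-subspace
`{(x^τ − α^τ x^{q²τ}, x^{qτ} − β^τ x^{q²τ})}` onto `U_s^η = {(z, η z^{q^s} + z^{q^{5−s}})}`. -/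
def IsEquivToL (q : ℕ) {K : Type*} [Field K] (α β η : K) (s : ℕ) : Prop :=
  ∃ τ : K ≃+* K, ∃ M : (K × K) ≃ₗ[K] K × K,
    (fun p => M p) '' {p : K × K | ∃ x : K,
        p = (τ x - τ α * (τ x) ^ q ^ 2, (τ x) ^ q - τ β * (τ x) ^ q ^ 2)} =
      {p : K × K | ∃ z : K, p = (z, η * z ^ q ^ s + z ^ q ^ (5 - s))}

/-- algebraic core of the backward direction: the parameter `t`. -/
theorem aux_exists_t {K : Type*} [Field K] (σ : K →+* K) (h5 : ∀ x, σ (σ (σ (σ (σ x)))) = x)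
    (a b : K) (ha : a ≠ 0) (hb : b ≠ 0) (hne : σ a ≠ b * σ b)
    (hC : σ (σ (σ (σ a))) * (b * σ b * σ (σ b)) - σ (σ (σ (σ a))) * σ (σ a) * b
      - σ (σ (σ (σ a))) * σ a * σ (σ b)
      + a * σ a * σ (σ a) * σ (σ (σ a)) * σ (σ (σ (σ a))) - σ b * (σ (σ (σ a)) * a) + 1 = 0) :
    ∃ t : K, t ≠ 0 ∧ a = σ (σ t) * σ (σ (σ t)) * σ (σ (σ (σ t))) ∧
      (t * a + b) * σ t = -1 := by
  have hb1 : σ b ≠ 0 := by simpa using hb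
  have hb2 : σ (σ b) ≠ 0 := by simpa using hb
  have hb3 : σ (σ (σ b)) ≠ 0 := by simpa using hb
  have hb4 : σ (σ (σ (σ b))) ≠ 0 := by simpa using hb
  obtain ⟨s, hs⟩ : ∃ s, s = σ a / (b * σ b) := ⟨_, rfl⟩
  have e1 : σ a = s * b * σ b := by rw [hs]; field_simp
  have e2 : σ (σ a) = σ s * σ b * σ (σ b) := by rw [e1]; simp
  have e3 : σ (σ (σ a)) = σ (σ s) * σ (σ b) * σ (σ (σ b)) := by rw [e2]; simp
  have e4 : σ (σ (σ (σ a))) = σ (σ (σ s)) * σ (σ (σ b)) * σ (σ (σ (σ b))) := by rw [e3]; simp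
  have e0 : a = σ (σ (σ (σ s))) * σ (σ (σ (σ b))) * b := by
    have := congrArg σ e4
    rw [h5] at this
    rw [this]; simp [h5]
  have hs1 : s ≠ 1 := by
    rintro rfl; apply hne; rw [e1]; ring
  have hs0 : s ≠ 0 := by
    rintro rfl
    have : σ a = 0 := by rw [e1]; ring
    exact ha (by simpa using this)
  have hC1 := congrArg σ hC
  simp only [map_add, map_sub, map_mul, map_one, map_zero, h5] at hC1
  have hss : σ s = s := by
    rw [e4, e3, e2, e1, e0] at hC hC1
    have key : (b * σ b * σ (σ b) * σ (σ (σ b)) * σ (σ (σ (σ b)))) *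
        ((σ (σ (σ s)) - σ (σ (σ (σ s)))) * (1 - σ s)) = 0 := by
      linear_combination hC - hC1
    have hB : b * σ b * σ (σ b) * σ (σ (σ b)) * σ (σ (σ (σ b))) ≠ 0 := by
      simp [hb]
    have h1 : (1 : K) - σ s ≠ 0 := by
      intro h
      apply hs1
      apply σ.injective
      rw [map_one]
      exact (sub_eq_zero.mp h).symm
    have h3 : σ (σ (σ s)) - σ (σ (σ (σ s))) = 0 := by
      rcases mul_eq_zero.mp key with h | h
      · exact absurd h hB
      · exact (mul_eq_zero.mp h).resolve_right h1
    have h4 := sub_eq_zero.mp h3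
    exact (σ.injective (σ.injective (σ.injective h4))).symm
  simp only [hss] at e0 e1 e2 e3 e4
  obtain ⟨B, hB⟩ : ∃ B, B = b * σ b * σ (σ b) * σ (σ (σ b)) * σ (σ (σ (σ b))) := ⟨_, rfl⟩
  have hB0 : B ≠ 0 := by rw [hB]; simp [hb]
  have hσB : σ B = B := by rw [hB]; simp only [map_mul, h5]; ring
  rw [e4, e3, e2, e1, e0] at hC
  have hCB : B * (s - 3 * s ^ 2) + B ^ 2 * s ^ 5 + 1 = 0 := by
    rw [hB]; linear_combination hC
  have h1s : (1 - s) ≠ 0 := sub_ne_zero.mpr hs1.symm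
  obtain ⟨n, hn⟩ : ∃ n, n = (1 - B * s ^ 2) * s / (1 - s) := ⟨_, rfl⟩
  have hσn : σ n = n := by
    rw [hn]; simp [hss, hσB]
  have hn' : n * (1 - s) = (1 - B * s ^ 2) * s := by rw [hn]; field_simp
  have hq : s * (n + 1) ^ 2 = n := by
    have : (1 - s) ^ 2 * (s * (n + 1) ^ 2 - n) = 0 := by
      linear_combination (s * (n * (1 - s) + (1 - B * s ^ 2) * s) + (2 * s - 1) * (1 - s)) * hn'
        + s * s * hCB
    exact sub_eq_zero.mp ((mul_eq_zero.mp this).resolve_left (pow_ne_zero 2 h1s))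
  have hn1 : n + 1 ≠ 0 := by
    intro h
    have : n = 0 := by rw [← hq, h]; ring
    rw [this] at h; simp at h
  have hBn : B * n = -(n + 1) ^ 5 := by
    have : s ^ 3 * (B * n + (n + 1) ^ 5) = 0 := by
      linear_combination n * hn' + (s ^ 2 * (n + 1) ^ 3 + s * n * (n + 1) + n) * hq
    have := (mul_eq_zero.mp this).resolve_left (pow_ne_zero 3 hs0)
    linear_combination this
  have h0 := h5 b
  refine ⟨-(n + 1) / σ (σ (σ (σ b))), ?_, ?_, ?_⟩
  · exact div_ne_zero (neg_ne_zero.mpr hn1) hb4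
  · simp only [map_div₀, map_neg, map_add, map_one, hσn, h5]
    rw [e0]
    field_simp
    have : n * (s * B) = n * (-(n + 1) ^ 3) := by
      linear_combination s * hBn - (n+1)^3 * hq
    have hn0 : n ≠ 0 := by
      rintro rfl
      simp at hq; exact hs0 hq
    have := mul_left_cancel₀ hn0 this
    rw [hB] at this
    linear_combination this
  · simp only [map_div₀, map_neg, map_add, map_one, hσn, h5]
    rw [e0]
    field_simp
    linear_combination hq

/-- a `q`-polynomial of `q`-degree at most four vanishing on `K` is zero. -/
theorem aux_coeffs {K : Type*} [Field K] [Finite K] (q : ℕ) (hq2 : 2 ≤ q)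
    (hK : Nat.card K = q ^ 5) (k0 k1 k2 k3 k4 : K)
    (h : ∀ x : K, k0 * x + k1 * x ^ q + k2 * x ^ q ^ 2 + k3 * x ^ q ^ 3 + k4 * x ^ q ^ 4 = 0) :
    k0 = 0 ∧ k1 = 0 ∧ k2 = 0 ∧ k3 = 0 ∧ k4 = 0 := by
  classical
  have := Fintype.ofFinite K
  have l1 : 1 < q := hq2
  have l2 : q < q ^ 2 := by nlinarith
  have l3 : q ^ 2 < q ^ 3 := Nat.pow_lt_pow_right l1 (by norm_num)
  have l4 : q ^ 3 < q ^ 4 := Nat.pow_lt_pow_right l1 (by norm_num)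
  have l5 : q ^ 4 < q ^ 5 := Nat.pow_lt_pow_right l1 (by norm_num)
  generalize q ^ 2 = q2 at *
  generalize q ^ 3 = q3 at *
  generalize q ^ 4 = q4 at *
  generalize q ^ 5 = q5 at *
  obtain ⟨P, hP⟩ : ∃ P : Polynomial K, P = Polynomial.monomial 1 k0 + Polynomial.monomial q k1
      + Polynomial.monomial q2 k2 + Polynomial.monomial q3 k3
      + Polynomial.monomial q4 k4 := ⟨_, rfl⟩
  have hdeg : P.natDegree ≤ q4 := by
    rw [Polynomial.natDegree_le_iff_coeff_eq_zero]
    intro N hN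
    rw [hP]
    simp only [Polynomial.coeff_add, Polynomial.coeff_monomial]
    rw [if_neg (by omega), if_neg (by omega), if_neg (by omega), if_neg (by omega),
      if_neg (by omega)]
    simp
  have hP0 : P = 0 := by
    apply Polynomial.eq_zero_of_natDegree_lt_card_of_eval_eq_zero' P Finset.univ
    · intro x _
      rw [hP]
      simpa [Polynomial.eval_monomial] using h x
    · rw [Finset.card_univ, ← Nat.card_eq_fintype_card, hK]
      omega
  have hc : ∀ N, P.coeff N = 0 := by intro N; rw [hP0]; simp
  simp only [hP, Polynomial.coeff_add, Polynomial.coeff_monomial] at hc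
  refine ⟨?_, ?_, ?_, ?_, ?_⟩
  · have := hc 1
    rwa [if_pos rfl, if_neg (by omega), if_neg (by omega), if_neg (by omega),
      if_neg (by omega), add_zero, add_zero, add_zero, add_zero] at this
  · have := hc q
    rwa [if_neg (by omega), if_pos rfl, if_neg (by omega), if_neg (by omega),
      if_neg (by omega), add_zero, add_zero, add_zero, zero_add] at this
  · have := hc q2
    rwa [if_neg (by omega), if_neg (by omega), if_pos rfl, if_neg (by omega),
      if_neg (by omega), add_zero, add_zero, add_zero, zero_add] at this
  · have := hc q3
    rwa [if_neg (by omega), if_neg (by omega), if_neg (by omega), if_pos rfl,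
      if_neg (by omega), add_zero, add_zero, add_zero, zero_add] at this
  · have := hc q4
    rwa [if_neg (by omega), if_neg (by omega), if_neg (by omega), if_neg (by omega),
      if_pos rfl, add_zero, add_zero, add_zero, zero_add] at this

/-- algebraic core of the forward direction. -/
theorem aux_forward {K : Type*} [Field K] (σ : K →+* K) (h5 : ∀ x, σ (σ (σ (σ (σ x)))) = x)
    (A b a B η e : K) (hb : b ≠ 0)
    (he : e = a * A + b * B)
    (h2 : A * σ (σ (σ e)) = η * σ (σ a)) (h3 : σ (σ (σ a)) = -η * σ (σ b))
    (h4 : σ (σ (σ b)) = η * σ (σ e)) :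
    σ (σ (σ (σ A))) * (B * σ B * σ (σ B)) - σ (σ (σ (σ A))) * σ (σ A) * B
      - σ (σ (σ (σ A))) * σ A * σ (σ B)
      + A * σ A * σ (σ A) * σ (σ (σ A)) * σ (σ (σ (σ A))) - σ B * (σ (σ (σ A)) * A) + 1 = 0 := by
  have hη : η ≠ 0 := by
    rintro rfl
    rw [zero_mul] at h4
    exact hb (by simpa using h4)
  have ha : a ≠ 0 := by
    rintro rfl
    simp at h3
    tauto
  have hbb : ∀ x : K, x ≠ 0 → σ x ≠ 0 := by intro x hx; simpa using hx
  obtain ⟨t, ht⟩ : ∃ t, t = a / b := ⟨_, rfl⟩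
  have hat : a = t * b := by rw [ht]; field_simp
  have ht0 : t ≠ 0 := by rw [ht]; exact div_ne_zero ha hb
  -- e * σ a = - b * σ b
  have hea : e * σ a = -(b * σ b) := by
    apply σ.injective; apply σ.injective
    apply mul_left_cancel₀ hη
    simp only [map_mul, map_neg]
    linear_combination (-σ (σ (σ a))) * h4 + σ (σ (σ b)) * h3
  have hβ : (t * A + B) * σ t = -1 := by
    have hb' := hbb b hb
    rw [he, hat] at hea
    simp only [map_mul] at hea
    apply mul_left_cancel₀ (mul_ne_zero hb hb')
    linear_combination hea
  have hα : A = σ (σ t) * σ (σ (σ t)) * σ (σ (σ (σ t))) := by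
    have h6 := congrArg (fun x => σ (σ (σ x))) hea
    simp only [map_mul, map_neg] at h6
    have hb2 := hbb _ (hbb b hb)
    have hb3 := hbb _ hb2
    have hb4 := hbb _ hb3
    rw [hat] at h2 h3 h6
    simp only [map_mul] at h2 h3 h6
    apply mul_left_cancel₀ (mul_ne_zero (mul_ne_zero hb2 hb3) hb4)
    linear_combination (A * σ (σ b)) * h6
      - σ (σ b) * σ (σ (σ (σ t))) * σ (σ (σ (σ b))) * h2
      - σ (σ t) * σ (σ b) * σ (σ (σ (σ t))) * σ (σ (σ (σ b))) * h3
  have t1 := hbb t ht0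
  have t2 := hbb _ t1
  have t3 := hbb _ t2
  have t4 := hbb _ t3
  obtain ⟨n, hn⟩ : ∃ n, n = t * σ t * σ (σ t) * σ (σ (σ t)) * σ (σ (σ (σ t))) := ⟨_, rfl⟩
  have hσn : σ n = n := by rw [hn]; simp only [map_mul, h5]; ring
  have hA' : A = n / (t * σ t) := by rw [hα, hn]; field_simp
  have hB' : B = -(n + 1) / σ t := by
    rw [eq_div_iff t1]
    have : t * A * σ t = n := by rw [hA']; field_simp
    linear_combination hβ - this
  have hn0 : n ≠ 0 := by rw [hn]; simp [ht0]
  have hnt : t = n / (σ t * σ (σ t) * σ (σ (σ t)) * σ (σ (σ (σ t)))) := by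
    rw [hn]; field_simp
  rw [hA', hB']
  simp only [map_div₀, map_mul, map_neg, map_add, map_one, hσn, h5]
  generalize σ (σ (σ (σ t))) = u4 at *
  generalize σ (σ (σ t)) = u3 at *
  generalize σ (σ t) = u2 at *
  generalize σ t = u1 at *
  clear hA' hB' hα hβ hat ht
  subst hnt
  field_simp
  ring

theorem stmt_8 (q : ℕ) (hq : ∃ p n : ℕ, Nat.Prime p ∧ 0 < n ∧ q = p ^ n)
    (K : Type*) [Field K] (F : Subfield K)
    (hFcard : Nat.card F = q) (hKcard : Nat.card K = q ^ 5)
    (α β : K) (hαβ : α * β ≠ 0) (hne : α ^ q ≠ β ^ (q + 1)) :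
    (∃ η : K, IsEquivToL q α β η 2) ↔
      α ^ q ^ 4 * β ^ (q ^ 2 + q + 1) - α ^ (q ^ 4 + q ^ 2) * β
        - α ^ (q ^ 4 + q) * β ^ q ^ 2 + α ^ (1 + q + q ^ 2 + q ^ 3 + q ^ 4)
        - β ^ q * α ^ (q ^ 3 + 1) + 1 = 0 := by
  obtain ⟨p, m, hp, hm, hqp⟩ := hq
  have : Fact p.Prime := ⟨hp⟩
  have hq2 : 2 ≤ q := by
    rw [hqp]
    exact le_trans hp.two_le (Nat.le_self_pow hm.ne' p)
  have : Finite K := by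
    apply Nat.finite_of_card_ne_zero
    rw [hKcard]; positivity
  have := Fintype.ofFinite K
  have : CharP K p := by
    have hcard : Fintype.card K = p ^ (m * 5) := by
      rw [← Nat.card_eq_fintype_card, hKcard, hqp, pow_mul]
    exact charP_of_card_eq_prime_pow hcard
  obtain ⟨σ, hσ⟩ : ∃ σ : K →+* K, ∀ x, x ^ q = σ x :=
    ⟨iterateFrobenius K p m, fun x => by rw [iterateFrobenius_def, hqp]⟩
  have hσ2 : ∀ x : K, x ^ q ^ 2 = σ (σ x) := by
    intro x; rw [← hσ, ← hσ, ← pow_mul]; congr 1; ring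
  have hσ3 : ∀ x : K, x ^ q ^ 3 = σ (σ (σ x)) := by
    intro x; rw [← hσ2, ← hσ, ← pow_mul]; congr 1; ring
  have hσ4 : ∀ x : K, x ^ q ^ 4 = σ (σ (σ (σ x))) := by
    intro x; rw [← hσ3, ← hσ, ← pow_mul]; congr 1; ring
  have h5 : ∀ x : K, σ (σ (σ (σ (σ x)))) = x := by
    intro x
    rw [← hσ4, ← hσ, ← pow_mul]
    have := FiniteField.pow_card x
    rw [← Nat.card_eq_fintype_card, hKcard] at this
    conv_rhs => rw [← this]
    congr 1; ring
  have hα : α ≠ 0 := left_ne_zero_of_mul hαβ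
  have hβ : β ≠ 0 := right_ne_zero_of_mul hαβ
  simp only [pow_add, pow_one, hσ, hσ2, hσ3, hσ4] at hne ⊢
  constructor
  · rintro ⟨η, τ, M, hM⟩
    obtain ⟨a, c, hac⟩ : ∃ a c, M (1, 0) = (a, c) := ⟨_, _, rfl⟩
    obtain ⟨b, d, hbd⟩ : ∃ b d, M (0, 1) = (b, d) := ⟨_, _, rfl⟩
    have hMuv : ∀ u v : K, M (u, v) = (a * u + b * v, c * u + d * v) := by
      intro u v
      have : ((u, v) : K × K) = u • (1, 0) + v • (0, 1) := by simp
      rw [this, map_add, map_smul, map_smul, hac, hbd]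
      ext <;> simp <;> ring
    obtain ⟨e, he⟩ : ∃ e, e = a * τ α + b * τ β := ⟨_, rfl⟩
    have hpt : ∀ y : K, c * (y - τ α * σ (σ y)) + d * (σ y - τ β * σ (σ y)) =
        η * σ (σ (a * y + b * σ y - e * σ (σ y)))
          + σ (σ (σ (a * y + b * σ y - e * σ (σ y)))) := by
      intro y
      have hmem : M (y - τ α * σ (σ y), σ y - τ β * σ (σ y)) ∈
          {p : K × K | ∃ z : K, p = (z, η * z ^ q ^ 2 + z ^ q ^ (5 - 2))} := by
        rw [← hM]
        refine ⟨_, ⟨τ.symm y, ?_⟩, rfl⟩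
        simp only [RingEquiv.apply_symm_apply, hσ, hσ2]
      obtain ⟨z, hz⟩ := hmem
      rw [hMuv, Prod.mk.injEq] at hz
      obtain ⟨hz1, hz2⟩ := hz
      have hz1' : a * y + b * σ y - e * σ (σ y) = z := by
        rw [← hz1, he]; ring
      rw [hz1', hz2]
      norm_num [hσ2, hσ3]
    obtain ⟨k0, k1, k2, k3, k4⟩ := aux_coeffs q hq2 hKcard (c + σ (σ (σ e))) d
      (-(c * τ α) - d * τ β - η * σ (σ a)) (-(η * σ (σ b)) - σ (σ (σ a)))
      (η * σ (σ e) - σ (σ (σ b))) (by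
        intro x
        have := hpt x
        simp only [map_add, map_sub, map_mul, h5] at this
        rw [hσ, hσ2, hσ3, hσ4]
        linear_combination this)
    have hb : b ≠ 0 := by
      rintro rfl
      have h0 : M (0, 1) = M 0 := by rw [hbd, k1, map_zero]; rfl
      have := M.injective h0
      simp at this
    have hc0 : c ≠ 0 := by
      rintro rfl
      have h0 : M (b, -a) = M 0 := by
        rw [hMuv, k1, map_zero]
        ext <;> simp
        ring
      have := M.injective h0
      simp at this
      exact hb this.1
    have hA : τ α ≠ 0 := by simpa using hα
    have hc : c = -σ (σ (σ e)) := by linear_combination k0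
    have key := aux_forward σ h5 (τ α) b a (τ β) η e hb he
      (by rw [k1] at k2; linear_combination k2 + τ α * k0) (by linear_combination -k3)
      (by linear_combination -k4)
    have hτσ : ∀ x, σ (τ x) = τ (σ x) := by
      intro x; rw [← hσ, ← hσ, map_pow]
    simp only [hτσ] at key
    apply τ.injective
    simp only [map_add, map_sub, map_mul, map_one, map_zero]
    linear_combination key
  · intro hC
    obtain ⟨t, ht, h1, h2⟩ := aux_exists_t σ h5 α β hα hβ (by
      intro h; exact hne (by rw [h]; ring)) (by linear_combination hC)
    have t1 : σ t ≠ 0 := by simpa using ht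
    have t4 : σ (σ (σ (σ t))) ≠ 0 := by simpa using ht
    refine ⟨-σ (σ (σ t)), RingEquiv.refl K, ?_⟩
    obtain ⟨M, hM⟩ : ∃ M : (K × K) ≃ₗ[K] K × K, ∀ u v,
        M (u, v) = (t * u + v, u / σ (σ (σ (σ t)))) := by
      refine ⟨{ toFun := fun p => (t * p.1 + p.2, p.1 / σ (σ (σ (σ t))))
                invFun := fun p => (σ (σ (σ (σ t))) * p.2, p.1 - t * (σ (σ (σ (σ t))) * p.2))
                map_add' := ?_
                map_smul' := ?_
                left_inv := ?_
                right_inv := ?_ }, ?_⟩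
      · intro x y; ext <;> simp <;> ring
      · intro r x; ext <;> simp <;> ring
      · intro x; ext <;> simp <;> field_simp <;> ring
      · intro x; ext <;> simp <;> field_simp
      · intro u v; rfl
    refine ⟨M, ?_⟩
    obtain ⟨f, hf⟩ : ∃ f : K →+ K, ∀ x, f x = t * x + σ x + σ (σ x) / σ t := by
      refine ⟨⟨⟨fun x => t * x + σ x + σ (σ x) / σ t, by simp⟩, ?_⟩, fun x => rfl⟩
      intro x y
      simp only [map_add]
      ring
    have hMf : ∀ x, M (x - α * σ (σ x), σ x - β * σ (σ x)) =
        (f x, -σ (σ (σ t)) * σ (σ (f x)) + σ (σ (σ (f x)))) := by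
      intro x
      rw [hM, hf]
      have t2 : σ (σ t) ≠ 0 := by simpa using ht
      have t3 : σ (σ (σ t)) ≠ 0 := by simpa using ht
      ext
      · simp only
        field_simp
        linear_combination (-σ (σ x)) * h2
      · simp only [map_add, map_mul, map_div₀, h5]
        rw [h1]
        field_simp
        ring
    have hinj : Function.Injective f := by
      rw [injective_iff_map_eq_zero]
      intro x hx
      have h0 : M (x - α * σ (σ x), σ x - β * σ (σ x)) = M 0 := by
        rw [hMf, hx]; simp
      have h0' := M.injective h0
      rw [Prod.mk_eq_zero] at h0'
      obtain ⟨u, v⟩ := h0'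
      have u1 := congrArg σ u
      have v1 := congrArg σ v
      simp only [map_sub, map_mul, map_zero] at u1 v1
      have hx3 : (σ α - β * σ β) * σ (σ (σ x)) = 0 := by
        linear_combination v - u1 + β * v1
      have hne' : σ α - β * σ β ≠ 0 := by
        intro h; apply hne; linear_combination h
      have := (mul_eq_zero.mp hx3).resolve_left hne'
      simpa using this
    have hsurj : Function.Surjective f := Finite.surjective_of_injective hinj
    ext p
    simp only [Set.mem_image, Set.mem_ofPred_eq, RingEquiv.refl_apply]
    constructor
    · rintro ⟨_, ⟨x, rfl⟩, rfl⟩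
      refine ⟨f x, ?_⟩
      rw [hσ, hσ2, hMf]
      norm_num [hσ2, hσ3]
    · rintro ⟨z, rfl⟩
      obtain ⟨x, rfl⟩ := hsurj z
      refine ⟨_, ⟨x, rfl⟩, ?_⟩
      rw [hσ, hσ2, hMf]
      norm_num [hσ2, hσ3]
end

section
/- Let α, β ∈ K with αβ ≠ 0, α^q ≠ β^{q+1} and β^q α^{q^3+1} ≠ 1, and suppose α^{q^4} β^{q^2+q+1} − α^{q^4+q^2} β − α^{q^4+q} β^{q^2} + N(α) − β^q α^{q^3+1} + 1 = 0. Then L_{α,β} is maximum scattered if and only if N( α^{q^3} (β^{q+1} − α^q) / (β^q α^{q^3+1} − 1) ) ≠ 1, i.e. if and only if N(α^{q^3}) · N(β^{q+1} − α^q) ≠ N(β^q α^{q^3+1} − 1). -/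
/-- The decomposition of the five Plücker quadrics: the product of two linear forms lies
in their span. -/
lemma pent_prod {K : Type*} [Field K] (s x0 x1 x2 x3 x4 : K) (hs : s ≠ 0)
    (G0 : s * (1 + s + s ^ 2) * x0 * x2
      - x1 * (s ^ 2 * (x0 + x1 + x2) - (1 + s) * (x3 + x4)) = 0)
    (G1 : s * (1 + s + s ^ 2) * x1 * x3
      - x2 * (s ^ 2 * (x1 + x2 + x3) - (1 + s) * (x4 + s ^ 3 * x0)) = 0)
    (G2 : s * (1 + s + s ^ 2) * x2 * x4
      - x3 * (s ^ 2 * (x2 + x3 + x4) - (1 + s) * (s ^ 3 * x0 + s ^ 3 * x1)) = 0)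
    (G3 : s * (1 + s + s ^ 2) * x3 * (s ^ 3 * x0)
      - x4 * (s ^ 2 * (x3 + x4 + s ^ 3 * x0) - (1 + s) * (s ^ 3 * x1 + s ^ 3 * x2)) = 0)
    (G4 : s * (1 + s + s ^ 2) * x4 * x1
      - x0 * (s ^ 2 * (x4 + s ^ 3 * x0 + s ^ 3 * x1)
        - (1 + s) * (s ^ 3 * x2 + s ^ 3 * x3)) = 0) :
    (-(s + s ^ 2) * x0 + x1 + x2 + x3 + x4) *
      (s ^ 3 * x0 + s ^ 3 * x1 - (s + s ^ 2) * x2 + x3 + x4) = 0 := by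
  have h : s ^ 2 * ((-(s + s ^ 2) * x0 + x1 + x2 + x3 + x4) *
      (s ^ 3 * x0 + s ^ 3 * x1 - (s + s ^ 2) * x2 + x3 + x4)) = 0 := by
    linear_combination -s ^ 3 * G0 + (s + s ^ 2) * G1 - G2 - G3 + (s + s ^ 2) * G4
  exact (mul_eq_zero.mp h).resolve_left (pow_ne_zero _ hs)

lemma pent_zero {K : Type*} [Field K] (s x0 x1 x2 x3 x4 : K) (hs : s ≠ 0) (hs1 : 1 + s ≠ 0)
    (hM : 1 + s + s ^ 2 ≠ 0)
    (Y0 : -(s + s ^ 2) * x0 + x1 + x2 + x3 + x4 = 0)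
    (Y1 : s ^ 3 * x0 - (s + s ^ 2) * x1 + x2 + x3 + x4 = 0)
    (Y2 : s ^ 3 * x0 + s ^ 3 * x1 - (s + s ^ 2) * x2 + x3 + x4 = 0)
    (Y3 : s ^ 3 * x0 + s ^ 3 * x1 + s ^ 3 * x2 - (s + s ^ 2) * x3 + x4 = 0)
    (Y4 : s ^ 3 * x0 + s ^ 3 * x1 + s ^ 3 * x2 + s ^ 3 * x3 - (s + s ^ 2) * x4 = 0) :
    x0 = 0 := by
  have h1 : x1 = s * x0 := mul_left_cancel₀ hM (by linear_combination Y0 - Y1)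
  have h2 : x2 = s * x1 := mul_left_cancel₀ hM (by linear_combination Y1 - Y2)
  have h3 : x3 = s * x2 := mul_left_cancel₀ hM (by linear_combination Y2 - Y3)
  have h4 : x4 = s * x3 := mul_left_cancel₀ hM (by linear_combination Y3 - Y4)
  subst h4 h3 h2 h1
  have h : (s ^ 3 * (1 + s)) * x0 = 0 := by linear_combination Y0
  exact (mul_eq_zero.mp h).resolve_left (mul_ne_zero (pow_ne_zero _ hs) hs1)

/-- Rewriting the quadric in the adapted coordinates. -/
lemma quad_rewrite {K : Type*} [Field K] (s g n a0 a1 a2 a3 b0 b1 b2 b3 b4 u0 u1 u2 u3 u4 : K)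
    (hs : s ≠ 0) (hs1 : 1 + s ≠ 0)
    (hb3 : b3 ≠ 0)
    (hg : g = s / (1 + s) ^ 2) (hn : n = -(1 + s) ^ 5 / s)
    (hN : b0 * b1 * b2 * b3 * b4 = n)
    (ha0 : a0 = g * b0 * b4) (ha1 : a1 = g * b1 * b0) (ha2 : a2 = g * b2 * b1)
    (hQ : b0 * b1 * b3 * u0 * u2 - b3 * (u0 + a0 * u1) * (u1 + a1 * u2)
      - b0 * b1 * u1 * (u3 + a3 * u4) = 0) :
    s * (1 + s + s ^ 2) * u0 * (a0 * a1 * u2)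
      - (a0 * u1) * (s ^ 2 * (u0 + a0 * u1 + a0 * a1 * u2)
        - (1 + s) * (a0 * a1 * a2 * u3 + a0 * a1 * a2 * a3 * u4)) = 0 := by
  have hg2 : g * (1 + s) ^ 2 = s := by rw [hg]; field_simp
  have hn2 : n * s = -(1 + s) ^ 5 := by rw [hn]; field_simp
  have hg0 : g ≠ 0 := by rw [hg]; positivity
  have e : b0 * b1 * s = a1 * (1 + s) ^ 2 := by
    rw [ha1]; linear_combination -b0 * b1 * hg2
  have hgn : g ^ 3 * n * (1 + s) = -s ^ 2 := by rw [hg, hn]; field_simp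
  have f : b3 * (a0 * a1 * a2) * (1 + s) + s ^ 2 * b0 * b1 = 0 := by
    rw [ha0, ha1, ha2]
    linear_combination b0 * b1 * hgn + g ^ 3 * (1 + s) * b0 * b1 * hN
  refine (mul_eq_zero.mp (?_ : b3 * _ = 0)).resolve_left hb3
  linear_combination (-a0 * b3 * s * u0 * u2) * e + a0 * u1 * (u3 + a3 * u4) * f
    + s ^ 2 * a0 * hQ

lemma norm_ne {K : Type*} [Field K] (s g n : K) (hs : s ≠ 0) (hs1 : 1 + s ≠ 0)
    (hM : 1 + s + s ^ 2 ≠ 0)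
    (hg : g = s / (1 + s) ^ 2) (hn : n = -(1 + s) ^ 5 / s) :
    g ^ 5 * n ^ 4 * (1 - g) ^ 5 ≠ (g ^ 2 * n - 1) ^ 5 := by
  have h1 : 1 - g = (1 + s + s ^ 2) / (1 + s) ^ 2 := by rw [hg]; field_simp; ring
  have h2 : g ^ 2 * n - 1 = -(1 + s + s ^ 2) := by rw [hg, hn]; field_simp; ring
  have h3 : g ^ 5 * n ^ 4 * (1 - g) ^ 5 = s * (1 + s + s ^ 2) ^ 5 := by
    rw [h1, hg, hn]; field_simp
  rw [h3, h2]
  intro h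
  have : (1 + s) * (1 + s + s ^ 2) ^ 5 = 0 := by linear_combination h
  exact mul_ne_zero hs1 (pow_ne_zero _ hM) this

/-- The arithmetic consequences of the hypothesis. -/
lemma params {K : Type*} [Field K] (g n : K) (hg0 : g ≠ 0) (hg1 : 1 - g ≠ 0)
    (h : g * n - 3 * g ^ 2 * n + g ^ 5 * n ^ 2 + 1 = 0) :
    ∃ s : K, s = (g - n * g ^ 4) / (1 - 2 * g + n * g ^ 4) ∧ s ≠ 0 ∧ 1 + s ≠ 0 ∧
      1 + s + s ^ 2 ≠ 0 ∧ g = s / (1 + s) ^ 2 ∧ n = -(1 + s) ^ 5 / s := by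
  have key : (g - n * g ^ 4) * (1 - 2 * g + n * g ^ 4) = g * (1 - g) ^ 2 := by
    linear_combination -g ^ 3 * h
  have hA : g - n * g ^ 4 ≠ 0 := fun h0 => by
    rw [h0, zero_mul] at key
    exact mul_ne_zero hg0 (pow_ne_zero 2 hg1) key.symm
  have hB : 1 - 2 * g + n * g ^ 4 ≠ 0 := fun h0 => by
    rw [h0, mul_zero] at key
    exact mul_ne_zero hg0 (pow_ne_zero 2 hg1) key.symm
  have h1s : 1 + (g - n * g ^ 4) / (1 - 2 * g + n * g ^ 4)
      = (1 - g) / (1 - 2 * g + n * g ^ 4) := by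
    rw [eq_div_iff hB, add_mul, div_mul_cancel₀ _ hB]; ring
  have hgs : g = ((g - n * g ^ 4) / (1 - 2 * g + n * g ^ 4)) /
      (1 + (g - n * g ^ 4) / (1 - 2 * g + n * g ^ 4)) ^ 2 := by
    rw [h1s]
    have : (g - n * g ^ 4) / (1 - 2 * g + n * g ^ 4) /
        ((1 - g) / (1 - 2 * g + n * g ^ 4)) ^ 2
        = (g - n * g ^ 4) * (1 - 2 * g + n * g ^ 4) / (1 - g) ^ 2 := by
      generalize 1 - 2 * g + n * g ^ 4 = B at *
      generalize 1 - g = C at *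
      field_simp
    rw [this, key]; field_simp
  have hs0 : (g - n * g ^ 4) / (1 - 2 * g + n * g ^ 4) ≠ 0 := div_ne_zero hA hB
  have hs1 : 1 + (g - n * g ^ 4) / (1 - 2 * g + n * g ^ 4) ≠ 0 := by
    rw [h1s]; exact div_ne_zero hg1 hB
  -- the cube of `r = A / (1 - g)` equals `- n g ^ 4`
  have hcube : (g - n * g ^ 4) ^ 3 = -n * g ^ 4 * (1 - g) ^ 3 := by
    linear_combination -(1 - n * g ^ 4) * key
  refine ⟨_, rfl, hs0, hs1, ?_, hgs, ?_⟩
  · generalize (g - n * g ^ 4) / (1 - 2 * g + n * g ^ 4) = s at *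
    intro h0
    apply hg1
    rw [hgs]; field_simp; linear_combination h0
  · have hr : (g - n * g ^ 4) = (g - n * g ^ 4) / (1 - 2 * g + n * g ^ 4) /
      (1 + (g - n * g ^ 4) / (1 - 2 * g + n * g ^ 4)) * (1 - g) := by
      rw [h1s]
      generalize 1 - 2 * g + n * g ^ 4 = B at *
      generalize 1 - g = C at *
      field_simp
    rw [hr] at hcube
    generalize (g - n * g ^ 4) / (1 - 2 * g + n * g ^ 4) = s at *
    have h3 : (s / (1 + s)) ^ 3 = -n * g ^ 4 := by
      apply mul_right_cancel₀ (pow_ne_zero 3 hg1)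
      linear_combination hcube
    have h4 : (-n) * g ^ 4 * (1 + s) ^ 8 = s ^ 3 * (1 + s) ^ 5 := by
      rw [← h3]; field_simp
    have h5 : g * (1 + s) ^ 2 = s := by
      conv_lhs => rw [hgs]
      field_simp
    have h6 : g ^ 4 * (1 + s) ^ 8 = s ^ 4 := by
      calc g ^ 4 * (1 + s) ^ 8 = (g * (1 + s) ^ 2) ^ 4 := by ring
        _ = s ^ 4 := by rw [h5]
    have h7 : (-n) * s ^ 4 = s ^ 3 * (1 + s) ^ 5 := by
      rw [← h4, ← h6]; ring
    rw [eq_div_iff hs0]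
    apply mul_left_cancel₀ (pow_ne_zero 3 hs0)
    linear_combination -h7

/-- From the hypothesis we get that `α = g β^{1+q^4}` with `g` in the ground field, and a
rational parametrisation of `g` and of the norm of `β`. -/
lemma core_params {K : Type*} [Field K] (φ : K →+* K)
    (a0 a1 a2 a3 a4 b0 b1 b2 b3 b4 : K)
    (pa0 : φ a0 = a1) (pa1 : φ a1 = a2) (pa2 : φ a2 = a3) (pa3 : φ a3 = a4) (pa4 : φ a4 = a0)
    (pb0 : φ b0 = b1) (pb1 : φ b1 = b2) (pb2 : φ b2 = b3) (pb3 : φ b3 = b4) (pb4 : φ b4 = b0)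
    (ha : a0 ≠ 0) (hb : b0 ≠ 0) (hE : b0 * b1 - a1 ≠ 0)
    (heq : a4 * b0 * b1 * b2 - a4 * a2 * b0 - a4 * a1 * b2 + a0 * a1 * a2 * a3 * a4
      - b1 * a0 * a3 + 1 = 0) :
    ∃ s g n : K, φ s = s ∧ s ≠ 0 ∧ 1 + s ≠ 0 ∧ 1 + s + s ^ 2 ≠ 0 ∧
      g = s / (1 + s) ^ 2 ∧ n = -(1 + s) ^ 5 / s ∧ b0 * b1 * b2 * b3 * b4 = n ∧
      a0 = g * b0 * b4 ∧ a1 = g * b1 * b0 ∧ a2 = g * b2 * b1 ∧ a3 = g * b3 * b2 ∧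
      a4 = g * b4 * b3 := by
  have hinj := φ.injective
  have hb1 : b1 ≠ 0 := by rw [← pb0]; exact (map_ne_zero φ).mpr hb
  have hb2 : b2 ≠ 0 := by rw [← pb1]; exact (map_ne_zero φ).mpr hb1
  have hb3 : b3 ≠ 0 := by rw [← pb2]; exact (map_ne_zero φ).mpr hb2
  have hb4 : b4 ≠ 0 := by rw [← pb3]; exact (map_ne_zero φ).mpr hb3
  have heq4 := congrArg (fun z => φ (φ (φ (φ z)))) heq
  simp only [map_add, map_sub, map_mul, map_one, map_zero, pa0, pa1, pa2, pa3, pa4,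
    pb0, pb1, pb2, pb3, pb4] at heq4
  have h1 : a4 * b2 = a3 * b4 := by
    apply mul_right_cancel₀ hE
    linear_combination heq - heq4
  have h2 := congrArg (fun z => φ (φ z)) h1
  simp only [map_mul, pa3, pa4, pa0, pb2, pb3, pb4, pb0] at h2
  obtain ⟨g, hg⟩ : ∃ g, g = a0 / (b0 * b4) := ⟨_, rfl⟩
  have e0 : a0 = g * b0 * b4 := by rw [hg]; field_simp
  have hφg : φ g = g := by
    rw [hg, map_div₀, map_mul, pa0, pb0, pb4]
    field_simp
    linear_combination h2
  have e1 : a1 = g * b1 * b0 := by rw [← pa0, e0, map_mul, map_mul, hφg, pb0, pb4]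
  have e2 : a2 = g * b2 * b1 := by rw [← pa1, e1, map_mul, map_mul, hφg, pb0, pb1]
  have e3 : a3 = g * b3 * b2 := by rw [← pa2, e2, map_mul, map_mul, hφg, pb1, pb2]
  have e4 : a4 = g * b4 * b3 := by rw [← pa3, e3, map_mul, map_mul, hφg, pb2, pb3]
  have hg0 : g ≠ 0 := by rintro rfl; apply ha; rw [e0]; ring
  have hg1 : 1 - g ≠ 0 := by
    intro h; apply hE; rw [e1]; linear_combination b0 * b1 * h
  obtain ⟨n, hn⟩ : ∃ n, n = b0 * b1 * b2 * b3 * b4 := ⟨_, rfl⟩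
  have hφn : φ n = n := by
    rw [hn]; simp only [map_mul, pb0, pb1, pb2, pb3, pb4]; ring
  have hgn : g * n - 3 * g ^ 2 * n + g ^ 5 * n ^ 2 + 1 = 0 := by
    rw [e0, e1, e2, e3, e4] at heq
    rw [hn]; linear_combination heq
  obtain ⟨s, hs, hs0, hs1, hM, hgs, hns⟩ := params g n hg0 hg1 hgn
  refine ⟨s, g, n, ?_, hs0, hs1, hM, hgs, hns, hn.symm, e0, e1, e2, e3, e4⟩
  rw [hs]
  simp only [map_div₀, map_add, map_sub, map_mul, map_pow, map_one, map_ofNat, hφg, hφn]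

lemma core_scattered {K : Type*} [Field K] (φ : K →+* K)
    (a0 a1 a2 a3 a4 b0 b1 b2 b3 b4 s g n : K)
    (pa0 : φ a0 = a1) (pa1 : φ a1 = a2) (pa2 : φ a2 = a3) (pa3 : φ a3 = a4) (pa4 : φ a4 = a0)
    (pb0 : φ b0 = b1) (pb1 : φ b1 = b2) (pb2 : φ b2 = b3)
    (ha : a0 ≠ 0) (hb : b0 ≠ 0)
    (hφs : φ s = s) (hs0 : s ≠ 0) (hs1 : 1 + s ≠ 0) (hM : 1 + s + s ^ 2 ≠ 0)
    (hg : g = s / (1 + s) ^ 2) (hn : n = -(1 + s) ^ 5 / s)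
    (hN : b0 * b1 * b2 * b3 * b4 = n)
    (e0 : a0 = g * b0 * b4) (e1 : a1 = g * b1 * b0) (e2 : a2 = g * b2 * b1)
    (e3 : a3 = g * b3 * b2) (e4 : a4 = g * b4 * b3)
    (x0 x1 x2 x3 x4 y0 y1 y2 y3 y4 : K)
    (px0 : φ x0 = x1) (px1 : φ x1 = x2) (px2 : φ x2 = x3) (px3 : φ x3 = x4) (px4 : φ x4 = x0)
    (py0 : φ y0 = y1) (py1 : φ y1 = y2) (py2 : φ y2 = y3) (py3 : φ y3 = y4) (py4 : φ y4 = y0)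
    (hdet : (x0 - a0 * x2) * (y1 - b0 * y2) = (y0 - a0 * y2) * (x1 - b0 * x2)) :
    x0 * y1 - y0 * x1 = 0 := by
  have hb1 : b1 ≠ 0 := by rw [← pb0]; exact (map_ne_zero φ).mpr hb
  have hb2 : b2 ≠ 0 := by rw [← pb1]; exact (map_ne_zero φ).mpr hb1
  have hb3 : b3 ≠ 0 := by rw [← pb2]; exact (map_ne_zero φ).mpr hb2
  have hNa : a0 * a1 * a2 * a3 * a4 = s ^ 3 := by
    have h : a0 * a1 * a2 * a3 * a4 = g ^ 5 * n ^ 2 := by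
      rw [← hN, e0, e1, e2, e3, e4]; ring
    rw [h, hg, hn]; field_simp
  -- the Plücker quadric
  have hQ : b0 * b1 * b3 * (x0 * y1 - y0 * x1) * (x2 * y3 - y2 * x3)
      - b3 * ((x0 * y1 - y0 * x1) + a0 * (x1 * y2 - y1 * x2)) *
        ((x1 * y2 - y1 * x2) + a1 * (x2 * y3 - y2 * x3))
      - b0 * b1 * (x1 * y2 - y1 * x2) *
        ((x3 * y4 - y3 * x4) + a3 * (x4 * y0 - y4 * x0)) = 0 := by
    have v0 : (x0 * y1 - y0 * x1) + a0 * (x1 * y2 - y1 * x2) = b0 * (x0 * y2 - x2 * y0) := by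
      linear_combination hdet
    have v1 := congrArg φ v0
    simp only [map_add, map_sub, map_mul, pa0, pb0, px0, px1, px2, py0, py1, py2] at v1
    have v3 := congrArg (fun z => φ (φ z)) v1
    simp only [map_add, map_sub, map_mul, pa1, pa2, pb1, pb2, px1, px2, px3, px4,
      py1, py2, py3, py4] at v3
    rw [v0, v1, v3]; ring
  have pu0 : φ (x0 * y1 - y0 * x1) = x1 * y2 - y1 * x2 := by
    simp only [map_sub, map_mul, px0, px1, py0, py1]
  have pu1 : φ (x1 * y2 - y1 * x2) = x2 * y3 - y2 * x3 := by
    simp only [map_sub, map_mul, px1, px2, py1, py2]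
  have pu2 : φ (x2 * y3 - y2 * x3) = x3 * y4 - y3 * x4 := by
    simp only [map_sub, map_mul, px2, px3, py2, py3]
  have pu3 : φ (x3 * y4 - y3 * x4) = x4 * y0 - y4 * x0 := by
    simp only [map_sub, map_mul, px3, px4, py3, py4]
  have pu4 : φ (x4 * y0 - y4 * x0) = x0 * y1 - y0 * x1 := by
    simp only [map_sub, map_mul, px4, px0, py4, py0]
  generalize x0 * y1 - y0 * x1 = u0 at *
  generalize x1 * y2 - y1 * x2 = u1 at *
  generalize x2 * y3 - y2 * x3 = u2 at *
  generalize x3 * y4 - y3 * x4 = u3 at *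
  generalize x4 * y0 - y4 * x0 = u4 at *
  have G0 := quad_rewrite s g n a0 a1 a2 a3 b0 b1 b2 b3 b4 u0 u1 u2 u3 u4 hs0 hs1 hb3 hg hn hN
    e0 e1 e2 hQ
  -- adapted coordinates
  have pw0 : a0 * φ u0 = a0 * u1 := by rw [pu0]
  have pw1 : a0 * φ (a0 * u1) = a0 * a1 * u2 := by rw [map_mul, pa0, pu1]; ring
  have pw2 : a0 * φ (a0 * a1 * u2) = a0 * a1 * a2 * u3 := by
    simp only [map_mul, pa0, pa1, pu2]; ring
  have pw3 : a0 * φ (a0 * a1 * a2 * u3) = a0 * a1 * a2 * a3 * u4 := by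
    simp only [map_mul, pa0, pa1, pa2, pu3]; ring
  have pw4 : a0 * φ (a0 * a1 * a2 * a3 * u4) = s ^ 3 * u0 := by
    rw [← hNa]; simp only [map_mul, pa0, pa1, pa2, pa3, pu4]; ring
  generalize a0 * a1 * a2 * a3 * u4 = w4 at *
  generalize a0 * a1 * a2 * u3 = w3 at *
  generalize a0 * a1 * u2 = w2 at *
  generalize a0 * u1 = w1 at *
  clear hQ hdet
  -- the semilinear shift applied to a quadric and to a linear form
  have shQ : ∀ z0 z1 z2 z3 z4 : K,
      s * (1 + s + s ^ 2) * z0 * z2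
        - z1 * (s ^ 2 * (z0 + z1 + z2) - (1 + s) * (z3 + z4)) = 0 →
      s * (1 + s + s ^ 2) * (a0 * φ z0) * (a0 * φ z2)
        - (a0 * φ z1) * (s ^ 2 * ((a0 * φ z0) + (a0 * φ z1) + (a0 * φ z2))
          - (1 + s) * ((a0 * φ z3) + (a0 * φ z4))) = 0 := by
    intro z0 z1 z2 z3 z4 h
    have h' := congrArg φ h
    simp only [map_add, map_sub, map_mul, map_pow, map_one, map_zero, hφs] at h'
    linear_combination a0 ^ 2 * h'
  have sc : ∀ z : K, a0 * φ (s ^ 3 * z) = s ^ 3 * (a0 * φ z) := by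
    intro z; rw [map_mul, map_pow, hφs]; ring
  have G1 := shQ _ _ _ _ _ G0
  rw [pw0, pw1, pw2, pw3, pw4] at G1
  have G2 := shQ _ _ _ _ _ G1
  rw [sc, pw0, pw1, pw2, pw3, pw4] at G2
  have G3 := shQ _ _ _ _ _ G2
  rw [sc, sc, pw0, pw1, pw2, pw3, pw4] at G3
  have G4 := shQ _ _ _ _ _ G3
  rw [sc, sc, sc, pw0, pw1, pw2, pw3, pw4] at G4
  have G4' : s * (1 + s + s ^ 2) * w4 * w1
      - u0 * (s ^ 2 * (w4 + s ^ 3 * u0 + s ^ 3 * w1)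
        - (1 + s) * (s ^ 3 * w2 + s ^ 3 * w3)) = 0 := by
    apply (mul_eq_zero.mp (?_ : s ^ 3 * _ = 0)).resolve_left (pow_ne_zero _ hs0)
    linear_combination G4
  have hprod := pent_prod s u0 w1 w2 w3 w4 hs0 G0 G1 G2 G3 G4'
  have shY : ∀ z0 z1 z2 z3 z4 : K, -(s + s ^ 2) * z0 + z1 + z2 + z3 + z4 = 0 →
      -(s + s ^ 2) * (a0 * φ z0) + a0 * φ z1 + a0 * φ z2 + a0 * φ z3 + a0 * φ z4 = 0 := by
    intro z0 z1 z2 z3 z4 h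
    have h' := congrArg φ h
    simp only [map_add, map_neg, map_mul, map_pow, map_zero, hφs] at h'
    linear_combination a0 * h'
  have fin : -(s + s ^ 2) * u0 + w1 + w2 + w3 + w4 = 0 → u0 = 0 := by
    intro Y0
    have Y1 := shY _ _ _ _ _ Y0
    rw [pw0, pw1, pw2, pw3, pw4] at Y1
    have Y2 := shY _ _ _ _ _ Y1
    rw [sc, pw0, pw1, pw2, pw3, pw4] at Y2
    have Y3 := shY _ _ _ _ _ Y2
    rw [sc, sc, pw0, pw1, pw2, pw3, pw4] at Y3
    have Y4 := shY _ _ _ _ _ Y3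
    rw [sc, sc, sc, pw0, pw1, pw2, pw3, pw4] at Y4
    exact pent_zero s u0 w1 w2 w3 w4 hs0 hs1 hM Y0 (by linear_combination Y1)
      (by linear_combination Y2) (by linear_combination Y3) (by linear_combination Y4)
  rcases mul_eq_zero.mp hprod with h | h
  · exact fin h
  · apply fin
    have Y2 : -(s + s ^ 2) * w2 + w3 + w4 + s ^ 3 * u0 + s ^ 3 * w1 = 0 := by
      linear_combination h
    have Y3 := shY _ _ _ _ _ Y2
    rw [sc, sc, pw0, pw1, pw2, pw3, pw4] at Y3
    have Y4 := shY _ _ _ _ _ Y3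
    rw [sc, sc, sc, pw0, pw1, pw2, pw3, pw4] at Y4
    have Y5 := shY _ _ _ _ _ Y4
    rw [sc, sc, sc, sc, pw0, pw1, pw2, pw3, pw4] at Y5
    apply (mul_eq_zero.mp (?_ : s ^ 3 * _ = 0)).resolve_left (pow_ne_zero _ hs0)
    linear_combination Y5

theorem stmt_9 (q : ℕ) (hq : ∃ p n : ℕ, Nat.Prime p ∧ 0 < n ∧ q = p ^ n)
    (K : Type*) [Field K] (F : Subfield K)
    (hFcard : Nat.card F = q) (hKcard : Nat.card K = q ^ 5)
    (α β : K) (hαβ : α * β ≠ 0) (hne : α ^ q ≠ β ^ (q + 1))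
    (hne2 : β ^ q * α ^ (q ^ 3 + 1) ≠ 1)
    (heq : α ^ q ^ 4 * β ^ (q ^ 2 + q + 1) - α ^ (q ^ 4 + q ^ 2) * β
        - α ^ (q ^ 4 + q) * β ^ q ^ 2 + α ^ (1 + q + q ^ 2 + q ^ 3 + q ^ 4)
        - β ^ q * α ^ (q ^ 3 + 1) + 1 = 0) :
    IsMaxScattered q F α β ↔
      (α ^ q ^ 3) ^ (1 + q + q ^ 2 + q ^ 3 + q ^ 4) *
          (β ^ (q + 1) - α ^ q) ^ (1 + q + q ^ 2 + q ^ 3 + q ^ 4) ≠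
        (β ^ q * α ^ (q ^ 3 + 1) - 1) ^ (1 + q + q ^ 2 + q ^ 3 + q ^ 4) := by
  obtain ⟨p, m, hp, hm, hqp⟩ := hq
  have hq1 : 1 < q := by rw [hqp]; exact Nat.one_lt_pow hm.ne' hp.one_lt
  have : Finite K := Nat.finite_of_card_ne_zero (by rw [hKcard]; positivity)
  have := Fintype.ofFinite K
  have : Fact p.Prime := ⟨hp⟩
  have : CharP K p := by
    obtain ⟨r, hr⟩ := CharP.exists K
    obtain ⟨⟨k, hk⟩, hrp, hcard⟩ := FiniteField.card K r
    have hc : Nat.card K = r ^ k := by rw [Nat.card_eq_fintype_card]; exact hcard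
    rw [hKcard, hqp, ← pow_mul] at hc
    have hd : p ∣ r ^ k := by rw [← hc]; exact dvd_pow_self p (by positivity)
    have := (Nat.prime_dvd_prime_iff_eq hp hrp).mp (hp.dvd_of_dvd_pow hd)
    rw [this]; exact hr
  obtain ⟨φ, hφ⟩ : ∃ φ : K →+* K, ∀ x, φ x = x ^ q :=
    ⟨iterateFrobenius K p m, fun x => by rw [iterateFrobenius_def, hqp]⟩
  have c2 : ∀ x : K, x ^ q ^ 2 = φ (φ x) := fun x => by rw [hφ, hφ]; ring
  have c3 : ∀ x : K, x ^ q ^ 3 = φ (φ (φ x)) := fun x => by rw [hφ, hφ, hφ]; ring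
  have c4 : ∀ x : K, x ^ q ^ 4 = φ (φ (φ (φ x))) := fun x => by rw [hφ, hφ, hφ, hφ]; ring
  have c5 : ∀ x : K, φ (φ (φ (φ (φ x)))) = x := fun x => by
    have h := FiniteField.pow_card x
    rw [← Nat.card_eq_fintype_card, hKcard] at h
    conv_rhs => rw [← h]
    simp only [hφ]; ring
  have hF : ∀ x : K, φ x = x → x ∈ F := by
    intro x hx
    rw [hφ] at hx
    have : Fintype F := Fintype.ofFinite F
    have hFc : Fintype.card F = q := by rw [← Nat.card_eq_fintype_card, hFcard]
    classical
    let S : Finset K := Finset.univ.image (fun z : F => (z : K))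
    have hS : S.card = q := by
      rw [Finset.card_image_of_injective _ Subtype.val_injective, Finset.card_univ, hFc]
    by_contra hxF
    have hne0 : (Polynomial.X ^ q - Polynomial.X : Polynomial K) ≠ 0 :=
      FiniteField.X_pow_card_sub_X_ne_zero K hq1
    have hsub : (insert x S) ⊆ (Polynomial.X ^ q - Polynomial.X : Polynomial K).roots.toFinset := by
      intro z hz
      rw [Multiset.mem_toFinset, Polynomial.mem_roots hne0]
      simp only [Polynomial.IsRoot.def, Polynomial.eval_sub, Polynomial.eval_pow,
        Polynomial.eval_X, sub_eq_zero]
      rcases Finset.mem_insert.mp hz with rfl | hz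
      · exact hx
      · obtain ⟨w, -, rfl⟩ := Finset.mem_image.mp hz
        have h := FiniteField.pow_card w
        rw [hFc] at h
        exact_mod_cast congrArg (fun z : F => (z : K)) h
    have hx' : x ∉ S := by
      intro h
      obtain ⟨w, -, rfl⟩ := Finset.mem_image.mp h
      exact hxF w.2
    have h1 := Finset.card_le_card hsub
    rw [Finset.card_insert_of_notMem hx', hS] at h1
    have h2 := (Multiset.toFinset_card_le _).trans
      (Polynomial.card_roots' (Polynomial.X ^ q - Polynomial.X : Polynomial K))
    rw [FiniteField.X_pow_card_sub_X_natDegree_eq K hq1] at h2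
    omega
  have ha : α ≠ 0 := left_ne_zero_of_mul hαβ
  have hb : β ≠ 0 := right_ne_zero_of_mul hαβ
  have hE : β * φ β - φ α ≠ 0 := by
    intro h; apply hne; rw [pow_succ, ← hφ, ← hφ]; linear_combination -h
  have heq' : φ (φ (φ (φ α))) * β * φ β * φ (φ β) - φ (φ (φ (φ α))) * φ (φ α) * β
      - φ (φ (φ (φ α))) * φ α * φ (φ β)
      + α * φ α * φ (φ α) * φ (φ (φ α)) * φ (φ (φ (φ α)))
      - φ β * α * φ (φ (φ α)) + 1 = 0 := by
    simp only [pow_add, pow_one, c2, c3, c4, ← hφ] at heq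
    linear_combination heq
  obtain ⟨s, g, n, hφs, hs0, hs1, hM, hg, hn, hN, e0, e1, e2, e3, e4⟩ :=
    core_params φ α (φ α) (φ (φ α)) (φ (φ (φ α))) (φ (φ (φ (φ α))))
      β (φ β) (φ (φ β)) (φ (φ (φ β))) (φ (φ (φ (φ β))))
      rfl rfl rfl rfl (c5 α) rfl rfl rfl rfl (c5 β) ha hb hE heq'
  have hφg : φ g = g := by
    rw [hg]; simp only [map_div₀, map_pow, map_add, map_one, hφs]
  have hφn : φ n = n := by
    rw [hn]; simp only [map_div₀, map_neg, map_pow, map_add, map_one, hφs]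
  refine iff_of_true ⟨?_, ?_⟩ ?_
  · -- injectivity
    intro x y hxy
    simp only [Tmap, Prod.mk.injEq, c2, ← hφ] at hxy
    obtain ⟨h1, h2⟩ := hxy
    by_contra hne'
    have hz : x - y ≠ 0 := sub_ne_zero.mpr hne'
    obtain ⟨z, hzd⟩ : ∃ z, z = x - y := ⟨_, rfl⟩
    rw [← hzd] at hz
    have h1' : z = α * φ (φ z) := by
      rw [hzd, map_sub, map_sub]; linear_combination h1
    have h2' : φ z = β * φ (φ z) := by
      rw [hzd, map_sub, map_sub]; linear_combination h2
    have h3 := congrArg φ h1'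
    have h4 := congrArg φ h2'
    rw [map_mul] at h3 h4
    have hz3 : φ (φ (φ z)) ≠ 0 := by simpa using hz
    apply hE
    apply mul_right_cancel₀ hz3
    linear_combination h3 - h2' - β * h4
  · intro x y hx hy hdep
    have hdet : (x - α * φ (φ x)) * (φ y - β * φ (φ y))
        = (y - α * φ (φ y)) * (φ x - β * φ (φ x)) := by
      by_contra hcon
      apply hdep
      rw [LinearIndependent.pair_iff]
      intro c d hcd
      simp only [Tmap, c2, ← hφ, Prod.smul_mk, Prod.mk_add_mk, Prod.mk_eq_zero,
        smul_eq_mul] at hcd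
      obtain ⟨h1, h2⟩ := hcd
      have hD : (x - α * φ (φ x)) * (φ y - β * φ (φ y))
        - (y - α * φ (φ y)) * (φ x - β * φ (φ x)) ≠ 0 := sub_ne_zero.mpr hcon
      constructor
      · apply (mul_eq_zero.mp (?_ : c * _ = 0)).resolve_right hD
        linear_combination (φ y - β * φ (φ y)) * h1 - (y - α * φ (φ y)) * h2
      · apply (mul_eq_zero.mp (?_ : d * _ = 0)).resolve_right hD
        linear_combination -(φ x - β * φ (φ x)) * h1 + (x - α * φ (φ x)) * h2
    have h0 := core_scattered φ α (φ α) (φ (φ α)) (φ (φ (φ α))) (φ (φ (φ (φ α))))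
      β (φ β) (φ (φ β)) (φ (φ (φ β))) (φ (φ (φ (φ β)))) s g n
      rfl rfl rfl rfl (c5 α) rfl rfl rfl ha hb hφs hs0 hs1 hM hg hn hN e0 e1 e2 e3 e4
      x (φ x) (φ (φ x)) (φ (φ (φ x))) (φ (φ (φ (φ x))))
      y (φ y) (φ (φ y)) (φ (φ (φ y))) (φ (φ (φ (φ y))))
      rfl rfl rfl rfl (c5 x) rfl rfl rfl rfl (c5 y) hdet
    apply hF
    rw [map_div₀]
    have hx1 : φ x ≠ 0 := by simpa using hx
    field_simp
    linear_combination h0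
  · -- the norm condition always holds
    have hnorm : ∀ x : K, x ^ (1 + q + q ^ 2 + q ^ 3 + q ^ 4)
        = x * φ x * φ (φ x) * φ (φ (φ x)) * φ (φ (φ (φ x))) := by
      intro x; simp only [pow_add, pow_one, c2, c3, c4, ← hφ]
    have hD : β ^ q * α ^ (q ^ 3 + 1) - 1 = g ^ 2 * n - 1 := by
      rw [pow_succ, c3, ← hφ, ← hN]
      conv_lhs => rw [e3, e0]
      ring
    have hEg : β ^ (q + 1) - α ^ q = β * φ β * (1 - g) := by
      rw [pow_succ, ← hφ, ← hφ, e1]; ring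
    have hEn : (β * φ β * (1 - g)) ^ (1 + q + q ^ 2 + q ^ 3 + q ^ 4)
        = n ^ 2 * (1 - g) ^ 5 := by
      rw [hnorm]
      simp only [map_mul, map_sub, map_one, hφg, c5]
      rw [← hN]; ring
    have hDn : (g ^ 2 * n - 1) ^ (1 + q + q ^ 2 + q ^ 3 + q ^ 4) = (g ^ 2 * n - 1) ^ 5 := by
      rw [hnorm]
      simp only [map_mul, map_sub, map_one, map_pow, hφg, hφn]
      ring
    have hAn : (α ^ q ^ 3) ^ (1 + q + q ^ 2 + q ^ 3 + q ^ 4) = g ^ 5 * n ^ 2 := by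
      rw [hnorm, c3]
      simp only [c5]
      have : α * φ α * φ (φ α) * φ (φ (φ α)) * φ (φ (φ (φ α))) = g ^ 5 * n ^ 2 := by
        rw [e4, e3, e2, e1, ← hN]
        conv_lhs => rw [e0]
        ring
      linear_combination this
    rw [hD, hEg, hEn, hDn, hAn]
    intro h
    exact norm_ne s g n hs0 hs1 hM hg hn (by linear_combination h)
end
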